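/- arXiv:2505.19072 — 2 statements merged into one kernel-verified Lean document; each statement's English description precedes it below -/
import Mathlib

section
/- For any skew shape λ/μ and any n ≥ 1, the hybrid Grothendieck polynomial admits the Schur expansion G_{λ/μ}(x_1,...,x_n; t; w) = Σ_γ Σ_θ t^γ w^θ Σ_ν H^{ν,γ,θ}_{λ/μ,n} · s_ν(x_1,...,x_n), where γ and θ range over weak compositions, ν ranges over partitions with at most n parts, and H^{ν,γ,θ}_{λ/μ,n} is the number of T ∈ SVRPP^n(λ/μ) with ircont(T) = ν, ceq(T) = γ, and ex(T) = θ whose reading word read(T) is a reverse lattice word. In particular, G_{λ/μ}(x_1,...,x_n; t; w) is Schur positive. -/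
open scoped Classical

/-- A partition, given as its weakly decreasing sequence of parts (0-indexed),
with finitely many nonzero parts. -/
def IsPartitionFun (f : ℕ → ℕ) : Prop :=
  (∀ i, f (i + 1) ≤ f i) ∧ ∃ N, ∀ i, N ≤ i → f i = 0

/-- Box `(i, j)` (row `i`, column `j`, both 0-indexed) lies in the skew shape `lam/mu`. -/
def InShape (lam mu : ℕ → ℕ) (i j : ℕ) : Prop :=
  mu i ≤ j ∧ j < lam i

/-- `A ≤ B` for finite sets of naturals: every element of `A` is at most every
element of `B` (for nonempty sets this says `max A ≤ min B`). -/
def FinsetLE (A B : Finset ℕ) : Prop :=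
  ∀ a ∈ A, ∀ b ∈ B, a ≤ b

/-- A set-valued reverse plane partition of skew shape `lam/mu`: every box of the
shape is filled with a nonempty finite set of positive integers, the sets weakly
increase along rows and down columns, and boxes outside the shape are empty. -/
def IsSVRPP (lam mu : ℕ → ℕ) (T : ℕ → ℕ → Finset ℕ) : Prop :=
  (∀ i j, ¬ InShape lam mu i j → T i j = ∅) ∧
  (∀ i j, InShape lam mu i j → (T i j).Nonempty) ∧
  (∀ i j x, x ∈ T i j → 1 ≤ x) ∧
  (∀ i j, InShape lam mu i j → InShape lam mu i (j + 1) → FinsetLE (T i j) (T i (j + 1))) ∧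
  (∀ i j, InShape lam mu i j → InShape lam mu (i + 1) j → FinsetLE (T i j) (T (i + 1) j))

/-- An SVRPP all of whose entries are subsets of `{1, …, n}`. -/
def IsSVRPPn (lam mu : ℕ → ℕ) (n : ℕ) (T : ℕ → ℕ → Finset ℕ) : Prop :=
  IsSVRPP lam mu T ∧ ∀ i j, T i j ⊆ Finset.Icc 1 n

/-- `ircont T v` = number of columns of `T` containing a set that contains `v`. -/
noncomputable def ircont (T : ℕ → ℕ → Finset ℕ) (v : ℕ) : ℕ :=
  Set.ncard {j : ℕ | ∃ i, v ∈ T i j}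

/-- `ceq lam mu T i` = number of boxes `(i,j)` of the shape with `(i+1,j)` also in the
shape and `max T(i,j) = min T(i+1,j)`. -/
noncomputable def ceq (lam mu : ℕ → ℕ) (T : ℕ → ℕ → Finset ℕ) (i : ℕ) : ℕ :=
  Set.ncard {j : ℕ | InShape lam mu i j ∧ InShape lam mu (i + 1) j ∧
    ∃ m, m ∈ T i j ∧ (∀ x ∈ T i j, x ≤ m) ∧ m ∈ T (i + 1) j ∧ ∀ x ∈ T (i + 1) j, m ≤ x}

/-- `exv lam mu T i` = excess of row `i`: the sum over the boxes of row `i` of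
(cardinality of the filling minus one). -/
def exv (lam mu : ℕ → ℕ) (T : ℕ → ℕ → Finset ℕ) (i : ℕ) : ℕ :=
  ∑ j ∈ Finset.Ico (mu i) (lam i), ((T i j).card - 1)

/-- The hybrid Grothendieck polynomial `G_{lam/mu}(x_1,…,x_n; t; w)`, a polynomial in
`x_1, …, x_n` (variables `Sum.inl v`, `v : Fin n`, with `x_{v+1} = X (Sum.inl v)`) with
coefficients involving the variables `t_r = X (Sum.inr (Sum.inl r))` and
`w_r = X (Sum.inr (Sum.inr r))` (`r` ranging over the 0-indexed rows). -/
noncomputable def hybridG (lam mu : ℕ → ℕ) (n : ℕ) :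
    MvPolynomial (Fin n ⊕ ℕ ⊕ ℕ) ℤ :=
  ∑ᶠ T ∈ {T : ℕ → ℕ → Finset ℕ | IsSVRPPn lam mu n T},
    (∏ v : Fin n, MvPolynomial.X (Sum.inl v) ^ ircont T ((v : ℕ) + 1)) *
    (∏ᶠ r : ℕ, MvPolynomial.X (Sum.inr (Sum.inl r)) ^ ceq lam mu T r) *
    (∏ᶠ r : ℕ, MvPolynomial.X (Sum.inr (Sum.inr r)) ^ exv lam mu T r)

/-! ### Reading words -/

/-- The contribution of row `r` to the reading word of `T` (columns bounded by `C`; empty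
boxes are skipped). First the non-pivot entries are read from right to left, within each
box from largest to smallest; then the pivots (minima of boxes) are read from left to
right, omitting every pivot equal to the maximum entry of the (nonempty) box directly
above it. -/
noncomputable def rowRead (C : ℕ) (T : ℕ → ℕ → Finset ℕ) (r : ℕ) : List ℕ :=
  (((List.range C).reverse).flatMap
      (fun j => ((T r j).sort (· ≤ ·)).tail.reverse)) ++
  ((List.range C).filterMap
      (fun j =>
        if h : (T r j).Nonempty then
          (if r ≠ 0 ∧ (T r j).min' h ∈ T (r - 1) j ∧
              (∀ x ∈ T (r - 1) j, x ≤ (T r j).min' h)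
           then none else some ((T r j).min' h))
        else none))

/-- The reading word of `T`: rows are read from bottom (row `R - 1`) to top (row `0`). -/
noncomputable def readWord (R C : ℕ) (T : ℕ → ℕ → Finset ℕ) : List ℕ :=
  ((List.range R).reverse).flatMap (fun r => rowRead C T r)

/-- The height vector of `T`: the sequence of (0-indexed) row indices of the letters of
the reading word. -/
noncomputable def heightWord (R C : ℕ) (T : ℕ → ℕ → Finset ℕ) : List ℕ :=
  ((List.range R).reverse).flatMap (fun r => (rowRead C T r).map (fun _ => r))

/-- A word is a reverse lattice (Yamanouchi) word if every suffix contains at least as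
many `a`'s as `b`'s whenever `a < b` (for positive letters). -/
def IsReverseLatticeWord (w : List ℕ) : Prop :=
  ∀ k a b, 1 ≤ a → a < b → (w.drop k).count b ≤ (w.drop k).count a

/-! ### Schur polynomials via semistandard Young tableaux -/

/-- A semistandard Young tableau of shape `nu` (the part of row `r` is `nu (r+1)`,
matching the convention that `nu v` is the number of columns whose value is `v` for
weights) with entries in `{1,…,n}`: rows weakly increase, columns strictly increase. -/
def IsSSYT (nu : ℕ → ℕ) (n : ℕ) (U : ℕ → ℕ → ℕ) : Prop :=
  (∀ r j, ¬ j < nu (r + 1) → U r j = 0) ∧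
  (∀ r j, j < nu (r + 1) → 1 ≤ U r j ∧ U r j ≤ n) ∧
  (∀ r j, j + 1 < nu (r + 1) → U r j ≤ U r (j + 1)) ∧
  (∀ r j, j < nu (r + 2) → U r j < U (r + 1) j)

/-- `contentOf nu U v` = number of boxes of `U` (of shape `nu`) filled with `v`. -/
noncomputable def contentOf (nu : ℕ → ℕ) (U : ℕ → ℕ → ℕ) (v : ℕ) : ℕ :=
  Set.ncard {p : ℕ × ℕ | p.2 < nu (p.1 + 1) ∧ U p.1 p.2 = v}

/-- The Schur polynomial `s_nu(x_1,…,x_n)` (in the `x` variables `Sum.inl v`), as the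
generating function of semistandard Young tableaux of shape `nu` with entries in
`{1,…,n}`. -/
noncomputable def schurPoly (n : ℕ) (nu : ℕ → ℕ) : MvPolynomial (Fin n ⊕ ℕ ⊕ ℕ) ℤ :=
  ∑ᶠ U ∈ {U : ℕ → ℕ → ℕ | IsSSYT nu n U},
    ∏ v : Fin n, MvPolynomial.X (Sum.inl v) ^ contentOf nu U ((v : ℕ) + 1)

/-- `Hcoef lam mu n R C nu ga th` = number of `T ∈ SVRPP^n(lam/mu)` with
`ircont(T) = nu`, `ceq(T) = ga`, `ex(T) = th` whose reading word is a reverse lattice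
word. -/
noncomputable def Hcoef (lam mu : ℕ → ℕ) (n R C : ℕ) (nu ga th : ℕ → ℕ) : ℕ :=
  Set.ncard {T : ℕ → ℕ → Finset ℕ | IsSVRPPn lam mu n T ∧
    (∀ v, ircont T v = nu v) ∧
    (∀ r, ceq lam mu T r = ga r) ∧
    (∀ r, exv lam mu T r = th r) ∧
    IsReverseLatticeWord (readWord R C T)}

/-!
Only the way in which a tableau uses two consecutive letters `a`, `a + 1` matters for most of the
argument. Row by row this is recorded by a *cut*, the boundary between the two letters, inside a
*frame* of bounds that depend only on the rest of the tableau, and the reading word enters through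
the *height* of the cut, the surplus of `a + 1` over `a`. Lowering a cut at the last maximum of its
height is inverted by raising it at the first maximum, so the cuts of a frame fall into strings, and
reversing the part of each string whose cuts have a height of at least `z` gives an involution that
preserves `ceq` and `ex`.

For `z = 0` the reflection exchanges the multiplicities of `a` and `a + 1`, so the generating
function is symmetric in the `x`-variables, and multiplying it by the Vandermonde determinant turns
every monomial `x^κ` into the alternant `a_{κ+δ}`. For `z = 1` the reflection, applied at the first
row with a positive surplus, reverses the sign of `a_{κ+δ}`, and it cancels exactly the tableaux
whose reading word is not a reverse lattice word. The same identity for an ordinary shape `ν` and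
trivial `ceq` and `ex`, where a single tableau survives, reads `a_δ s_ν = a_{ν+δ}`; it remains to
divide by `a_δ`.
-/

namespace HybridGrothendieck

/-! ### Strings -/

section Strings

open Relation

variable {α : Type*} {step : α → α → Prop}

theorem reflTransGen_or_of_eqvGen (huniq : Relator.BiUnique step) {x y : α}
    (h : EqvGen step x y) : ReflTransGen step x y ∨ ReflTransGen step y x := by
  induction h with
  | rel _ _ h => exact .inl (.single h)
  | refl _ => exact .inl .refl
  | symm _ _ _ ih => exact ih.symm
  | trans _ _ _ _ _ ihxy ihyz =>
    rcases ihxy with hxy | hyx <;> rcases ihyz with hyz | hzy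
    · exact .inl (hxy.trans hyz)
    · simpa only [reflTransGen_swap] using
        ReflTransGen.total_of_right_unique (r := Function.swap step)
          (fun _ _ _ h h' ↦ huniq.1 h h') hxy.swap hzy.swap |>.symm
    · exact ReflTransGen.total_of_right_unique huniq.2 hyx hyz
    · exact .inr (hzy.trans hyx)

variable {φ ε : α → ℕ}

theorem add_eq_add_of_eqvGen (hstep : ∀ x y, step x y → φ x = φ y + 1 ∧ ε y = ε x + 1) {x y : α}
    (h : EqvGen step x y) : φ x + ε x = φ y + ε y := by
  induction h with
  | rel x y h => have := hstep x y h; omega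
  | refl _ => rfl
  | symm _ _ _ ih => exact ih.symm
  | trans _ _ _ _ _ ihxy ihyz => exact ihxy.trans ihyz

theorem eq_of_reflTransGen_of_le (hstep : ∀ x y, step x y → φ x = φ y + 1 ∧ ε y = ε x + 1)
    {x y : α} (h : ReflTransGen step x y) (hle : φ x ≤ φ y) : x = y := by
  have anti {x y : α} (h : ReflTransGen step x y) : φ y ≤ φ x := by
    induction h with
    | refl => rfl
    | tail _ h ih => have := hstep _ _ h; omega
  rcases h.cases_head with rfl | ⟨z, hxz, hzy⟩
  · rfl
  · have := hstep _ _ hxz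
    have := anti hzy
    omega

theorem eq_of_eqvGen_of_eq (huniq : Relator.BiUnique step)
    (hstep : ∀ x y, step x y → φ x = φ y + 1 ∧ ε y = ε x + 1) {x y : α}
    (h : EqvGen step x y) (heq : φ x = φ y) : x = y := by
  rcases reflTransGen_or_of_eqvGen huniq h with h | h
  · exact eq_of_reflTransGen_of_le hstep h heq.le
  · exact (eq_of_reflTransGen_of_le hstep h heq.ge).symm

theorem exists_eqvGen_of_le_add (hdown : ∀ x, φ x ≠ 0 → ∃ y, step x y)
    (hup : ∀ y, ε y ≠ 0 → ∃ x, step x y)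
    (hstep : ∀ x y, step x y → φ x = φ y + 1 ∧ ε y = ε x + 1) (x : α) {k : ℕ}
    (hk : k ≤ φ x + ε x) : ∃ y, EqvGen step x y ∧ φ y = k := by
  rcases le_total k (φ x) with h | h
  · induction h using Nat.decreasingInduction with
    | self => exact ⟨x, .refl x, rfl⟩
    | of_succ k _ ih =>
      obtain ⟨y, hxy, hy⟩ := ih (by omega)
      obtain ⟨z, hyz⟩ := hdown y (by omega)
      exact ⟨z, hxy.trans _ _ _ (.rel _ _ hyz), by have := hstep _ _ hyz; omega⟩
  · induction k, h using Nat.le_induction with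
    | base => exact ⟨x, .refl x, rfl⟩
    | succ k _ ih =>
      obtain ⟨y, hxy, hy⟩ := ih (by omega)
      have := add_eq_add_of_eqvGen hstep hxy
      obtain ⟨z, hzy⟩ := hup y (by omega)
      exact ⟨z, hxy.trans _ _ _ (.symm _ _ (.rel _ _ hzy)), by have := hstep _ _ hzy; omega⟩

/-- If `step` decomposes `α` into finite strings, and `φ`, `ε` measure the distances to the two
ends of a string, then every string can be reversed. -/
theorem exists_involutive_of_strings (huniq : Relator.BiUnique step)
    (hdown : ∀ x, φ x ≠ 0 → ∃ y, step x y) (hup : ∀ y, ε y ≠ 0 → ∃ x, step x y)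
    (hstep : ∀ x y, step x y → φ x = φ y + 1 ∧ ε y = ε x + 1) :
    ∃ σ : α → α, Function.Involutive σ ∧ ∀ x, EqvGen step x (σ x) ∧ φ (σ x) = ε x := by
  choose σ hσ hφ using fun x ↦
    exists_eqvGen_of_le_add hdown hup hstep x (k := ε x) (Nat.le_add_left _ _)
  refine ⟨σ, fun x ↦ (eq_of_eqvGen_of_eq huniq hstep ((hσ x).trans _ _ _ (hσ _)) ?_).symm,
    fun x ↦ ⟨hσ x, hφ x⟩⟩
  have := add_eq_add_of_eqvGen hstep (hσ x)
  have := hφ x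
  have := hφ (σ x)
  omega

end Strings

/-! ### Extremal positions of integer sequences -/

/-- `p` is the first position at which `f` attains its maximum. -/
def IsFirstMax (f : ℕ → ℤ) (p : ℕ) : Prop :=
  (∀ t, f t ≤ f p) ∧ ∀ t < p, f t < f p

/-- `p` is the last position at which `f` attains its maximum. -/
def IsLastMax (f : ℕ → ℤ) (p : ℕ) : Prop :=
  (∀ t, f t ≤ f p) ∧ ∀ t, p < t → f t < f p

/-- `p` is the first position at which `f` is positive. -/
def IsFirstPos (f : ℕ → ℤ) (p : ℕ) : Prop :=
  0 < f p ∧ ∀ t < p, f t ≤ 0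

theorem IsFirstMax.unique {f : ℕ → ℤ} {p q : ℕ} (hp : IsFirstMax f p) (hq : IsFirstMax f q) :
    p = q := by
  rcases lt_trichotomy p q with h | h | h
  · exact absurd (hq.2 p h) (hp.1 q).not_gt
  · exact h
  · exact absurd (hp.2 q h) (hq.1 p).not_gt

theorem IsLastMax.unique {f : ℕ → ℤ} {p q : ℕ} (hp : IsLastMax f p) (hq : IsLastMax f q) :
    p = q := by
  rcases lt_trichotomy p q with h | h | h
  · exact absurd (hp.2 q h) (hq.1 p).not_gt
  · exact h
  · exact absurd (hq.2 p h) (hp.1 q).not_gt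

section EventuallyConstant

variable {f : ℕ → ℤ} {R : ℕ}

theorem exists_forall_le_of_eventually_const (hf : ∀ r, R ≤ r → f r = f R) :
    ∃ p, ∀ t, f t ≤ f p := by
  obtain ⟨p, -, hp⟩ := (Finset.range (R + 1)).exists_max_image f ⟨0, by simp⟩
  refine ⟨p, fun t ↦ ?_⟩
  rcases le_total R t with h | h
  · exact hf t h ▸ hp R (by simp)
  · exact hp t (by simpa using Nat.lt_succ_of_le h)

theorem exists_isFirstMax (hf : ∀ r, R ≤ r → f r = f R) : ∃ p, IsFirstMax f p := by
  have h := exists_forall_le_of_eventually_const hf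
  have hspec := Nat.find_spec h
  refine ⟨Nat.find h, hspec, fun t ht ↦ lt_of_le_of_ne (hspec t) fun heq ↦ ?_⟩
  exact Nat.find_min h ht fun u ↦ heq ▸ hspec u

theorem exists_isLastMax (hf : ∀ r, R ≤ r → f r = f R) (hlt : ∃ p, f R < f p) :
    ∃ p, IsLastMax f p := by
  obtain ⟨q, hq⟩ := exists_forall_le_of_eventually_const hf
  have hR {t : ℕ} (ht : R ≤ t) : f t < f q := by
    obtain ⟨p, hp⟩ := hlt
    rw [hf t ht]
    exact hp.trans_le (hq p)
  have hqR : q ≤ R := le_of_not_ge fun h ↦ (hR h).false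
  have hspec : f (Nat.findGreatest (fun p ↦ f p = f q) R) = f q :=
    Nat.findGreatest_spec (P := fun p ↦ f p = f q) hqR rfl
  refine ⟨_, fun t ↦ (hq t).trans_eq hspec.symm, fun t ht ↦ ?_⟩
  rw [hspec]
  rcases le_or_gt R t with h | h
  · exact hR h
  · exact lt_of_le_of_ne (hq t) (Nat.findGreatest_is_greatest ht h.le)

end EventuallyConstant

/-! ### Frames and cuts -/

/-- What a tableau with rows `0, …, R - 1` looks like to two consecutive letters `a`, `a + 1`,
apart from the boundary between them: in row `r` the boxes meeting `{a, a + 1}` are those in the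
columns `[left r, right r)`, and `overlap r` of them contain both letters. -/
@[ext]
structure Frame (R : ℕ) where
  left : ℕ → ℤ
  right : ℕ → ℤ
  overlap : ℕ → ℤ
  left_succ_le : ∀ r, left (r + 1) ≤ left r
  right_succ_le : ∀ r, right (r + 1) ≤ right r
  overlap_nonneg : ∀ r, 0 ≤ overlap r
  left_eq_zero : ∀ r, R ≤ r → left r = 0
  right_eq_zero : ∀ r, R ≤ r → right r = 0

/-- Adds `z` to the terms of `c` with index in `[p, k]`. -/
def shiftIcc (c : ℕ → ℤ) (p k : ℕ) (z : ℤ) (t : ℕ) : ℤ :=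
  if p ≤ t ∧ t ≤ k then c t + z else c t

theorem shiftIcc_shiftIcc (c : ℕ → ℤ) (p k : ℕ) {z w : ℤ} (h : z + w = 0) :
    shiftIcc (shiftIcc c p k z) p k w = c := by
  funext t
  simp only [shiftIcc]
  split_ifs <;> omega

namespace Frame

variable {R : ℕ} (F : Frame R) (c : ℕ → ℤ)

/-- `c` is a boundary between the two letters of the frame: in row `r` the letter `a` occupies the
columns `[left r, c r)` and `a + 1` occupies `[c r - overlap r, right r)`. -/
structure IsCut : Prop where
  left_le : ∀ r, F.left r ≤ c r - F.overlap r
  le_right : ∀ r, c r ≤ F.right r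
  succ_le : ∀ r, c (r + 1) ≤ c r - F.overlap r

/-- The number of columns that contain `a` in row `r` but not in row `r - 1`. -/
def newSmall : ℕ → ℤ
  | 0 => c 0 - F.left 0
  | r + 1 => min (c (r + 1)) (F.left r) - F.left (r + 1)

/-- The number of columns that contain `a + 1` in row `r` but not in row `r - 1`. -/
def newLarge : ℕ → ℤ
  | 0 => F.right 0 - (c 0 - F.overlap 0)
  | r + 1 => min (F.right (r + 1)) (c r - F.overlap r) - (c (r + 1) - F.overlap (r + 1))

/-- The surplus of `a + 1` over `a` when the reading word is read backwards up to the first letter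
`a` of row `r`. -/
def height (r : ℕ) : ℤ :=
  ∑ t ∈ Finset.range r, (F.newLarge c t - F.newSmall c t) + F.newLarge c r - F.overlap r

theorem height_succ (r : ℕ) : F.height c (r + 1) =
    F.height c r - F.newSmall c r + F.overlap r + F.newLarge c (r + 1) - F.overlap (r + 1) := by
  simp only [height, Finset.sum_range_succ]
  ring

/-- An upper bound for the height with the same upper bounds as the height itself, but obeying the
simpler recursion `heightEnvelope_succ`. -/
def heightEnvelope : ℕ → ℤ
  | 0 => F.height c 0
  | r + 1 => F.height c (r + 1) + max 0 (c (r + 1) - F.left r)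

theorem heightEnvelope_succ (r : ℕ) : F.heightEnvelope c (r + 1) = F.heightEnvelope c r +
    max 0 (F.left r - c (r + 1)) - max 0 (c r - F.overlap r - F.right (r + 1)) := by
  cases r <;> simp only [heightEnvelope, height_succ, newSmall, newLarge] <;> omega

theorem height_le_heightEnvelope (r : ℕ) : F.height c r ≤ F.heightEnvelope c r := by
  cases r <;> simp only [heightEnvelope] <;> omega

variable {F c}

theorem heightEnvelope_le {M : ℤ} {r : ℕ} (h : ∀ t ≤ r, F.height c t ≤ M) :
    F.heightEnvelope c r ≤ M := by
  induction r with
  | zero => exact h 0 le_rfl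
  | succ r ih =>
    have hr := ih fun t ht ↦ h t (by omega)
    have hrec := F.heightEnvelope_succ c r
    have hle := h (r + 1) le_rfl
    have hdef : F.heightEnvelope c (r + 1) =
      F.height c (r + 1) + max 0 (c (r + 1) - F.left r) := rfl
    omega

theorem heightEnvelope_eq_of_forall_le {p k : ℕ} (hmax : ∀ t, F.height c t ≤ F.height c p)
    (hpk : p ≤ k) (hright : ∀ t, p ≤ t → t < k → c t - F.overlap t ≤ F.right (t + 1)) :
    F.heightEnvelope c k = F.height c p := by
  induction k, hpk using Nat.le_induction with
  | base => exact le_antisymm (heightEnvelope_le fun t _ ↦ hmax t) (F.height_le_heightEnvelope c p)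
  | succ k hk ih =>
    have hrec := F.heightEnvelope_succ c k
    have hle := heightEnvelope_le (r := k + 1) fun t _ ↦ hmax t
    have := ih fun t h h' ↦ hright t h (by omega)
    have := hright k hk (by omega)
    omega

theorem IsCut.height_zero_nonneg (hc : F.IsCut c) : 0 ≤ F.height c 0 := by
  have := hc.le_right 0
  simp only [height, newLarge, Finset.range_zero, Finset.sum_empty]
  omega

theorem IsCut.eq_zero (hc : F.IsCut c) {r : ℕ} (hr : R ≤ r) : c r = 0 ∧ F.overlap r = 0 := by
  have := F.left_eq_zero r hr
  have := F.right_eq_zero r hr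
  have := F.overlap_nonneg r
  have := hc.left_le r
  have := hc.le_right r
  omega

theorem IsCut.height_eq_of_le (hc : F.IsCut c) {r : ℕ} (hr : R ≤ r) :
    F.height c r = F.height c R := by
  induction r, hr using Nat.le_induction with
  | base => rfl
  | succ r hr ih =>
    have hsmall : F.newSmall c r = 0 := by
      have := hc.eq_zero hr
      have := F.left_eq_zero r hr
      cases r with
      | zero => simp only [newSmall]; omega
      | succ r => have := F.left_succ_le r; simp only [newSmall]; omega
    have := hc.eq_zero hr
    have := hc.eq_zero (r := r + 1) (by omega)
    have := F.right_eq_zero (r + 1) (by omega)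
    rw [height_succ, hsmall, newLarge]
    omega

/-! ### Lowering and raising a cut -/

variable (F c)

/-- The cut `c` may be moved one column to the left in the rows `p, …, k`, and the rows adjacent to
this range do not interfere. -/
structure CanLower (p k : ℕ) : Prop where
  le : p ≤ k
  top : ∀ q, p = q + 1 → c p ≤ F.left q
  mid : ∀ t, p ≤ t → t < k → F.left t < c (t + 1) ∧ c t - F.overlap t ≤ F.right (t + 1)
  bot : F.right (k + 1) < c k - F.overlap k
  pos : F.left k < c k - F.overlap k

/-- The cut `c` may be moved one column to the right in the rows `p, …, k`, and the rows adjacent to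
this range do not interfere. -/
structure CanRaise (p k : ℕ) : Prop where
  le : p ≤ k
  top : ∀ q, p = q + 1 → c p < F.left q
  mid : ∀ t, p ≤ t → t < k → F.left t ≤ c (t + 1) ∧ c t - F.overlap t < F.right (t + 1)
  bot : F.right (k + 1) ≤ c k - F.overlap k
  pos : c p < F.right p

variable {F c} {p k l : ℕ}

theorem CanLower.unique (h : F.CanLower c p k) (h' : F.CanLower c p l) : k = l := by
  have := h.bot
  have := h'.bot
  rcases lt_trichotomy k l with hlt | heq | hlt
  · have := h'.mid k h.le hlt
    omega
  · exact heq
  · have := h.mid l h'.le hlt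
    omega

theorem CanRaise.unique (h : F.CanRaise c p k) (h' : F.CanRaise c p l) : k = l := by
  have := h.bot
  have := h'.bot
  rcases lt_trichotomy k l with hlt | heq | hlt
  · have := h'.mid k h.le hlt
    omega
  · exact heq
  · have := h.mid l h'.le hlt
    omega

theorem CanLower.canRaise_shiftIcc (h : F.CanLower c p k) (hc : F.IsCut c) :
    F.CanRaise (shiftIcc c p k (-1)) p k := by
  obtain ⟨hle, htop, hmid, hbot, -⟩ := h
  have := hc.le_right p
  constructor <;> grind [shiftIcc]

theorem CanRaise.canLower_shiftIcc (h : F.CanRaise c p k) (hc : F.IsCut c) :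
    F.CanLower (shiftIcc c p k 1) p k := by
  obtain ⟨hle, htop, hmid, hbot, -⟩ := h
  have := hc.left_le k
  constructor <;> grind [shiftIcc]

theorem CanLower.isCut_shiftIcc (h : F.CanLower c p k) (hc : F.IsCut c) :
    F.IsCut (shiftIcc c p k (-1)) := by
  obtain ⟨hle, _, hmid, hbot, hpos⟩ := h
  obtain ⟨hl, hr, hs⟩ := hc
  have := F.overlap_nonneg
  constructor <;> intro r <;> simp only [shiftIcc] <;> grind

theorem CanRaise.isCut_shiftIcc (h : F.CanRaise c p k) (hc : F.IsCut c) :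
    F.IsCut (shiftIcc c p k 1) := by
  obtain ⟨hle, htop, hmid, hbot, hpos⟩ := h
  obtain ⟨hl, hr, hs⟩ := hc
  have := F.overlap_nonneg
  have hlt : ∀ r, p ≤ r → r ≤ k → c r < F.right r := by
    intro r hpr hrk
    rcases hpr.eq_or_lt with rfl | hpr
    · exact hpos
    · obtain ⟨q, rfl⟩ := Nat.exists_eq_succ_of_ne_zero (by omega : r ≠ 0)
      exact (hs q).trans_lt (hmid q (by omega) (by omega)).2
  constructor <;> intro r <;> simp only [shiftIcc] <;> grind

theorem CanLower.newSmall_shiftIcc (h : F.CanLower c p k) (t : ℕ) :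
    F.newSmall (shiftIcc c p k (-1)) t = F.newSmall c t - if t = p then 1 else 0 := by
  obtain ⟨hle, htop, hmid, -, -⟩ := h
  cases t <;> simp only [newSmall, shiftIcc] <;> grind

theorem CanLower.newLarge_shiftIcc (h : F.CanLower c p k) (hc : F.IsCut c) (t : ℕ) :
    F.newLarge (shiftIcc c p k (-1)) t = F.newLarge c t + if t = p then 1 else 0 := by
  obtain ⟨hle, _, hmid, hbot, -⟩ := h
  obtain ⟨_, _, _⟩ := hc
  cases t <;> simp only [newLarge, shiftIcc] <;> grind

theorem CanLower.height_shiftIcc (h : F.CanLower c p k) (hc : F.IsCut c) (t : ℕ) :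
    F.height (shiftIcc c p k (-1)) t =
      F.height c t + if t < p then 0 else if t = p then 1 else 2 := by
  induction t with
  | zero =>
    simp only [height, h.newLarge_shiftIcc hc, Finset.range_zero, Finset.sum_empty]
    split_ifs <;> omega
  | succ t ih =>
    simp only [height_succ, h.newLarge_shiftIcc hc, h.newSmall_shiftIcc, ih]
    split_ifs <;> omega

/-! ### Reflecting the cuts of a frame -/

variable {c' : ℕ → ℤ}

theorem CanLower.isLastMax_iff (h : F.CanLower c p k) (hc : F.IsCut c) :
    IsLastMax (F.height c) p ↔ IsFirstMax (F.height (shiftIcc c p k (-1))) p := by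
  simp only [IsLastMax, IsFirstMax, h.height_shiftIcc hc]
  constructor
  · intro ⟨hle, hlt⟩
    exact ⟨fun t ↦ by grind, fun t ht ↦ by grind⟩
  · intro ⟨hle, hlt⟩
    exact ⟨fun t ↦ by grind, fun t ht ↦ by grind⟩

theorem IsCut.exists_canLower (hc : F.IsCut c) (hp : IsLastMax (F.height c) p) :
    ∃ k, F.CanLower c p k := by
  have henv {t : ℕ} (hpt : p ≤ t)
      (hright : ∀ u, p ≤ u → u < t → c u - F.overlap u ≤ F.right (u + 1)) :
      F.heightEnvelope c t = F.height c p :=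
    heightEnvelope_eq_of_forall_le hp.1 hpt hright
  have hleft {t : ℕ} (hpt : p ≤ t)
      (hright : ∀ u, p ≤ u → u < t + 1 → c u - F.overlap u ≤ F.right (u + 1)) :
      F.left t < c (t + 1) := by
    have := henv (t := t + 1) (by omega) hright
    have := hp.2 (t + 1) (by omega)
    simp only [heightEnvelope] at *
    omega
  have hex : ∃ k, p ≤ k ∧ F.right (k + 1) < c k - F.overlap k := by
    by_contra! hcon
    have := hleft (t := p + R) (by omega) fun u hu _ ↦ hcon u hu
    have := F.left_eq_zero (p + R) (by omega)
    have := hc.eq_zero (r := p + R + 1) (by omega)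
    omega
  obtain ⟨hpk, hbot⟩ := Nat.find_spec hex
  have hmin {u : ℕ} (hpu : p ≤ u) (hu : u < Nat.find hex) : c u - F.overlap u ≤ F.right (u + 1) :=
    not_lt.1 fun hlt ↦ Nat.find_min hex hu ⟨hpu, hlt⟩
  generalize Nat.find hex = k at *
  refine ⟨k, hpk, ?_, fun t hpt htk ↦ ⟨hleft hpt fun u hpu hu ↦ hmin hpu (by omega), hmin hpt htk⟩,
    hbot, ?_⟩
  · rintro q rfl
    have := heightEnvelope_le (r := q + 1) fun t _ ↦ hp.1 t
    simp only [heightEnvelope] at this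
    omega
  · have := henv hpk fun u hpu hu ↦ hmin hpu hu
    have := F.heightEnvelope_succ c k
    have := hp.2 (k + 1) (by omega)
    have := hc.left_le k
    have := hc.le_right (k + 1)
    simp only [heightEnvelope] at *
    omega

theorem IsCut.exists_canRaise (hc : F.IsCut c) (hp : IsFirstMax (F.height c) p)
    (hpos : 0 < F.height c p) : ∃ k, F.CanRaise c p k := by
  have hprev {q : ℕ} (hq : p = q + 1) : F.heightEnvelope c q ≤ F.height c p - 1 :=
    heightEnvelope_le fun t _ ↦ by have := hp.2 t (by omega); omega
  have hex : ∃ k, p ≤ k ∧ F.right (k + 1) ≤ c k - F.overlap k := by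
    refine ⟨p + R, by omega, ?_⟩
    have := hc.eq_zero (r := p + R) (by omega)
    have := F.right_eq_zero (p + R + 1) (by omega)
    omega
  obtain ⟨hpk, hbot⟩ := Nat.find_spec hex
  have hmin {u : ℕ} (hpu : p ≤ u) (hu : u < Nat.find hex) : c u - F.overlap u < F.right (u + 1) :=
    not_le.1 fun hle ↦ Nat.find_min hex hu ⟨hpu, hle⟩
  have henv {t : ℕ} (hpt : p ≤ t) (htk : t ≤ Nat.find hex) :
      F.heightEnvelope c t = F.height c p :=
    heightEnvelope_eq_of_forall_le hp.1 hpt fun u hpu hu ↦ (hmin hpu (by omega)).le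
  generalize Nat.find hex = k at *
  refine ⟨k, hpk, ?_, fun t hpt htk ↦ ⟨?_, hmin hpt htk⟩, hbot, ?_⟩
  · rintro q rfl
    have := hprev rfl
    have := F.height_le_heightEnvelope c (q + 1)
    have := F.heightEnvelope_succ c q
    omega
  · have := henv hpt htk.le
    have := henv (t := t + 1) (by omega) (by omega)
    have := F.heightEnvelope_succ c t
    have := hmin hpt htk
    omega
  · cases p with
    | zero =>
      simp only [height, newLarge, Finset.range_zero, Finset.sum_empty] at hpos
      omega
    | succ q =>
      have := hprev rfl
      have := F.height_le_heightEnvelope c (q + 1)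
      have := F.heightEnvelope_succ c q
      have := hc.left_le q
      have := hc.le_right (q + 1)
      have := hc.succ_le q
      omega

variable (F c) in
/-- The largest height of a cut. -/
def maxHeight : ℤ :=
  (Finset.range (R + 1)).sup' ⟨0, by simp⟩ (F.height c)

theorem IsCut.maxHeight_eq (hc : F.IsCut c) (hp : ∀ t, F.height c t ≤ F.height c p) :
    F.maxHeight c = F.height c p := by
  refine le_antisymm (Finset.sup'_le _ _ fun t _ ↦ hp t) ?_
  rcases le_total p R with h | h
  · exact Finset.le_sup' (F.height c) (by simpa using Nat.lt_succ_of_le h)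
  · rw [hc.height_eq_of_le h]
    exact Finset.le_sup' (F.height c) (by simp)

theorem IsCut.height_le_maxHeight (hc : F.IsCut c) (t : ℕ) : F.height c t ≤ F.maxHeight c := by
  obtain ⟨p, hp⟩ := exists_forall_le_of_eventually_const fun r ↦ hc.height_eq_of_le (r := r)
  exact hc.maxHeight_eq hp ▸ hp t

variable (F c c') in
/-- `c'` is obtained from `c` by lowering it at the last maximum of its height. -/
def LowerStep : Prop :=
  ∃ p k, F.CanLower c p k ∧ IsLastMax (F.height c) p ∧ c' = shiftIcc c p k (-1)

theorem LowerStep.isCut (h : F.LowerStep c c') (hc : F.IsCut c) : F.IsCut c' := by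
  obtain ⟨p, k, hlow, -, rfl⟩ := h
  exact hlow.isCut_shiftIcc hc

theorem LowerStep.right_unique {c₁ c₂ : ℕ → ℤ} (h₁ : F.LowerStep c c₁) (h₂ : F.LowerStep c c₂) :
    c₁ = c₂ := by
  obtain ⟨p, k, hlow, hp, rfl⟩ := h₁
  obtain ⟨q, l, hlow', hq, rfl⟩ := h₂
  obtain rfl := hp.unique hq
  rw [hlow.unique hlow']

theorem LowerStep.left_unique {c₁ c₂ : ℕ → ℤ} (hc₁ : F.IsCut c₁) (hc₂ : F.IsCut c₂)
    (h₁ : F.LowerStep c₁ c) (h₂ : F.LowerStep c₂ c) : c₁ = c₂ := by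
  obtain ⟨p, k, hlow, hp, rfl⟩ := h₁
  obtain ⟨q, l, hlow', hq, heq⟩ := h₂
  have hp' := (hlow.isLastMax_iff hc₁).1 hp
  have hraise := hlow.canRaise_shiftIcc hc₁
  rw [heq] at hp' hraise
  obtain rfl := hp'.unique ((hlow'.isLastMax_iff hc₂).1 hq)
  obtain rfl := hraise.unique (hlow'.canRaise_shiftIcc hc₂)
  rw [← shiftIcc_shiftIcc c₁ p k (z := -1) (w := 1) rfl, heq, shiftIcc_shiftIcc c₂ p k rfl]

theorem LowerStep.maxHeight_eq (h : F.LowerStep c c') (hc : F.IsCut c) :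
    F.maxHeight c' = F.maxHeight c + 1 := by
  have hc' := h.isCut hc
  obtain ⟨p, k, hlow, hp, rfl⟩ := h
  rw [hc'.maxHeight_eq ((hlow.isLastMax_iff hc).1 hp).1, hc.maxHeight_eq hp.1,
    hlow.height_shiftIcc hc]
  simp

theorem LowerStep.height_last (h : F.LowerStep c c') (hc : F.IsCut c) :
    F.height c' R = F.height c R + 2 := by
  obtain ⟨p, k, hlow, hp, rfl⟩ := h
  have hpR : p < R := by
    by_contra! hRp
    have := hp.2 (p + 1) (by omega)
    rw [hc.height_eq_of_le hRp, hc.height_eq_of_le (by omega)] at this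
    exact this.false
  rw [hlow.height_shiftIcc hc, if_neg (by omega), if_neg (by omega)]

theorem LowerStep.newSmall_add_newLarge (h : F.LowerStep c c') (hc : F.IsCut c) (t : ℕ) :
    F.newSmall c' t + F.newLarge c' t = F.newSmall c t + F.newLarge c t := by
  obtain ⟨p, k, hlow, -, rfl⟩ := h
  rw [hlow.newSmall_shiftIcc, hlow.newLarge_shiftIcc hc]
  omega

theorem IsCut.exists_lowerStep (hc : F.IsCut c) (hlt : F.height c R < F.maxHeight c) :
    ∃ c', F.LowerStep c c' := by
  have hconst (r : ℕ) := hc.height_eq_of_le (r := r)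
  obtain ⟨q, hq⟩ := exists_forall_le_of_eventually_const hconst
  obtain ⟨p, hp⟩ := exists_isLastMax hconst ⟨q, hc.maxHeight_eq hq ▸ hlt⟩
  obtain ⟨k, hk⟩ := hc.exists_canLower hp
  exact ⟨_, p, k, hk, hp, rfl⟩

theorem IsCut.exists_lowerStep_to (hc : F.IsCut c) (hpos : 0 < F.maxHeight c) :
    ∃ c', F.IsCut c' ∧ F.LowerStep c' c := by
  obtain ⟨p, hp⟩ := exists_isFirstMax fun r ↦ hc.height_eq_of_le (r := r)
  obtain ⟨k, hk⟩ := hc.exists_canRaise hp (hc.maxHeight_eq hp.1 ▸ hpos)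
  have hlow := hk.canLower_shiftIcc hc
  have hcut := hk.isCut_shiftIcc hc
  have heq : shiftIcc (shiftIcc c p k 1) p k (-1) = c := shiftIcc_shiftIcc c p k rfl
  exact ⟨_, hcut, p, k, hlow, (hlow.isLastMax_iff hcut).2 (heq.symm ▸ hp), heq.symm⟩

variable (F c c') in
/-- The heights of the two cuts become positive in the same row, and the cuts agree above it. -/
def SameLead : Prop :=
  ∀ r, (IsFirstPos (F.height c) r ↔ IsFirstPos (F.height c') r) ∧
    (IsFirstPos (F.height c) r → ∀ t < r, c' t = c t)

theorem sameLead_equivalence : Equivalence F.SameLead where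
  refl _ := fun _ ↦ ⟨.rfl, fun _ _ _ ↦ rfl⟩
  symm h := fun r ↦ ⟨(h r).1.symm, fun hr t ht ↦ ((h r).2 ((h r).1.2 hr) t ht).symm⟩
  trans h h' := fun r ↦ ⟨(h r).1.trans (h' r).1,
    fun hr t ht ↦ ((h' r).2 ((h r).1.1 hr) t ht).trans ((h r).2 hr t ht)⟩

theorem LowerStep.sameLead (h : F.LowerStep c c') (hc : F.IsCut c) (hpos : 0 < F.maxHeight c) :
    F.SameLead c c' := by
  obtain ⟨p, k, hlow, hp, rfl⟩ := h
  rw [hc.maxHeight_eq hp.1] at hpos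
  intro r
  simp only [IsFirstPos, hlow.height_shiftIcc hc]
  refine ⟨⟨fun ⟨_, hlt⟩ ↦ ⟨by grind, fun t ht ↦ ?_⟩, fun ⟨_, hlt⟩ ↦ ⟨?_, fun t ht ↦ by grind⟩⟩,
    fun ⟨_, hlt⟩ t ht ↦ ?_⟩
  · have : ¬ p < r := fun hpr ↦ (hlt p hpr).not_gt hpos
    grind
  · have : ¬ p < r := fun hpr ↦ by have := hlt p hpr; grind
    grind
  · have : ¬ p < r := fun hpr ↦ (hlt p hpr).not_gt hpos
    exact if_neg (by omega)

variable (F) in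
/-- The cuts whose largest height is at least `z`. -/
abbrev HighCut (z : ℤ) : Type :=
  {c : ℕ → ℤ // F.IsCut c ∧ z ≤ F.maxHeight c}

theorem exists_involutive_highCut {z : ℤ} (hz : 0 ≤ z) :
    ∃ σ : F.HighCut z → F.HighCut z, Function.Involutive σ ∧
      ∀ c, Relation.EqvGen (fun c c' ↦ F.LowerStep c.1 c'.1) c (σ c) ∧
        F.maxHeight (σ c).1 - F.height (σ c).1 R = F.maxHeight c.1 - z := by
  have hlast (c : F.HighCut z) : F.height c.1 R ≤ F.maxHeight c.1 := c.2.1.height_le_maxHeight R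
  obtain ⟨σ, hinv, hσ⟩ := exists_involutive_of_strings
    (step := fun c c' : F.HighCut z ↦ F.LowerStep c.1 c'.1)
    (φ := fun c ↦ (F.maxHeight c.1 - F.height c.1 R).toNat)
    (ε := fun c ↦ (F.maxHeight c.1 - z).toNat)
    ⟨fun c d _ h h' ↦ Subtype.ext (h.left_unique c.2.1 d.2.1 h'),
      fun _ _ _ h h' ↦ Subtype.ext (h.right_unique h')⟩
    (fun c h ↦ by
      obtain ⟨c', h'⟩ := c.2.1.exists_lowerStep (by have := hlast c; omega)
      exact ⟨⟨c', h'.isCut c.2.1, by have := h'.maxHeight_eq c.2.1; have := c.2.2; omega⟩, h'⟩)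
    (fun c h ↦ by
      obtain ⟨c', hc', h'⟩ := c.2.1.exists_lowerStep_to (by omega)
      exact ⟨⟨c', hc', by have := h'.maxHeight_eq hc'; omega⟩, h'⟩)
    fun c c' h ↦ by
      have := h.maxHeight_eq c.2.1
      have := h.height_last c.2.1
      have := hlast c'
      have := c.2.2
      omega
  refine ⟨σ, hinv, fun c ↦ ⟨(hσ c).1, ?_⟩⟩
  have := (hσ c).2
  have := hlast (σ c)
  have := c.2.2
  omega

variable (F c c') in
/-- `c'` is a mirror image of `c` for the reversal of the part of its string in which the largest
height of a cut is at least `z`: the last height is reflected in `z`. -/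
structure IsReflection (z : ℤ) : Prop where
  isCut : F.IsCut c'
  height_last : F.height c' R = 2 * z - F.height c R
  newSmall_add_newLarge : ∀ t,
    F.newSmall c' t + F.newLarge c' t = F.newSmall c t + F.newLarge c t
  sameLead : 0 < z → F.SameLead c c'

theorem isReflection_of_eqvGen {z : ℤ} {c c' : F.HighCut z}
    (h : Relation.EqvGen (fun c c' ↦ F.LowerStep c.1 c'.1) c c')
    (hmax : F.maxHeight c'.1 - F.height c'.1 R = F.maxHeight c.1 - z) :
    F.IsReflection c.1 c'.1 z where
  isCut := c'.2.1
  height_last := by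
    have : F.height c.1 R - 2 * F.maxHeight c.1 = F.height c'.1 R - 2 * F.maxHeight c'.1 :=
      (eq_equivalence.comap fun c : F.HighCut z ↦ F.height c.1 R - 2 * F.maxHeight c.1).eqvGen_iff.1
        (h.mono fun c c' h ↦ by
          have := h.maxHeight_eq c.2.1
          have := h.height_last c.2.1
          simp only [Function.onFun]
          omega)
    omega
  newSmall_add_newLarge t :=
    ((eq_equivalence.comap fun c : F.HighCut z ↦
      F.newSmall c.1 t + F.newLarge c.1 t).eqvGen_iff.1
        (h.mono fun c _ h ↦ (h.newSmall_add_newLarge c.2.1 t).symm)).symm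
  sameLead hz :=
    (sameLead_equivalence.comap (Subtype.val : F.HighCut z → ℕ → ℤ)).eqvGen_iff.1
      (h.mono fun c _ h ↦ h.sameLead c.2.1 (hz.trans_le c.2.2))

theorem exists_isReflection (F : Frame R) {z : ℤ} (hz : 0 ≤ z) :
    ∃ σ : (ℕ → ℤ) → ℕ → ℤ, ∀ c, F.IsCut c → z ≤ F.maxHeight c →
      F.IsReflection c (σ c) z ∧ σ (σ c) = c := by
  obtain ⟨σ, hinv, hσ⟩ := exists_involutive_highCut (F := F) hz
  refine ⟨fun c ↦ if h : F.IsCut c ∧ z ≤ F.maxHeight c then σ ⟨c, h⟩ else c, fun c hc hzc ↦ ?_⟩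
  have h : F.IsCut c ∧ z ≤ F.maxHeight c := ⟨hc, hzc⟩
  simp only [dif_pos h, dif_pos (σ ⟨c, h⟩).2]
  exact ⟨isReflection_of_eqvGen (hσ ⟨c, h⟩).1 (hσ ⟨c, h⟩).2, congrArg Subtype.val (hinv ⟨c, h⟩)⟩

end Frame

/-! ### Two consecutive letters in a tableau -/

/-- `lam/mu` is a skew shape with at most `R` rows and at most `C` columns. -/
structure IsSkewShape (lam mu : ℕ → ℕ) (R C : ℕ) : Prop where
  lam_succ_le : ∀ r, lam (r + 1) ≤ lam r
  mu_succ_le : ∀ r, mu (r + 1) ≤ mu r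
  mu_le_lam : ∀ r, mu r ≤ lam r
  lam_eq_zero : ∀ r, R ≤ r → lam r = 0
  lam_le : ∀ r, lam r ≤ C

/-- `k` is the point of `[m, l]` such that, on `[m, l)`, the predicate `p` holds exactly before
`k`. -/
structure IsPrefixEnd (m l : ℕ) (p : ℕ → Prop) (k : ℤ) : Prop where
  left_le : m ≤ k
  le_right : k ≤ l
  iff_lt : ∀ j, m ≤ j → j < l → (p j ↔ (j : ℤ) < k)

theorem exists_isPrefixEnd {m l : ℕ} (hml : m ≤ l) {p : ℕ → Prop}
    (hp : ∀ j, m ≤ j → j + 1 < l → p (j + 1) → p j) : ∃ k, IsPrefixEnd m l p k := by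
  have hex : ∃ k, m ≤ k ∧ (l ≤ k ∨ ¬ p k) := ⟨l, hml, .inl le_rfl⟩
  have hmin (j : ℕ) := Nat.find_min hex (m := j)
  have hle : Nat.find hex ≤ l := Nat.find_min' hex ⟨hml, .inl le_rfl⟩
  obtain ⟨hmk, hk⟩ := Nat.find_spec hex
  generalize Nat.find hex = k at *
  refine ⟨k, by omega, by omega, fun j hmj hjl ↦ ⟨fun hpj ↦ ?_, fun hjk ↦ ?_⟩⟩
  · by_contra! hkj
    have hpk : p k := by
      refine Nat.decreasingInduction' (P := p) (fun i hij hki hpi ↦ ?_) (by omega : k ≤ j) hpj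
      exact hp i (by omega) (by omega) hpi
    exact hk.elim (by omega) (· hpk)
  · by_contra hpj
    exact hmin j (by omega) ⟨hmj, .inr hpj⟩

theorem IsPrefixEnd.mono {m l m' l' : ℕ} {p p' : ℕ → Prop} {k k' : ℤ} (h : IsPrefixEnd m l p k)
    (h' : IsPrefixEnd m' l' p' k') (hm : m' ≤ m) (hl : l' ≤ l)
    (hp : ∀ j, m ≤ j → j < l' → p' j → p j) : k' ≤ k := by
  obtain ⟨hmk, -, hk⟩ := h
  obtain ⟨-, hkl', hk'⟩ := h'
  by_contra! hlt
  have hp' := (hk' k.toNat (by omega) (by omega)).2 (by omega)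
  have := (hk k.toNat (by omega) (by omega)).1 (hp k.toNat (by omega) (by omega) hp')
  omega

theorem IsPrefixEnd.unique {m l : ℕ} {p : ℕ → Prop} {k k' : ℤ} (h : IsPrefixEnd m l p k)
    (h' : IsPrefixEnd m l p k') : k = k' :=
  le_antisymm (h'.mono h le_rfl le_rfl fun _ _ _ ↦ id) (h.mono h' le_rfl le_rfl fun _ _ _ ↦ id)

theorem IsPrefixEnd.le_add_one {m l : ℕ} {p p' : ℕ → Prop} {k k' : ℤ} (h : IsPrefixEnd m l p k)
    (h' : IsPrefixEnd m l p' k') (hp : ∀ j, m ≤ j → j + 1 < l → p' (j + 1) → p j) :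
    k' ≤ k + 1 := by
  obtain ⟨hmk, -, hk⟩ := h
  obtain ⟨-, hkl', hk'⟩ := h'
  by_contra! hlt
  have hp' := (hk' (k.toNat + 1) (by omega) (by omega)).2 (by omega)
  have := (hk k.toNat (by omega) (by omega)).1 (hp k.toNat (by omega) (by omega) hp')
  omega

/-- Every element of the box `A` is smaller than `a`. -/
def Below (a : ℕ) (A : Finset ℕ) : Prop :=
  ∀ x ∈ A, x < a

section Boxes

variable {a : ℕ} {A B : Finset ℕ}

theorem Below.of_finsetLE (hAB : FinsetLE A B) (hB : B.Nonempty) (h : Below a B) : Below a A := by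
  obtain ⟨y, hy⟩ := hB
  exact fun x hx ↦ (hAB x hx y hy).trans_lt (h y hy)

theorem below_or_mem_and_notMem_of_finsetLE (hAB : FinsetLE A B) (hB : B.Nonempty)
    (h : Below a B ∨ a ∈ B) : (Below a A ∨ a ∈ A) ∧ a + 1 ∉ A := by
  rcases h with h | h
  · have hA := h.of_finsetLE hAB hB
    exact ⟨.inl hA, fun hmem ↦ by have := hA _ hmem; omega⟩
  · refine ⟨?_, fun hmem ↦ by have := hAB _ hmem a h; omega⟩
    by_cases ha : a ∈ A
    · exact .inr ha
    · exact .inl fun x hx ↦ lt_of_le_of_ne (hAB x hx a h) fun heq ↦ ha (heq ▸ hx)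

theorem below_or_mem_or_mem_of_finsetLE (hAB : FinsetLE A B) (hB : B.Nonempty)
    (h : Below a B ∨ a ∈ B ∨ a + 1 ∈ B) : Below a A ∨ a ∈ A ∨ a + 1 ∈ A := by
  rcases h with h | h | h
  · exact .inl (h.of_finsetLE hAB hB)
  · exact (below_or_mem_and_notMem_of_finsetLE hAB hB (.inr h)).1.imp_right .inl
  · have := (below_or_mem_and_notMem_of_finsetLE hAB hB (.inr h)).1
    refine or_iff_not_imp_right.2 fun hmem x hx ↦ ?_
    have : x ≠ a := fun heq ↦ hmem (.inl (heq ▸ hx))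
    have : x ≠ a + 1 := fun heq ↦ hmem (.inr (heq ▸ hx))
    have := hAB x hx _ h
    omega

/-- The boxes `A` and `A'` differ only in the way they meet `{a, a + 1}`, and if one of them meets
`{a, a + 1}`, so does the other. -/
structure Recolors (a : ℕ) (A A' : Finset ℕ) : Prop where
  mem_iff : ∀ x, x ≠ a → x ≠ a + 1 → (x ∈ A' ↔ x ∈ A)
  meets_iff : a ∈ A' ∨ a + 1 ∈ A' ↔ a ∈ A ∨ a + 1 ∈ A

variable {A' B' : Finset ℕ}

theorem Recolors.symm (h : Recolors a A A') : Recolors a A' A :=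
  ⟨fun x hx hx' ↦ (h.1 x hx hx').symm, h.2.symm⟩

theorem Recolors.exists_near (h : Recolors a A A') {x : ℕ} (hx : x ∈ A') :
    ∃ y ∈ A, (x = y ∨ (x = a ∨ x = a + 1) ∧ (y = a ∨ y = a + 1)) := by
  by_cases hxa : x = a ∨ x = a + 1
  · have := h.meets_iff
    grind
  · exact ⟨x, (h.mem_iff x (by tauto) (by tauto)).1 hx, .inl rfl⟩

theorem Recolors.nonempty (h : Recolors a A A') (hA : A.Nonempty) : A'.Nonempty := by
  obtain ⟨x, hx⟩ := hA
  obtain ⟨y, hy, -⟩ := h.symm.exists_near hx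
  exact ⟨y, hy⟩

theorem Recolors.below (h : Recolors a A A') (hA : Below a A) : Below a A' := by
  intro x hx
  obtain ⟨y, hy, hxy⟩ := h.exists_near hx
  have := hA y hy
  omega

theorem Recolors.below_iff (h : Recolors a A A') : Below a A' ↔ Below a A :=
  ⟨h.symm.below, h.below⟩

theorem Recolors.finsetLE (hA : Recolors a A A') (hB : Recolors a B B') (hAB : FinsetLE A B)
    (hinv : ¬ (a + 1 ∈ A' ∧ a ∈ B')) : FinsetLE A' B' := by
  intro x hx y hy
  obtain ⟨x', hx', hxx'⟩ := hA.exists_near hx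
  obtain ⟨y', hy', hyy'⟩ := hB.exists_near hy
  have := hAB x' hx' y' hy'
  have : ¬ (x = a + 1 ∧ y = a) := fun ⟨hxa, hya⟩ ↦ hinv ⟨hxa ▸ hx, hya ▸ hy⟩
  omega

end Boxes

/-- The frame `F` and its cut `c` describe how the letters `a`, `a + 1` occur in `T`. -/
structure Separates (lam mu : ℕ → ℕ) {R : ℕ} (T : ℕ → ℕ → Finset ℕ) (a : ℕ) (F : Frame R)
    (c : ℕ → ℤ) : Prop where
  left : ∀ r, IsPrefixEnd (mu r) (lam r) (fun j ↦ Below a (T r j)) (F.left r)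
  large : ∀ r, IsPrefixEnd (mu r) (lam r)
    (fun j ↦ (Below a (T r j) ∨ a ∈ T r j) ∧ a + 1 ∉ T r j) (c r - F.overlap r)
  cut : ∀ r, IsPrefixEnd (mu r) (lam r) (fun j ↦ Below a (T r j) ∨ a ∈ T r j) (c r)
  right : ∀ r, IsPrefixEnd (mu r) (lam r)
    (fun j ↦ Below a (T r j) ∨ a ∈ T r j ∨ a + 1 ∈ T r j) (F.right r)
  isCut : F.IsCut c
  overlap_le_one : ∀ r, F.overlap r ≤ 1

section Tableaux

variable {lam mu : ℕ → ℕ} {R C n : ℕ} {T : ℕ → ℕ → Finset ℕ} {a : ℕ} {F F' : Frame R}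
  {c c' : ℕ → ℤ}

theorem mem_shape (hT : IsSVRPP lam mu T) {r j x : ℕ} (hx : x ∈ T r j) : InShape lam mu r j := by
  by_contra h
  simp [hT.1 r j h] at hx

theorem row_finsetLE (hT : IsSVRPP lam mu T) {r j : ℕ} (hj : mu r ≤ j) (hj' : j + 1 < lam r) :
    FinsetLE (T r j) (T r (j + 1)) :=
  hT.2.2.2.1 r j ⟨hj, by omega⟩ ⟨by omega, hj'⟩

theorem col_finsetLE (hS : IsSkewShape lam mu R C) (hT : IsSVRPP lam mu T) {r j : ℕ}
    (hj : mu r ≤ j) (hj' : j < lam (r + 1)) : FinsetLE (T r j) (T (r + 1) j) :=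
  hT.2.2.2.2 r j ⟨hj, hj'.trans_le (hS.lam_succ_le r)⟩ ⟨(hS.mu_succ_le r).trans hj, hj'⟩

theorem exists_prefixEnds (hS : IsSkewShape lam mu R C) (hT : IsSVRPP lam mu T) (a r : ℕ) :
    ∃ left large cut right : ℤ,
      IsPrefixEnd (mu r) (lam r) (fun j ↦ Below a (T r j)) left ∧
      IsPrefixEnd (mu r) (lam r) (fun j ↦ (Below a (T r j) ∨ a ∈ T r j) ∧ a + 1 ∉ T r j) large ∧
      IsPrefixEnd (mu r) (lam r) (fun j ↦ Below a (T r j) ∨ a ∈ T r j) cut ∧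
      IsPrefixEnd (mu r) (lam r) (fun j ↦ Below a (T r j) ∨ a ∈ T r j ∨ a + 1 ∈ T r j) right ∧
      left ≤ large ∧ large ≤ cut ∧ cut ≤ right ∧ cut - large ≤ 1 := by
  have hle {j : ℕ} (hj : mu r ≤ j) (hj' : j + 1 < lam r) := row_finsetLE hT hj hj'
  have hne {j : ℕ} (hj : mu r ≤ j) (hj' : j + 1 < lam r) : (T r (j + 1)).Nonempty :=
    hT.2.1 r (j + 1) ⟨by omega, hj'⟩
  obtain ⟨left, hleft⟩ := exists_isPrefixEnd (hS.mu_le_lam r) (p := fun j ↦ Below a (T r j))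
    fun j hj hj' h ↦ h.of_finsetLE (hle hj hj') (hne hj hj')
  obtain ⟨large, hlarge⟩ := exists_isPrefixEnd (hS.mu_le_lam r)
    (p := fun j ↦ (Below a (T r j) ∨ a ∈ T r j) ∧ a + 1 ∉ T r j)
    fun j hj hj' h ↦ below_or_mem_and_notMem_of_finsetLE (hle hj hj') (hne hj hj') h.1
  obtain ⟨cut, hcut⟩ := exists_isPrefixEnd (hS.mu_le_lam r)
    (p := fun j ↦ Below a (T r j) ∨ a ∈ T r j)
    fun j hj hj' h ↦ (below_or_mem_and_notMem_of_finsetLE (hle hj hj') (hne hj hj') h).1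
  obtain ⟨right, hright⟩ := exists_isPrefixEnd (hS.mu_le_lam r)
    (p := fun j ↦ Below a (T r j) ∨ a ∈ T r j ∨ a + 1 ∈ T r j)
    fun j hj hj' h ↦ below_or_mem_or_mem_of_finsetLE (hle hj hj') (hne hj hj') h
  refine ⟨left, large, cut, right, hleft, hlarge, hcut, hright,
    hlarge.mono hleft le_rfl le_rfl
      fun j _ _ h ↦ ⟨.inl h, fun hmem ↦ by have := h _ hmem; omega⟩,
    hcut.mono hlarge le_rfl le_rfl fun j _ _ h ↦ h.1,
    hright.mono hcut le_rfl le_rfl fun j _ _ h ↦ by tauto,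
    sub_le_iff_le_add'.2 (hlarge.le_add_one hcut fun j hj hj' h ↦
      below_or_mem_and_notMem_of_finsetLE (hle hj hj') (hne hj hj') h)⟩

theorem exists_separates (hS : IsSkewShape lam mu R C) (hT : IsSVRPP lam mu T) (a : ℕ) :
    ∃ (F : Frame R) (c : ℕ → ℤ), Separates lam mu T a F c := by
  choose left large cut right hleft hlarge hcut hright hle₁ hle₂ hle₃ hgap using
    exists_prefixEnds hS hT a
  have hcol {r j : ℕ} (hj : mu r ≤ j) (hj' : j < lam (r + 1)) := col_finsetLE hS hT hj hj'
  have hne {r j : ℕ} (hj : mu r ≤ j) (hj' : j < lam (r + 1)) : (T (r + 1) j).Nonempty :=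
    hT.2.1 (r + 1) j ⟨(hS.mu_succ_le r).trans hj, hj'⟩
  have hzero {r : ℕ} (hr : R ≤ r) : left r = 0 ∧ right r = 0 := by
    have := (hleft r).left_le
    have := (hright r).le_right
    have := hS.lam_eq_zero r hr
    have := hle₁ r
    have := hle₂ r
    have := hle₃ r
    omega
  refine ⟨{ left := left, right := right, overlap := fun r ↦ cut r - large r,
            left_succ_le := fun r ↦ (hleft r).mono (hleft (r + 1)) (hS.mu_succ_le r)
              (hS.lam_succ_le r) fun j hj hj' h ↦ h.of_finsetLE (hcol hj hj') (hne hj hj')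
            right_succ_le := fun r ↦ (hright r).mono (hright (r + 1)) (hS.mu_succ_le r)
              (hS.lam_succ_le r) fun j hj hj' h ↦
                below_or_mem_or_mem_of_finsetLE (hcol hj hj') (hne hj hj') h
            overlap_nonneg := fun r ↦ sub_nonneg.2 (hle₂ r)
            left_eq_zero := fun r hr ↦ (hzero hr).1
            right_eq_zero := fun r hr ↦ (hzero hr).2 }, cut, hleft, ?_, hcut, hright,
    ⟨fun r ↦ ?_, hle₃, fun r ↦ ?_⟩, hgap⟩
  · simpa only [sub_sub_cancel] using hlarge
  · simpa only [sub_sub_cancel] using hle₁ r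
  · simpa only [sub_sub_cancel] using (hlarge r).mono (hcut (r + 1)) (hS.mu_succ_le r)
      (hS.lam_succ_le r) fun j hj hj' h ↦
        below_or_mem_and_notMem_of_finsetLE (hcol hj hj') (hne hj hj') h

theorem Separates.unique (h : Separates lam mu T a F c) (h' : Separates lam mu T a F' c') :
    F = F' ∧ c = c' := by
  have hc : c = c' := funext fun r ↦ (h.cut r).unique (h'.cut r)
  refine ⟨Frame.ext (funext fun r ↦ (h.left r).unique (h'.left r))
    (funext fun r ↦ (h.right r).unique (h'.right r)) (funext fun r ↦ ?_), hc⟩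
  have := (h.large r).unique (h'.large r)
  rw [hc] at this
  omega

theorem Separates.mem_small_iff (hT : IsSVRPP lam mu T) (h : Separates lam mu T a F c) (r j : ℕ) :
    a ∈ T r j ↔ F.left r ≤ j ∧ (j : ℤ) < c r := by
  have hl := h.left r
  have hc := h.cut r
  by_cases hj : InShape lam mu r j
  · have := hl.iff_lt j hj.1 hj.2
    have := hc.iff_lt j hj.1 hj.2
    grind [Below]
  · refine iff_of_false (fun hmem ↦ hj (mem_shape hT hmem)) fun hlt ↦ hj ?_
    have := hl.left_le
    have := hc.le_right
    constructor <;> omega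

theorem Separates.mem_large_iff (hT : IsSVRPP lam mu T) (h : Separates lam mu T a F c)
    (r j : ℕ) : a + 1 ∈ T r j ↔ c r - F.overlap r ≤ j ∧ (j : ℤ) < F.right r := by
  have hl := h.large r
  have hr := h.right r
  by_cases hj : InShape lam mu r j
  · have := hl.iff_lt j hj.1 hj.2
    have := hr.iff_lt j hj.1 hj.2
    grind [Below]
  · refine iff_of_false (fun hmem ↦ hj (mem_shape hT hmem)) fun hlt ↦ hj ?_
    have := hl.left_le
    have := hr.le_right
    constructor <;> omega

end Tableaux

/-! ### Moving the cut of a tableau -/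

/-- The tableau `T` with the letters `a`, `a + 1` redistributed according to the cut `c` of the
frame `F`. -/
noncomputable def recut {R : ℕ} (T : ℕ → ℕ → Finset ℕ) (a : ℕ) (F : Frame R) (c : ℕ → ℤ)
    (r j : ℕ) : Finset ℕ :=
  {x ∈ insert a (insert (a + 1) (T r j)) | (x = a → F.left r ≤ j ∧ (j : ℤ) < c r) ∧
    (x = a + 1 → c r - F.overlap r ≤ j ∧ (j : ℤ) < F.right r)}

section Recut

variable {lam mu : ℕ → ℕ} {R n : ℕ} {T : ℕ → ℕ → Finset ℕ} {a : ℕ} {F : Frame R}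
  {c c' : ℕ → ℤ} {r j : ℕ}

theorem mem_recut_small : a ∈ recut T a F c r j ↔ F.left r ≤ j ∧ (j : ℤ) < c r := by
  simp [recut]

theorem mem_recut_large :
    a + 1 ∈ recut T a F c r j ↔ c r - F.overlap r ≤ j ∧ (j : ℤ) < F.right r := by
  simp [recut]

theorem mem_recut_of_ne {x : ℕ} (hx : x ≠ a) (hx' : x ≠ a + 1) :
    x ∈ recut T a F c r j ↔ x ∈ T r j := by
  simp [recut, hx, hx']

theorem recut_recut : recut (recut T a F c') a F c = recut T a F c := by
  funext r j
  ext x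
  by_cases hx : x = a
  · rw [hx, mem_recut_small, mem_recut_small]
  by_cases hx' : x = a + 1
  · rw [hx', mem_recut_large, mem_recut_large]
  · simp only [mem_recut_of_ne hx hx']

theorem recut_congr (hr : c r = c' r) : recut T a F c r = recut T a F c' r := by
  funext j
  simp only [recut, hr]

theorem Separates.recut_eq_self (hT : IsSVRPP lam mu T) (h : Separates lam mu T a F c) :
    recut T a F c = T := by
  funext r j
  ext x
  by_cases hx : x = a
  · rw [hx, mem_recut_small, h.mem_small_iff hT]
  by_cases hx' : x = a + 1
  · rw [hx', mem_recut_large, h.mem_large_iff hT]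
  · exact mem_recut_of_ne hx hx'

theorem Separates.recolors (hT : IsSVRPP lam mu T) (h : Separates lam mu T a F c)
    (hc' : F.IsCut c') (r j : ℕ) : Recolors a (T r j) (recut T a F c' r j) := by
  refine ⟨fun x hx hx' ↦ mem_recut_of_ne hx hx', ?_⟩
  rw [mem_recut_small, mem_recut_large, h.mem_small_iff hT, h.mem_large_iff hT]
  have := F.overlap_nonneg r
  have := hc'.left_le r
  have := hc'.le_right r
  have := h.isCut.left_le r
  have := h.isCut.le_right r
  omega

theorem Separates.isSVRPPn_recut (hT : IsSVRPPn lam mu n T) (h : Separates lam mu T a F c)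
    (hc' : F.IsCut c') (ha : 1 ≤ a) (han : a < n) : IsSVRPPn lam mu n (recut T a F c') := by
  have hrec := h.recolors hT.1 hc'
  have hIcc : ∀ r j, recut T a F c' r j ⊆ Finset.Icc 1 n := by
    intro r j x hx
    obtain ⟨y, hy, hxy⟩ := (hrec r j).exists_near hx
    have := Finset.mem_Icc.1 (hT.2 r j hy)
    rw [Finset.mem_Icc]
    omega
  refine ⟨⟨fun r j hj ↦ ?_, fun r j hj ↦ (hrec r j).nonempty (hT.1.2.1 r j hj),
    fun r j x hx ↦ (Finset.mem_Icc.1 (hIcc r j hx)).1, fun r j hj hj' ↦ ?_, fun r j hj hj' ↦ ?_⟩,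
    hIcc⟩
  · refine Finset.eq_empty_of_forall_notMem fun x hx ↦ ?_
    obtain ⟨y, hy, -⟩ := (hrec r j).exists_near hx
    simp [hT.1.1 r j hj] at hy
  · refine (hrec r j).finsetLE (hrec r (j + 1)) (hT.1.2.2.2.1 r j hj hj') ?_
    rw [mem_recut_small, mem_recut_large]
    have := h.overlap_le_one r
    push_cast
    omega
  · refine (hrec r j).finsetLE (hrec (r + 1) j) (hT.1.2.2.2.2 r j hj hj') ?_
    rw [mem_recut_small, mem_recut_large]
    have := hc'.succ_le r
    omega

theorem Separates.separates_recut (hT : IsSVRPP lam mu T) (h : Separates lam mu T a F c)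
    (hc' : F.IsCut c') : Separates lam mu (recut T a F c') a F c' := by
  have hrec := h.recolors hT hc'
  have hbelow (r j : ℕ) := (hrec r j).below_iff
  have hmu (r : ℕ) := (h.left r).left_le
  have hlam (r : ℕ) := (h.right r).le_right
  have hlo := hc'.left_le
  have hhi := hc'.le_right
  have hov := F.overlap_nonneg
  refine ⟨fun r ↦ ⟨hmu r, (h.left r).le_right, fun j hj hj' ↦ ?_⟩,
    fun r ↦ ⟨(hmu r).trans (hlo r), by grind, fun j hj hj' ↦ ?_⟩,
    fun r ↦ ⟨by grind, (hhi r).trans (hlam r), fun j hj hj' ↦ ?_⟩,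
    fun r ↦ ⟨(h.right r).left_le, hlam r, fun j hj hj' ↦ ?_⟩, hc', h.overlap_le_one⟩
  · rw [hbelow, (h.left r).iff_lt j hj hj']
  · rw [hbelow, (h.left r).iff_lt j hj hj', mem_recut_small, mem_recut_large]
    grind
  · rw [hbelow, (h.left r).iff_lt j hj hj', mem_recut_small]
    grind
  · rw [hbelow, (hrec r j).meets_iff, (h.right r).iff_lt j hj hj']

end Recut

/-! ### Toggling two consecutive letters -/

namespace Frame

variable {R : ℕ} {F : Frame R} {c : ℕ → ℤ}

theorem IsCut.le_maxHeight_iff (hc : F.IsCut c) {z : ℤ} :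
    z ≤ F.maxHeight c ↔ ∃ t, z ≤ F.height c t := by
  refine ⟨fun h ↦ ?_, fun ⟨t, ht⟩ ↦ ht.trans (hc.height_le_maxHeight t)⟩
  obtain ⟨p, hp⟩ := exists_forall_le_of_eventually_const fun r ↦ hc.height_eq_of_le (r := r)
  exact ⟨p, hc.maxHeight_eq hp ▸ h⟩

theorem IsCut.lt_right_of_isFirstPos (hc : F.IsCut c) {r : ℕ} (hr : IsFirstPos (F.height c) r) :
    c r < F.right r := by
  obtain ⟨hpos, hle⟩ := hr
  refine lt_of_le_of_ne (hc.le_right r) fun heq ↦ hpos.not_ge ?_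
  cases r with
  | zero => simp [height, newLarge, heq]
  | succ q =>
    have henv : F.heightEnvelope c q ≤ 0 := heightEnvelope_le fun t _ ↦ hle t (by omega)
    have := F.height_le_heightEnvelope c (q + 1)
    have := F.heightEnvelope_succ c q
    have := hc.left_le q
    have := hc.succ_le q
    have := F.overlap_nonneg q
    have := hc.le_right q
    have := F.right_succ_le q
    have : F.height c (q + 1) = F.heightEnvelope c (q + 1) - max 0 (c (q + 1) - F.left q) := by
      simp [heightEnvelope]
    omega

end Frame

section Counts

variable (C : ℕ) (T : ℕ → ℕ → Finset ℕ) (r v : ℕ)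

/-- The number of columns that contain `v` in row `r` but not in row `r - 1`; on these columns `v`
contributes to the weight of `T` through row `r`. -/
noncomputable def newCount : ℕ :=
  {j ∈ Finset.range C | v ∈ T r j ∧ (r = 0 ∨ v ∉ T (r - 1) j)}.card

/-- The number of boxes of row `r` that contain `v`. -/
noncomputable def rowCount : ℕ :=
  {j ∈ Finset.range C | v ∈ T r j}.card

/-- The number of boxes of row `r` that contain both `v` and `v + 1`. -/
noncomputable def pairCount : ℕ :=
  {j ∈ Finset.range C | v ∈ T r j ∧ v + 1 ∈ T r j}.card

/-- The surplus of `v + 1` over `v` when the reading word is read backwards up to the first letter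
`v` of row `r`; compare `Frame.height`. -/
noncomputable def surplus : ℤ :=
  ∑ t ∈ Finset.range r, ((newCount C T t (v + 1) : ℤ) - newCount C T t v) +
    newCount C T r (v + 1) - pairCount C T r v

end Counts

theorem card_filter_range_eq_sub {C : ℕ} {x y : ℤ} (hx : 0 ≤ x) (hxy : x ≤ y) (hy : y ≤ C)
    {p : ℕ → Prop} [DecidablePred p] (hp : ∀ j : ℕ, p j ↔ x ≤ j ∧ (j : ℤ) < y) :
    ({j ∈ Finset.range C | p j}.card : ℤ) = y - x := by
  have : {j ∈ Finset.range C | p j} = Finset.Ico x.toNat y.toNat := by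
    ext j
    rw [Finset.mem_filter, hp, Finset.mem_range, Finset.mem_Ico]
    omega
  rw [this, Nat.card_Ico]
  omega

namespace Separates

variable {lam mu : ℕ → ℕ} {R C n : ℕ} {T : ℕ → ℕ → Finset ℕ} {a : ℕ} {F : Frame R} {c : ℕ → ℤ}

theorem bounds (hS : IsSkewShape lam mu R C) (h : Separates lam mu T a F c) (r : ℕ) :
    0 ≤ F.left r ∧ F.left r ≤ c r - F.overlap r ∧ 0 ≤ F.overlap r ∧ c r ≤ F.right r ∧
      F.right r ≤ C := by
  have := (h.left r).left_le
  have := (h.right r).le_right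
  have := hS.lam_le r
  exact ⟨by omega, h.isCut.left_le r, F.overlap_nonneg r, h.isCut.le_right r, by omega⟩

theorem newCount_small (hS : IsSkewShape lam mu R C) (hT : IsSVRPP lam mu T)
    (h : Separates lam mu T a F c) (r : ℕ) : (newCount C T r a : ℤ) = F.newSmall c r := by
  have := h.bounds hS r
  cases r with
  | zero =>
    exact card_filter_range_eq_sub (by omega) (by omega) (by omega) fun j ↦ by
      simp [h.mem_small_iff hT]
  | succ r =>
    have := h.bounds hS r
    have := F.left_succ_le r
    have := h.isCut.succ_le r
    refine card_filter_range_eq_sub (by omega) (by omega) (by omega) fun j ↦ ?_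
    simp only [Nat.add_sub_cancel, h.mem_small_iff hT]
    omega

theorem newCount_large (hS : IsSkewShape lam mu R C) (hT : IsSVRPP lam mu T)
    (h : Separates lam mu T a F c) (r : ℕ) : (newCount C T r (a + 1) : ℤ) = F.newLarge c r := by
  have := h.bounds hS r
  cases r with
  | zero =>
    exact card_filter_range_eq_sub (by omega) (by omega) (by omega) fun j ↦ by
      simp [h.mem_large_iff hT]
  | succ r =>
    have := h.bounds hS r
    have := F.right_succ_le r
    have := h.isCut.succ_le r
    refine card_filter_range_eq_sub (by omega) (by omega) (by omega) fun j ↦ ?_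
    simp only [Nat.add_sub_cancel, h.mem_large_iff hT]
    omega

theorem pairCount_eq (hS : IsSkewShape lam mu R C) (hT : IsSVRPP lam mu T)
    (h : Separates lam mu T a F c) (r : ℕ) : (pairCount C T r a : ℤ) = F.overlap r := by
  have := h.bounds hS r
  have hcard := card_filter_range_eq_sub (C := C) (x := c r - F.overlap r) (y := c r)
    (by omega) (by omega) (by omega) (p := fun j ↦ a ∈ T r j ∧ a + 1 ∈ T r j) fun j ↦ by
      rw [h.mem_small_iff hT, h.mem_large_iff hT]
      omega
  rwa [sub_sub_cancel] at hcard

theorem rowCount_small_add_large (hS : IsSkewShape lam mu R C) (hT : IsSVRPP lam mu T)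
    (h : Separates lam mu T a F c) (r : ℕ) :
    (rowCount C T r a + rowCount C T r (a + 1) : ℤ) = F.right r - F.left r + F.overlap r := by
  have := h.bounds hS r
  have hsmall := card_filter_range_eq_sub (C := C) (by omega) (by omega) (by omega)
    (h.mem_small_iff hT r)
  have hlarge := card_filter_range_eq_sub (C := C) (by omega) (by omega) (by omega)
    (h.mem_large_iff hT r)
  rw [rowCount, rowCount, hsmall, hlarge]
  ring

theorem surplus_eq (hS : IsSkewShape lam mu R C) (hT : IsSVRPP lam mu T)
    (h : Separates lam mu T a F c) : (fun r ↦ surplus C T r a) = F.height c := by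
  funext r
  simp only [surplus, Frame.height, h.newCount_small hS hT, h.newCount_large hS hT,
    h.pairCount_eq hS hT]

theorem mem_large_and_mem_succ_iff (hT : IsSVRPP lam mu T) (h : Separates lam mu T a F c)
    {r : ℕ} (hr : c r < F.right r) (j : ℕ) :
    a + 1 ∈ T r j ∧ a + 1 + 1 ∈ T r j ↔ (j : ℤ) = F.right r - 1 ∧ a + 1 + 1 ∈ T r j := by
  have := (h.right r).le_right
  have := F.overlap_nonneg r
  refine and_congr_left fun hmem ↦ ?_
  have hj := (mem_shape hT hmem).1
  rw [h.mem_large_iff hT]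
  refine ⟨fun hlt ↦ ?_, fun heq ↦ by omega⟩
  by_contra hne
  have hle := row_finsetLE hT hj (by omega : j + 1 < lam r)
  have hsmall := h.mem_small_iff hT r (j + 1)
  have hlarge := h.mem_large_iff hT r (j + 1)
  have hnext : a ∈ T r (j + 1) ∨ a + 1 ∈ T r (j + 1) := by
    rw [hsmall, hlarge]
    have := h.isCut.left_le r
    omega
  rcases hnext with hnext | hnext
  · have := hle _ hmem _ hnext
    omega
  · have := hle _ hmem _ hnext
    omega

end Separates

/-- `T'` arises from `T` by moving letters between `a` and `a + 1`, in such a way that all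
statistics other than the weight are preserved, and the weight is reflected in the line
`surplus = z`. -/
structure IsToggle (lam mu : ℕ → ℕ) (n R C a : ℕ) (z : ℤ) (T T' : ℕ → ℕ → Finset ℕ) : Prop where
  isSVRPPn : IsSVRPPn lam mu n T'
  mem_iff : ∀ r j v, v ≠ a → v ≠ a + 1 → (v ∈ T' r j ↔ v ∈ T r j)
  newCount_add : ∀ r,
    newCount C T' r a + newCount C T' r (a + 1) = newCount C T r a + newCount C T r (a + 1)
  rowCount_add : ∀ r,
    rowCount C T' r a + rowCount C T' r (a + 1) = rowCount C T r a + rowCount C T r (a + 1)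
  surplus_last : surplus C T' R a = 2 * z - surplus C T R a
  sameLead : 0 < z → ∀ r, IsFirstPos (fun t ↦ surplus C T t a) r →
    IsFirstPos (fun t ↦ surplus C T' t a) r ∧ (∀ t < r, T' t = T t) ∧
      pairCount C T' r (a + 1) = pairCount C T r (a + 1)

section Toggle

variable {lam mu : ℕ → ℕ} {R C n : ℕ} {T : ℕ → ℕ → Finset ℕ} {a : ℕ} {F : Frame R}
  {c c' : ℕ → ℤ} {z : ℤ}

theorem Separates.isToggle_recut (hS : IsSkewShape lam mu R C) (hT : IsSVRPPn lam mu n T)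
    (h : Separates lam mu T a F c) (hrefl : F.IsReflection c c' z) (ha : 1 ≤ a) (han : a < n) :
    IsToggle lam mu n R C a z T (recut T a F c') := by
  have hT' := h.isSVRPPn_recut hT hrefl.isCut ha han
  have h' := h.separates_recut hT.1 hrefl.isCut
  have hsur := h.surplus_eq hS hT.1
  have hsur' := h'.surplus_eq hS hT'.1
  refine ⟨hT', fun r j v hv hv' ↦ mem_recut_of_ne hv hv', fun r ↦ ?_, fun r ↦ ?_, ?_,
    fun hz r hr ↦ ?_⟩
  · zify
    rw [h.newCount_small hS hT.1, h.newCount_large hS hT.1, h'.newCount_small hS hT'.1,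
      h'.newCount_large hS hT'.1, hrefl.newSmall_add_newLarge]
  · zify
    rw [h.rowCount_small_add_large hS hT.1, h'.rowCount_small_add_large hS hT'.1]
  · exact (congrFun hsur' R).trans (congrFun hsur R ▸ hrefl.height_last)
  · rw [hsur] at hr
    have hlead := hrefl.sameLead hz r
    have hr' := hlead.1.1 hr
    refine ⟨hsur' ▸ hr', fun t ht ↦ ?_, ?_⟩
    · exact (recut_congr (hlead.2 hr t ht)).trans (congrFun (h.recut_eq_self hT.1) t)
    · simp only [pairCount, h.mem_large_and_mem_succ_iff hT.1 (h.isCut.lt_right_of_isFirstPos hr),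
        h'.mem_large_and_mem_succ_iff hT'.1 (hrefl.isCut.lt_right_of_isFirstPos hr')]
      simp only [mem_recut_of_ne (show a + 1 + 1 ≠ a by omega) (show a + 1 + 1 ≠ a + 1 by omega)]

theorem exists_nonneg_surplus (hS : IsSkewShape lam mu R C) (hT : IsSVRPP lam mu T) (a : ℕ) :
    ∃ t, 0 ≤ surplus C T t a := by
  obtain ⟨F, c, h⟩ := exists_separates hS hT a
  exact ⟨0, (congrFun (h.surplus_eq hS hT) 0).symm ▸ h.isCut.height_zero_nonneg⟩

theorem exists_toggle (hS : IsSkewShape lam mu R C) (ha : 1 ≤ a) (han : a < n) (hz : 0 ≤ z) :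
    ∃ τ : (ℕ → ℕ → Finset ℕ) → ℕ → ℕ → Finset ℕ, ∀ T, IsSVRPPn lam mu n T →
      (∃ t, z ≤ surplus C T t a) → τ (τ T) = T ∧ IsToggle lam mu n R C a z T (τ T) := by
  choose σ hσ using fun F : Frame R ↦ F.exists_isReflection hz
  choose F c hsep using fun (T) (hT : IsSVRPP lam mu T) ↦ exists_separates hS hT a
  have hdef : ∃ τ : (ℕ → ℕ → Finset ℕ) → ℕ → ℕ → Finset ℕ, ∀ T (hT : IsSVRPP lam mu T),
      τ T = recut T a (F T hT) (σ (F T hT) (c T hT)) :=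
    ⟨fun T ↦ if hT : IsSVRPP lam mu T then recut T a (F T hT) (σ (F T hT) (c T hT)) else T,
      fun T hT ↦ dif_pos hT⟩
  obtain ⟨τ, hτ⟩ := hdef
  refine ⟨τ, fun T hT hz' ↦ ?_⟩
  have h := hsep T hT.1
  have hmax : z ≤ (F T hT.1).maxHeight (c T hT.1) := by
    rw [h.isCut.le_maxHeight_iff]
    simpa only [← congrFun (h.surplus_eq hS hT.1)] using hz'
  obtain ⟨hrefl, hinv⟩ := hσ _ _ h.isCut hmax
  have htog := h.isToggle_recut hS hT hrefl ha han
  rw [← hτ T hT.1] at htog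
  have hsep' := h.separates_recut hT.1 hrefl.isCut
  rw [← hτ T hT.1] at hsep'
  obtain ⟨hF, hc⟩ := (hsep _ htog.isSVRPPn.1).unique hsep'
  exact ⟨by rw [hτ _ htog.isSVRPPn.1, hF, hc, hinv, hτ T hT.1, recut_recut, h.recut_eq_self hT.1],
    htog⟩

end Toggle

/-! ### The statistics of a tableau -/

section Statistics

variable {lam mu : ℕ → ℕ} {R C n : ℕ} {T : ℕ → ℕ → Finset ℕ}

theorem mem_bounds (hS : IsSkewShape lam mu R C) (hT : IsSVRPPn lam mu n T) {r j x : ℕ}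
    (hx : x ∈ T r j) : r < R ∧ j < C ∧ 1 ≤ x ∧ x ≤ n := by
  have hj := (mem_shape hT.1 hx).2
  have := hS.lam_le r
  refine ⟨?_, by omega, Finset.mem_Icc.1 (hT.2 r j hx)⟩
  by_contra! h
  have := hS.lam_eq_zero r h
  omega

theorem le_of_mem_row (hT : IsSVRPP lam mu T) {r j j' x y : ℕ} (hj : j < j') (hx : x ∈ T r j)
    (hy : y ∈ T r j') : x ≤ y := by
  induction j', hj using Nat.le_induction generalizing y with
  | base => exact row_finsetLE hT (mem_shape hT hx).1 (mem_shape hT hy).2 x hx y hy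
  | succ k hk ih =>
    have hmu := (mem_shape hT hx).1
    have hlam := (mem_shape hT hy).2
    obtain ⟨z, hz⟩ := hT.2.1 r k ⟨by omega, by omega⟩
    exact (ih hz).trans (row_finsetLE hT (by omega) hlam z hz y hy)

theorem inShape_of_mem_col (hS : IsSkewShape lam mu R C) (hT : IsSVRPP lam mu T)
    {r t r' j x y : ℕ} (hrt : r ≤ t) (htr : t ≤ r') (hx : x ∈ T r j) (hy : y ∈ T r' j) :
    InShape lam mu t j :=
  ⟨(antitone_nat_of_succ_le hS.mu_succ_le hrt).trans (mem_shape hT hx).1,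
    (mem_shape hT hy).2.trans_le (antitone_nat_of_succ_le hS.lam_succ_le htr)⟩

theorem le_of_mem_col (hS : IsSkewShape lam mu R C) (hT : IsSVRPP lam mu T) {r r' j x y : ℕ}
    (hr : r < r') (hx : x ∈ T r j) (hy : y ∈ T r' j) : x ≤ y := by
  induction r', hr using Nat.le_induction generalizing y with
  | base => exact hT.2.2.2.2 r j (mem_shape hT hx) (mem_shape hT hy) x hx y hy
  | succ k hk ih =>
    have hkj : InShape lam mu k j := inShape_of_mem_col hS hT (by omega) (by omega) hx hy
    obtain ⟨z, hz⟩ := hT.2.1 k j hkj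
    exact (ih hz).trans (hT.2.2.2.2 k j hkj (mem_shape hT hy) z hz y hy)

theorem mem_of_mem_col (hS : IsSkewShape lam mu R C) (hT : IsSVRPP lam mu T) {r t r' j v : ℕ}
    (hrt : r ≤ t) (htr : t ≤ r') (hv : v ∈ T r j) (hv' : v ∈ T r' j) : v ∈ T t j := by
  rcases hrt.eq_or_lt with rfl | hrt'
  · exact hv
  rcases htr.eq_or_lt with rfl | htr'
  · exact hv'
  obtain ⟨z, hz⟩ := hT.2.1 t j (inShape_of_mem_col hS hT hrt htr hv hv')
  rwa [le_antisymm (le_of_mem_col hS hT hrt' hv hz) (le_of_mem_col hS hT htr' hz hv')]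

theorem ircont_eq_sum_newCount (hS : IsSkewShape lam mu R C) (hT : IsSVRPPn lam mu n T) (v : ℕ) :
    ircont T v = ∑ r ∈ Finset.range R, newCount C T r v := by
  have hset : {j : ℕ | ∃ i, v ∈ T i j} = ((Finset.range R).biUnion fun r ↦
      {j ∈ Finset.range C | v ∈ T r j ∧ (r = 0 ∨ v ∉ T (r - 1) j)} : Finset ℕ) := by
    ext j
    simp only [Set.mem_ofPred_eq, Finset.mem_coe, Finset.mem_biUnion, Finset.mem_filter,
      Finset.mem_range]
    refine ⟨fun h ↦ ?_, fun ⟨i, _, _, hv, _⟩ ↦ ⟨i, hv⟩⟩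
    have hfind := Nat.find_spec h
    obtain ⟨hR, hC, -⟩ := mem_bounds hS hT hfind
    refine ⟨Nat.find h, hR, hC, hfind, or_iff_not_imp_left.2 fun h0 ↦ Nat.find_min h ?_⟩
    omega
  have hdisj {r r' j : ℕ} (hr : r < r') (hv : v ∈ T r j) (hv' : v ∈ T r' j) :
      ¬ (r' = 0 ∨ v ∉ T (r' - 1) j) := fun h ↦
    h.elim (by omega) fun h ↦ h (mem_of_mem_col hS hT.1 (by omega) (by omega) hv hv')
  rw [ircont, hset, Set.ncard_coe_finset, Finset.card_biUnion]
  · rfl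
  · intro r _ r' _ hne
    rw [Function.onFun, Finset.disjoint_left]
    intro j hj hj'
    rw [Finset.mem_filter] at hj hj'
    rcases lt_or_gt_of_ne hne with hr | hr
    · exact hdisj hr hj.2.1 hj'.2.1 hj'.2.2
    · exact hdisj hr hj'.2.1 hj.2.1 hj.2.2

theorem ceq_eq_sum_card (hS : IsSkewShape lam mu R C) (hT : IsSVRPPn lam mu n T) (r : ℕ) :
    ceq lam mu T r =
      ∑ v ∈ Finset.Icc 1 n, {j ∈ Finset.range C | v ∈ T (r + 1) j ∧ v ∈ T r j}.card := by
  have hset : {j : ℕ | InShape lam mu r j ∧ InShape lam mu (r + 1) j ∧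
      ∃ m, m ∈ T r j ∧ (∀ x ∈ T r j, x ≤ m) ∧ m ∈ T (r + 1) j ∧ ∀ x ∈ T (r + 1) j, m ≤ x} =
      ((Finset.Icc 1 n).biUnion fun v ↦
        {j ∈ Finset.range C | v ∈ T (r + 1) j ∧ v ∈ T r j} : Finset ℕ) := by
    ext j
    simp only [Set.mem_ofPred_eq, Finset.mem_coe, Finset.mem_biUnion, Finset.mem_filter,
      Finset.mem_range, Finset.mem_Icc]
    constructor
    · rintro ⟨-, -, m, hm, -, hm', -⟩
      obtain ⟨-, hC, hn⟩ := mem_bounds hS hT hm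
      exact ⟨m, hn, hC, hm', hm⟩
    · rintro ⟨m, -, -, hm', hm⟩
      exact ⟨mem_shape hT.1 hm, mem_shape hT.1 hm', m, hm,
        fun x hx ↦ le_of_mem_col hS hT.1 r.lt_succ_self hx hm', hm',
        fun x hx ↦ le_of_mem_col hS hT.1 r.lt_succ_self hm hx⟩
  rw [ceq, hset, Set.ncard_coe_finset, Finset.card_biUnion]
  intro v _ v' _ hne
  rw [Function.onFun, Finset.disjoint_left]
  intro j hj hj'
  rw [Finset.mem_filter] at hj hj'
  exact hne (le_antisymm (le_of_mem_col hS hT.1 r.lt_succ_self hj.2.2 hj'.2.1)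
    (le_of_mem_col hS hT.1 r.lt_succ_self hj'.2.2 hj.2.1))

theorem ceq_add_sum_newCount (hS : IsSkewShape lam mu R C) (hT : IsSVRPPn lam mu n T) (r : ℕ) :
    ceq lam mu T r + ∑ v ∈ Finset.Icc 1 n, newCount C T (r + 1) v =
      ∑ v ∈ Finset.Icc 1 n, rowCount C T (r + 1) v := by
  rw [ceq_eq_sum_card hS hT, ← Finset.sum_add_distrib]
  refine Finset.sum_congr rfl fun v _ ↦ ?_
  simp only [newCount, rowCount, Nat.add_sub_cancel, r.add_one_ne_zero, false_or,
    ← Finset.filter_filter]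
  exact Finset.card_filter_add_card_filter_not _

theorem exv_add_sub (hS : IsSkewShape lam mu R C) (hT : IsSVRPPn lam mu n T) (r : ℕ) :
    exv lam mu T r + (lam r - mu r) = ∑ v ∈ Finset.Icc 1 n, rowCount C T r v :=
  calc exv lam mu T r + (lam r - mu r)
    _ = ∑ j ∈ Finset.Ico (mu r) (lam r), (T r j).card := by
      rw [exv, ← Nat.card_Ico, Finset.card_eq_sum_ones, ← Finset.sum_add_distrib]
      exact Finset.sum_congr rfl fun j hj ↦
        Nat.sub_add_cancel (hT.1.2.1 r j (Finset.mem_Ico.1 hj)).card_pos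
    _ = ∑ j ∈ Finset.range C, (T r j).card := by
      refine Finset.sum_subset (fun j hj ↦ ?_) fun j _ hj ↦ ?_
      · exact Finset.mem_range.2 ((Finset.mem_Ico.1 hj).2.trans_le (hS.lam_le r))
      · rw [hT.1.1 r j fun h ↦ hj (Finset.mem_Ico.2 h), Finset.card_empty]
    _ = ∑ j ∈ Finset.range C, {v ∈ Finset.Icc 1 n | v ∈ T r j}.card :=
      Finset.sum_congr rfl fun j _ ↦ by
        rw [Finset.filter_mem_eq_inter, Finset.inter_eq_right.2 (hT.2 r j)]
    _ = ∑ v ∈ Finset.Icc 1 n, rowCount C T r v := by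
      simp only [rowCount, Finset.card_filter]
      exact Finset.sum_comm

theorem newCount_eq_zero (hS : IsSkewShape lam mu R C) (hT : IsSVRPPn lam mu n T) {r : ℕ}
    (hr : R ≤ r) (v : ℕ) : newCount C T r v = 0 := by
  refine Finset.card_eq_zero.2 (Finset.filter_eq_empty_iff.2 fun j _ h ↦ ?_)
  exact ((mem_bounds hS hT h.1).1.trans_le hr).false

theorem pairCount_eq_zero (hS : IsSkewShape lam mu R C) (hT : IsSVRPPn lam mu n T) {r v : ℕ}
    (h : R ≤ r ∨ n ≤ v) : pairCount C T r v = 0 := by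
  refine Finset.card_eq_zero.2 (Finset.filter_eq_empty_iff.2 fun j _ hj ↦ ?_)
  have := mem_bounds hS hT hj.2
  omega

theorem surplus_of_le (hS : IsSkewShape lam mu R C) (hT : IsSVRPPn lam mu n T) {r : ℕ}
    (hr : R ≤ r) (a : ℕ) : surplus C T r a = (ircont T (a + 1) : ℤ) - ircont T a := by
  have hsum : ∑ t ∈ Finset.range R, ((newCount C T t (a + 1) : ℤ) - newCount C T t a) =
      ∑ t ∈ Finset.range r, ((newCount C T t (a + 1) : ℤ) - newCount C T t a) := by
    refine Finset.sum_subset (Finset.range_mono hr) fun t _ ht ↦ ?_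
    have ht : R ≤ t := by simpa using ht
    simp [newCount_eq_zero hS hT ht]
  rw [surplus, newCount_eq_zero hS hT hr, pairCount_eq_zero hS hT (.inl hr), ← hsum,
    ircont_eq_sum_newCount hS hT, ircont_eq_sum_newCount hS hT, Finset.sum_sub_distrib]
  push_cast
  ring

end Statistics

theorem sum_eq_sum_of_pair {ι M : Type*} [AddCommMonoid M] {s : Finset ι} {a b : ι} (ha : a ∈ s)
    (hb : b ∈ s) (hab : a ≠ b) {f g : ι → M} (h : ∀ i, i ≠ a → i ≠ b → f i = g i)
    (hpair : f a + f b = g a + g b) : ∑ i ∈ s, f i = ∑ i ∈ s, g i := by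
  have hb : b ∈ s.erase a := Finset.mem_erase.2 ⟨hab.symm, hb⟩
  simp only [← Finset.add_sum_erase _ _ ha, ← Finset.add_sum_erase _ _ hb, ← add_assoc, hpair]
  refine congrArg _ (Finset.sum_congr rfl fun i hi ↦ ?_)
  simp only [Finset.mem_erase] at hi
  exact h i hi.2.1 hi.1

namespace IsToggle

variable {lam mu : ℕ → ℕ} {R C n a : ℕ} {z : ℤ} {T T' : ℕ → ℕ → Finset ℕ}

theorem newCount_of_ne (h : IsToggle lam mu n R C a z T T') (r : ℕ) {v : ℕ} (hv : v ≠ a)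
    (hv' : v ≠ a + 1) : newCount C T' r v = newCount C T r v := by
  simp only [newCount, h.mem_iff _ _ v hv hv']

theorem rowCount_of_ne (h : IsToggle lam mu n R C a z T T') (r : ℕ) {v : ℕ} (hv : v ≠ a)
    (hv' : v ≠ a + 1) : rowCount C T' r v = rowCount C T r v := by
  simp only [rowCount, h.mem_iff _ _ v hv hv']

theorem sum_newCount (h : IsToggle lam mu n R C a z T T') (ha : 1 ≤ a) (han : a < n) (r : ℕ) :
    ∑ v ∈ Finset.Icc 1 n, newCount C T' r v = ∑ v ∈ Finset.Icc 1 n, newCount C T r v :=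
  sum_eq_sum_of_pair (Finset.mem_Icc.2 ⟨ha, han.le⟩) (Finset.mem_Icc.2 ⟨by omega, han⟩)
    a.lt_succ_self.ne (fun _ ↦ h.newCount_of_ne r) (h.newCount_add r)

theorem sum_rowCount (h : IsToggle lam mu n R C a z T T') (ha : 1 ≤ a) (han : a < n) (r : ℕ) :
    ∑ v ∈ Finset.Icc 1 n, rowCount C T' r v = ∑ v ∈ Finset.Icc 1 n, rowCount C T r v :=
  sum_eq_sum_of_pair (Finset.mem_Icc.2 ⟨ha, han.le⟩) (Finset.mem_Icc.2 ⟨by omega, han⟩)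
    a.lt_succ_self.ne (fun _ ↦ h.rowCount_of_ne r) (h.rowCount_add r)

theorem exv_eq (hS : IsSkewShape lam mu R C) (hT : IsSVRPPn lam mu n T)
    (h : IsToggle lam mu n R C a z T T') (ha : 1 ≤ a) (han : a < n) :
    exv lam mu T' = exv lam mu T := by
  funext r
  have := exv_add_sub hS hT r
  have := exv_add_sub hS h.isSVRPPn r
  have := h.sum_rowCount ha han r
  omega

theorem ceq_eq (hS : IsSkewShape lam mu R C) (hT : IsSVRPPn lam mu n T)
    (h : IsToggle lam mu n R C a z T T') (ha : 1 ≤ a) (han : a < n) :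
    ceq lam mu T' = ceq lam mu T := by
  funext r
  have := ceq_add_sum_newCount hS hT r
  have := ceq_add_sum_newCount hS h.isSVRPPn r
  have := h.sum_rowCount ha han (r + 1)
  have := h.sum_newCount ha han (r + 1)
  omega

theorem ircont_of_ne (hS : IsSkewShape lam mu R C) (hT : IsSVRPPn lam mu n T)
    (h : IsToggle lam mu n R C a z T T') {v : ℕ} (hv : v ≠ a) (hv' : v ≠ a + 1) :
    ircont T' v = ircont T v := by
  rw [ircont_eq_sum_newCount hS hT, ircont_eq_sum_newCount hS h.isSVRPPn]
  exact Finset.sum_congr rfl fun r _ ↦ h.newCount_of_ne r hv hv'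

theorem ircont_pair (hS : IsSkewShape lam mu R C) (hT : IsSVRPPn lam mu n T)
    (h : IsToggle lam mu n R C a z T T') :
    (ircont T' a : ℤ) = ircont T (a + 1) - z ∧ (ircont T' (a + 1) : ℤ) = ircont T a + z := by
  have hlast := h.surplus_last
  rw [surplus_of_le hS hT le_rfl, surplus_of_le hS h.isSVRPPn le_rfl] at hlast
  have hadd : ircont T' a + ircont T' (a + 1) = ircont T a + ircont T (a + 1) := by
    simp only [ircont_eq_sum_newCount hS hT, ircont_eq_sum_newCount hS h.isSVRPPn,
      ← Finset.sum_add_distrib]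
    exact Finset.sum_congr rfl fun r _ ↦ h.newCount_add r
  omega

end IsToggle

/-! ### Cancelling the tableaux with a positive surplus -/

/-- No letter `v + 1` ever gets ahead of `v` when the reading word is read backwards. -/
def IsBalanced (C : ℕ) (T : ℕ → ℕ → Finset ℕ) : Prop :=
  ∀ v r, 1 ≤ v → surplus C T r v ≤ 0

/-- Row `r` is the first row with a positive surplus, and `a` is the largest letter with a positive
surplus in row `r`. -/
structure IsLead (C : ℕ) (T : ℕ → ℕ → Finset ℕ) (r a : ℕ) : Prop where
  one_le : 1 ≤ a
  pos : 0 < surplus C T r a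
  nonpos_above : ∀ v t, 1 ≤ v → t < r → surplus C T t v ≤ 0
  nonpos_of_lt : ∀ v, a < v → surplus C T r v ≤ 0

section Lead

variable {lam mu : ℕ → ℕ} {R C n : ℕ} {T T' : ℕ → ℕ → Finset ℕ} {r a : ℕ}

theorem IsLead.isFirstPos (h : IsLead C T r a) : IsFirstPos (fun t ↦ surplus C T t a) r :=
  ⟨h.pos, fun t ht ↦ h.nonpos_above a t h.one_le ht⟩

theorem IsLead.not_isBalanced (h : IsLead C T r a) : ¬ IsBalanced C T :=
  fun hbal ↦ (hbal a r h.one_le).not_gt h.pos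

theorem IsLead.le {r' a' : ℕ} (h : IsLead C T r a) (h' : IsLead C T r' a') : r ≤ r' :=
  le_of_not_gt fun hlt ↦ (h.nonpos_above a' r' h'.one_le hlt).not_gt h'.pos

theorem IsLead.unique {r' a' : ℕ} (h : IsLead C T r a) (h' : IsLead C T r' a') : a = a' := by
  obtain rfl : r = r' := le_antisymm (h.le h') (h'.le h)
  exact le_antisymm (le_of_not_gt fun hlt ↦ (h'.nonpos_of_lt a hlt).not_gt h.pos)
    (le_of_not_gt fun hlt ↦ (h.nonpos_of_lt a' hlt).not_gt h'.pos)

theorem surplus_nonpos_of_le (hS : IsSkewShape lam mu R C) (hT : IsSVRPPn lam mu n T) {v : ℕ}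
    (hv : n ≤ v) (r : ℕ) : surplus C T r v ≤ 0 := by
  have hnew (t : ℕ) : newCount C T t (v + 1) = 0 := by
    refine Finset.card_eq_zero.2 (Finset.filter_eq_empty_iff.2 fun j _ h ↦ ?_)
    have := mem_bounds hS hT h.1
    omega
  simp only [surplus, hnew, pairCount_eq_zero hS hT (.inr hv), Finset.sum_sub_distrib]
  simpa using Finset.sum_nonneg fun t _ ↦ Int.natCast_nonneg (newCount C T t v)

theorem IsLead.lt (hS : IsSkewShape lam mu R C) (hT : IsSVRPPn lam mu n T)
    (h : IsLead C T r a) : a < n :=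
  lt_of_not_ge fun hle ↦ (surplus_nonpos_of_le hS hT hle r).not_gt h.pos

theorem exists_isLead (hS : IsSkewShape lam mu R C) (hT : IsSVRPPn lam mu n T)
    (hbal : ¬ IsBalanced C T) : ∃ r a, IsLead C T r a := by
  have hex : ∃ r v, 1 ≤ v ∧ 0 < surplus C T r v := by
    simp only [IsBalanced, not_forall, not_le] at hbal
    obtain ⟨v, r, hv, hpos⟩ := hbal
    exact ⟨r, v, hv, hpos⟩
  obtain ⟨v, hv, hpos⟩ := Nat.find_spec hex
  have hmin := fun m ↦ Nat.find_min hex (m := m)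
  generalize Nat.find hex = r at *
  have hlt {w : ℕ} (hw : 0 < surplus C T r w) : w ≤ n :=
    le_of_not_gt fun hnw ↦ (surplus_nonpos_of_le hS hT hnw.le r).not_gt hw
  have hspec : 1 ≤ Nat.findGreatest (fun w ↦ 1 ≤ w ∧ 0 < surplus C T r w) n ∧
      0 < surplus C T r (Nat.findGreatest (fun w ↦ 1 ≤ w ∧ 0 < surplus C T r w) n) :=
    Nat.findGreatest_spec (P := fun w ↦ 1 ≤ w ∧ 0 < surplus C T r w) (hlt hpos) ⟨hv, hpos⟩
  refine ⟨r, _, hspec.1, hspec.2, fun w t hw ht ↦ ?_, fun w hw ↦ ?_⟩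
  · by_contra! h
    exact hmin t ht ⟨w, hw, h⟩
  · by_contra! h
    exact Nat.findGreatest_is_greatest hw (hlt h) ⟨hspec.1.trans hw.le, h⟩

theorem newCount_congr (h : ∀ t ≤ r, T' t = T t) (v : ℕ) :
    newCount C T' r v = newCount C T r v := by
  simp only [newCount, h r le_rfl, h (r - 1) (r.sub_le 1)]

theorem surplus_congr {v : ℕ} (hrow : ∀ t < r, T' t = T t)
    (hnew : newCount C T' r (v + 1) = newCount C T r (v + 1))
    (hpair : pairCount C T' r v = pairCount C T r v) : surplus C T' r v = surplus C T r v := by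
  rw [surplus, surplus, hnew, hpair]
  congr 2
  refine Finset.sum_congr rfl fun t ht ↦ ?_
  have hrow' : ∀ u ≤ t, T' u = T u := fun u hu ↦ hrow u (hu.trans_lt (Finset.mem_range.1 ht))
  rw [newCount_congr hrow', newCount_congr hrow']

theorem IsLead.of_isToggle (h : IsLead C T r a) (htog : IsToggle lam mu n R C a 1 T T') :
    IsLead C T' r a := by
  obtain ⟨hpos, hrow, hpair⟩ := htog.sameLead one_pos r h.isFirstPos
  refine ⟨h.one_le, hpos.1, fun v t hv ht ↦ ?_, fun v hv ↦ ?_⟩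
  · rw [surplus_congr (fun u hu ↦ hrow u (hu.trans ht))
      (newCount_congr (fun u hu ↦ hrow u (hu.trans_lt ht)) _)
      (by simp only [pairCount, hrow t ht])]
    exact h.nonpos_above v t hv ht
  · rw [surplus_congr hrow (htog.newCount_of_ne r (by omega) (by omega))]
    · exact h.nonpos_of_lt v hv
    · rcases eq_or_ne v (a + 1) with rfl | hne
      · exact hpair
      · simp only [pairCount, htog.mem_iff _ _ v hv.ne' hne,
          htog.mem_iff _ _ (v + 1) (by omega) (by omega)]

theorem exists_cancellation (hS : IsSkewShape lam mu R C) (n : ℕ) :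
    ∃ (ψ : (ℕ → ℕ → Finset ℕ) → ℕ → ℕ → Finset ℕ) (letter : (ℕ → ℕ → Finset ℕ) → ℕ),
      ∀ T, IsSVRPPn lam mu n T → ¬ IsBalanced C T → ¬ IsBalanced C (ψ T) ∧ ψ (ψ T) = T ∧
        1 ≤ letter T ∧ letter T < n ∧ IsToggle lam mu n R C (letter T) 1 T (ψ T) := by
  choose! τ hτ using fun (a) (ha : 1 ≤ a) (han : a < n) ↦ exists_toggle hS ha han zero_le_one
  choose! row letter hlead using
    fun T (hT : IsSVRPPn lam mu n T) (hbal : ¬ IsBalanced C T) ↦ exists_isLead hS hT hbal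
  refine ⟨fun T ↦ τ (letter T) T, letter, fun T hT hbal ↦ ?_⟩
  have h := hlead T hT hbal
  obtain ⟨hinv, htog⟩ := hτ _ h.one_le (h.lt hS hT) T hT ⟨_, h.pos⟩
  have h' := h.of_isToggle htog
  have hletter : letter (τ (letter T) T) = letter T :=
    (hlead _ htog.isSVRPPn h'.not_isBalanced).unique h'
  exact ⟨h'.not_isBalanced, by simp only [hletter, hinv], h.one_le, h.lt hS hT, htog⟩

end Lead

/-! ### The reading word -/

section Lists

theorem count_filterMap_range (f : ℕ → Option ℕ) (v : ℕ) (p : ℕ → Prop) [DecidablePred p]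
    (h : ∀ j, f j = some v ↔ p j) (C : ℕ) :
    ((List.range C).filterMap f).count v = {j ∈ Finset.range C | p j}.card := by
  induction C with
  | zero => simp
  | succ C ih =>
    rw [List.range_succ, List.filterMap_append, List.count_append, ih, Finset.range_add_one,
      Finset.filter_insert]
    by_cases hp : p C
    · rw [if_pos hp, Finset.card_insert_of_notMem (by simp)]
      simp [(h C).2 hp]
    · have hne : f C ≠ some v := fun hf ↦ hp ((h C).1 hf)
      rw [if_neg hp]
      cases hf : f C with
      | none => simp [hf]
      | some w => simp [hf, show w ≠ v from fun hw ↦ hne (hw ▸ hf)]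

theorem count_flatMap_reverse_range (f : ℕ → List ℕ) (v : ℕ) (p : ℕ → Prop) [DecidablePred p]
    (h : ∀ j, (f j).count v = if p j then 1 else 0) (C : ℕ) :
    ((List.range C).reverse.flatMap f).count v = {j ∈ Finset.range C | p j}.card := by
  simp only [List.count_flatMap, List.map_reverse, List.sum_reverse, Finset.card_filter, h,
    Function.comp_def]
  exact (Multiset.sum_coe _).symm

theorem mem_tail_sort {A : Finset ℕ} {x : ℕ} :
    x ∈ (A.sort (· ≤ ·)).tail ↔ x ∈ A ∧ ∃ m ∈ A, m < x := by
  have hmem (y : ℕ) : y ∈ A ↔ y ∈ A.sort (· ≤ ·) := (Finset.mem_sort (· ≤ ·)).symm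
  have hlt := (Finset.sortedLT_sort A).pairwise
  simp only [hmem]
  generalize A.sort (· ≤ ·) = l at hlt
  cases l with
  | nil => simp
  | cons m l =>
    rw [List.pairwise_cons] at hlt
    simp only [List.tail_cons, List.mem_cons]
    refine ⟨fun h ↦ ⟨.inr h, m, .inl rfl, hlt.1 x h⟩, ?_⟩
    rintro ⟨rfl | h, m', rfl | hm', hlt'⟩
    · exact (lt_irrefl _ hlt').elim
    · exact (lt_asymm hlt' (hlt.1 m' hm')).elim
    all_goals exact h

theorem pairwise_tail_sort_reverse (A : Finset ℕ) :
    (A.sort (· ≤ ·)).tail.reverse.Pairwise (· > ·) :=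
  List.pairwise_reverse.2 (Finset.sortedLT_sort A).pairwise.tail

theorem isSuffix_append_cases {A B s : List ℕ} (h : s <:+ A ++ B) :
    s <:+ B ∨ ∃ s', s' <:+ A ∧ s = s' ++ B := by
  obtain ⟨u, hu⟩ := h
  rcases List.append_eq_append_iff.1 hu with ⟨s', hA, hs⟩ | ⟨u', -, hB⟩
  · exact .inr ⟨s', ⟨u, hA.symm⟩, hs⟩
  · exact .inl ⟨u', hB.symm⟩

theorem exists_isSuffix_count_succ_eq {l : List ℕ} (hl : l.Pairwise (· ≤ ·)) (a : ℕ) :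
    ∃ s, s <:+ l ∧ s.count (a + 1) = l.count (a + 1) ∧ s.count a = 0 := by
  induction l with
  | nil => exact ⟨[], List.suffix_refl _, rfl, rfl⟩
  | cons x l ih =>
    rw [List.pairwise_cons] at hl
    by_cases hx : x ≤ a
    · obtain ⟨s, hs, hsucc, hzero⟩ := ih hl.2
      exact ⟨s, hs.trans (List.suffix_cons _ _),
        by rw [hsucc, List.count_cons_of_ne (by omega)], hzero⟩
    · refine ⟨x :: l, List.suffix_refl _, rfl, List.count_eq_zero.2 fun hmem ↦ ?_⟩
      rcases List.mem_cons.1 hmem with rfl | hmem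
      · exact hx le_rfl
      · exact hx (hl.1 a hmem)

theorem isReverseLatticeWord_iff_forall_isSuffix {w : List ℕ} :
    IsReverseLatticeWord w ↔ ∀ s, s <:+ w → ∀ a, 1 ≤ a → s.count (a + 1) ≤ s.count a := by
  constructor
  · intro h s hs a ha
    rw [List.suffix_iff_eq_drop.1 hs]
    exact h _ a (a + 1) ha a.lt_succ_self
  · intro h k a b ha hab
    induction b, hab using Nat.le_induction with
    | base => exact h _ (List.drop_suffix _ _) a ha
    | succ b hb ih => exact (h _ (List.drop_suffix _ _) b (by omega)).trans ih

end Lists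

section Rows

variable (C : ℕ) (T : ℕ → ℕ → Finset ℕ) (r : ℕ)

/-- The first part of the reading of row `r`: its non-pivot entries, from right to left. -/
noncomputable def nonPivots : List ℕ :=
  ((List.range C).reverse).flatMap fun j ↦ ((T r j).sort (· ≤ ·)).tail.reverse

/-- The pivot of the box `(r, j)`, or `none` if the box is empty or its pivot is not read. -/
noncomputable def pivot? (j : ℕ) : Option ℕ :=
  if h : (T r j).Nonempty then
    if r ≠ 0 ∧ (T r j).min' h ∈ T (r - 1) j ∧ ∀ x ∈ T (r - 1) j, x ≤ (T r j).min' h then none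
    else some ((T r j).min' h)
  else none

/-- The second part of the reading of row `r`: the pivots that are read, from left to right. -/
noncomputable def pivots : List ℕ :=
  (List.range C).filterMap (pivot? T r)

/-- The number of boxes of row `r` that contain `v` as a non-pivot. -/
noncomputable def nonPivotCount (v : ℕ) : ℕ :=
  {j ∈ Finset.range C | v ∈ T r j ∧ ∃ m ∈ T r j, m < v}.card

theorem rowRead_eq : rowRead C T r = nonPivots C T r ++ pivots C T r := rfl

theorem readWord_succ : readWord (r + 1) C T = rowRead C T r ++ readWord r C T := by
  simp [readWord, List.range_succ]

theorem count_nonPivots (v : ℕ) : (nonPivots C T r).count v = nonPivotCount C T r v := by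
  refine count_flatMap_reverse_range _ v _ (fun j ↦ ?_) C
  have hnodup : ((T r j).sort (· ≤ ·)).tail.reverse.Nodup :=
    (pairwise_tail_sort_reverse (T r j)).imp fun h ↦ ne_of_gt h
  rw [hnodup.count]
  exact if_congr (List.mem_reverse.trans mem_tail_sort) rfl rfl

theorem pairCount_le_nonPivotCount (a : ℕ) : pairCount C T r a ≤ nonPivotCount C T r (a + 1) :=
  Finset.card_le_card <| Finset.monotone_filter_right _ fun _ _ h ↦ ⟨h.2, a, h.1, a.lt_succ_self⟩

variable {C T r}

theorem readWord_isSuffix {R : ℕ} (h : r ≤ R) : readWord r C T <:+ readWord R C T := by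
  induction R, h using Nat.le_induction with
  | base => exact List.suffix_refl _
  | succ k _ ih => exact readWord_succ C T k ▸ ih.trans (List.suffix_append _ _)

theorem isSuffix_readWord_cases {R : ℕ} {s : List ℕ} (h : s <:+ readWord R C T) :
    s = [] ∨ ∃ r s', s' <:+ rowRead C T r ∧ s = s' ++ readWord r C T := by
  induction R with
  | zero => exact .inl (List.suffix_nil.1 h)
  | succ R ih =>
    rw [readWord_succ] at h
    rcases isSuffix_append_cases h with h | h
    · exact ih h
    · exact .inr ⟨R, h⟩

end Rows

section Lattice

variable {lam mu : ℕ → ℕ} {R C n : ℕ} {T : ℕ → ℕ → Finset ℕ}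

theorem pairwise_nonPivots (hT : IsSVRPP lam mu T) (r : ℕ) :
    (nonPivots C T r).Pairwise (· > ·) := by
  refine List.pairwise_flatMap.2 ⟨fun j _ ↦ pairwise_tail_sort_reverse _, ?_⟩
  refine List.pairwise_reverse.2 (List.pairwise_lt_range.imp fun hj x hx y hy ↦ ?_)
  rw [List.mem_reverse, mem_tail_sort] at hx hy
  obtain ⟨-, m, hm, hlt⟩ := hx
  exact (le_of_mem_row hT hj hy.1 hm).trans_lt hlt

theorem pivot?_eq_some_iff (hS : IsSkewShape lam mu R C) (hT : IsSVRPP lam mu T) {r j v : ℕ} :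
    pivot? T r j = some v ↔
      (v ∈ T r j ∧ (r = 0 ∨ v ∉ T (r - 1) j)) ∧ ¬ ∃ m ∈ T r j, m < v := by
  unfold pivot?
  split_ifs with hne homit
  · obtain ⟨hr, hmem, -⟩ := homit
    refine iff_of_false (by simp) fun ⟨⟨hv, hnew⟩, hmin⟩ ↦ ?_
    obtain rfl : (T r j).min' hne = v := le_antisymm ((T r j).min'_le v hv)
      (le_of_not_gt fun hlt ↦ hmin ⟨_, (T r j).min'_mem hne, hlt⟩)
    exact hnew.elim hr fun h ↦ h hmem
  · have hmem := (T r j).min'_mem hne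
    rw [Option.some_inj]
    constructor
    · rintro rfl
      refine ⟨⟨hmem, or_iff_not_imp_left.2 fun hr habove ↦ homit ⟨hr, habove, fun x hx ↦ ?_⟩⟩,
        fun ⟨m, hm, hlt⟩ ↦ ((T r j).min'_le m hm).not_gt hlt⟩
      exact le_of_mem_col hS hT (by omega) hx hmem
    · rintro ⟨⟨hv, -⟩, hmin⟩
      exact le_antisymm ((T r j).min'_le v hv) (le_of_not_gt fun hlt ↦ hmin ⟨_, hmem, hlt⟩)
  · exact iff_of_false (by simp) fun ⟨⟨hv, _⟩, _⟩ ↦ hne ⟨v, hv⟩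

theorem pairwise_pivots (hS : IsSkewShape lam mu R C) (hT : IsSVRPP lam mu T) (r : ℕ) :
    (pivots C T r).Pairwise (· ≤ ·) := by
  refine List.pairwise_filterMap.2 (List.pairwise_lt_range.imp fun hj x hx y hy ↦ ?_)
  exact le_of_mem_row hT hj ((pivot?_eq_some_iff hS hT).1 hx).1.1
    ((pivot?_eq_some_iff hS hT).1 hy).1.1

theorem nonPivotCount_add_count_pivots (hS : IsSkewShape lam mu R C) (hT : IsSVRPP lam mu T)
    (r v : ℕ) : nonPivotCount C T r v + (pivots C T r).count v = newCount C T r v := by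
  rw [pivots, count_filterMap_range _ v _ fun j ↦ pivot?_eq_some_iff hS hT, newCount,
    nonPivotCount, ← Finset.card_filter_add_card_filter_not
      (s := {j ∈ Finset.range C | v ∈ T r j ∧ (r = 0 ∨ v ∉ T (r - 1) j)})
      fun j ↦ ∃ m ∈ T r j, m < v, Finset.filter_filter, Finset.filter_filter]
  congr 2
  refine Finset.filter_congr fun j _ ↦
    ⟨fun ⟨hv, m, hm, hlt⟩ ↦ ⟨⟨hv, ?_⟩, m, hm, hlt⟩, fun h ↦ ⟨h.1.1, h.2⟩⟩
  exact or_iff_not_imp_left.2 fun hr habove ↦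
    (le_of_mem_col hS hT (by omega) habove hm).not_gt hlt

theorem count_readWord (hS : IsSkewShape lam mu R C) (hT : IsSVRPP lam mu T) (r v : ℕ) :
    (readWord r C T).count v = ∑ t ∈ Finset.range r, newCount C T t v := by
  induction r with
  | zero => simp [readWord]
  | succ r ih =>
    rw [readWord_succ, List.count_append, ih, rowRead_eq, List.count_append, count_nonPivots,
      nonPivotCount_add_count_pivots hS hT, Finset.sum_range_succ, add_comm]

theorem count_readWord_succ (hS : IsSkewShape lam mu R C) (hT : IsSVRPP lam mu T) (r v : ℕ) :
    (readWord (r + 1) C T).count v = (readWord r C T).count v + newCount C T r v := by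
  rw [count_readWord hS hT, count_readWord hS hT, Finset.sum_range_succ]

theorem surplus_eq_count_readWord (hS : IsSkewShape lam mu R C) (hT : IsSVRPP lam mu T)
    (r a : ℕ) : surplus C T r a = ((readWord r C T).count (a + 1) : ℤ) -
      (readWord r C T).count a + newCount C T r (a + 1) - pairCount C T r a := by
  rw [surplus, count_readWord hS hT, count_readWord hS hT, Finset.sum_sub_distrib]
  push_cast
  rfl

theorem newCount_eq_zero_of_nonPivot (hT : IsSVRPP lam mu T) {r j a m : ℕ}
    (hsucc : a + 1 ∈ T r j) (ha : a ∉ T r j) (hm : m ∈ T r j) (hlt : m < a + 1) :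
    newCount C T r a = 0 := by
  have hma : m ≠ a := fun h ↦ ha (h ▸ hm)
  refine Finset.card_eq_zero.2 (Finset.filter_eq_empty_iff.2 fun j' _ h ↦ ?_)
  rcases lt_trichotomy j j' with hj | rfl | hj
  · exact (le_of_mem_row hT hj hsucc h.1).not_gt a.lt_succ_self
  · exact ha h.1
  · have := le_of_mem_row hT hj h.1 hm
    omega

-- If some non-pivot `a + 1` of row `r` has no `a` in its box, row `r` contains no `a` at all and
-- the suffix through row `r` applies; otherwise the suffix starting at the last pivots `a + 1`.
theorem surplus_nonpos_of_isReverseLatticeWord (hS : IsSkewShape lam mu R C) (hT : IsSVRPP lam mu T)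
    (h : IsReverseLatticeWord (readWord R C T)) {a r : ℕ} (ha : 1 ≤ a) (hr : r < R) :
    surplus C T r a ≤ 0 := by
  rw [isReverseLatticeWord_iff_forall_isSuffix] at h
  rw [surplus_eq_count_readWord hS hT]
  by_cases hlone : ∃ j, a + 1 ∈ T r j ∧ a ∉ T r j ∧ ∃ m ∈ T r j, m < a + 1
  · obtain ⟨j, hsucc, hnot, m, hm, hlt⟩ := hlone
    have hzero := newCount_eq_zero_of_nonPivot (C := C) hT hsucc hnot hm hlt
    have hcount := h _ (readWord_isSuffix (show r + 1 ≤ R by omega)) a ha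
    rw [count_readWord_succ hS hT, count_readWord_succ hS hT, hzero] at hcount
    omega
  · have hpair : nonPivotCount C T r (a + 1) = pairCount C T r a := by
      refine congrArg Finset.card (Finset.filter_congr fun j _ ↦
        ⟨fun ⟨hsucc, hlt⟩ ↦ ⟨?_, hsucc⟩, fun ⟨hmem, hsucc⟩ ↦ ⟨hsucc, a, hmem, a.lt_succ_self⟩⟩)
      by_contra hnot
      exact hlone ⟨j, hsucc, hnot, hlt⟩
    obtain ⟨s, ⟨u, hu⟩, hsucc, hzero⟩ := exists_isSuffix_count_succ_eq
      (pairwise_pivots (C := C) hS hT r) a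
    have hsuffix : s ++ readWord r C T <:+ readWord R C T := by
      refine List.IsSuffix.trans ⟨nonPivots C T r ++ u, ?_⟩
        (readWord_isSuffix (show r + 1 ≤ R by omega))
      rw [readWord_succ, rowRead_eq, ← hu]
      simp only [List.append_assoc]
    have hcount := h _ hsuffix a ha
    rw [List.count_append, List.count_append, hsucc, hzero] at hcount
    have := nonPivotCount_add_count_pivots (C := C) hS hT r (a + 1)
    omega

theorem count_eq_of_isSuffix_nonPivots (hT : IsSVRPP lam mu T) {r a : ℕ} {s : List ℕ}
    (hs : s <:+ nonPivots C T r) (ha : a + 1 ∈ s) : s.count a = nonPivotCount C T r a := by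
  have hdec := pairwise_nonPivots (C := C) hT r
  obtain ⟨u, hu⟩ := hs
  rw [← hu, List.pairwise_append] at hdec
  have hzero : u.count a = 0 := List.count_eq_zero.2 fun hmem ↦
    (hdec.2.2 a hmem _ ha).not_gt a.lt_succ_self
  rw [← count_nonPivots, ← hu, List.count_append, hzero, zero_add]

theorem IsBalanced.count_succ_le (hS : IsSkewShape lam mu R C) (hT : IsSVRPP lam mu T)
    (h : IsBalanced C T) {a r : ℕ} (ha : 1 ≤ a) {s : List ℕ} (hs : s <:+ rowRead C T r) :
    (s ++ readWord r C T).count (a + 1) ≤ (s ++ readWord r C T).count a := by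
  have hrow := h a r ha
  have hnext := h a (r + 1) ha
  rw [surplus_eq_count_readWord hS hT] at hrow hnext
  rw [count_readWord_succ hS hT, count_readWord_succ hS hT] at hnext
  have hpair := pairCount_le_nonPivotCount C T r a
  have hpair' := pairCount_le_nonPivotCount C T (r + 1) a
  have hnew := nonPivotCount_add_count_pivots (C := C) hS hT r (a + 1)
  have hnew' := nonPivotCount_add_count_pivots (C := C) hS hT (r + 1) (a + 1)
  have hnewa := nonPivotCount_add_count_pivots (C := C) hS hT r a
  rw [List.count_append, List.count_append]
  rcases isSuffix_append_cases (rowRead_eq C T r ▸ hs) with hs | ⟨s', hs', rfl⟩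
  · have := hs.sublist.count_le (a + 1)
    omega
  · rw [List.count_append, List.count_append]
    by_cases hmem : a + 1 ∈ s'
    · have := count_nonPivots C T r (a + 1) ▸ hs'.sublist.count_le (a + 1)
      have := count_eq_of_isSuffix_nonPivots hT hs' hmem
      omega
    · have := List.count_eq_zero.2 hmem
      omega

theorem isReverseLatticeWord_readWord_iff (hS : IsSkewShape lam mu R C)
    (hT : IsSVRPPn lam mu n T) : IsReverseLatticeWord (readWord R C T) ↔ IsBalanced C T := by
  refine ⟨fun h a r ha ↦ ?_, fun h ↦ isReverseLatticeWord_iff_forall_isSuffix.2 fun s hs a ha ↦ ?_⟩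
  · rcases lt_or_ge r R with hr | hr
    · exact surplus_nonpos_of_isReverseLatticeWord hS hT.1 h ha hr
    · have hcount := isReverseLatticeWord_iff_forall_isSuffix.1 h _ (List.suffix_refl _) a ha
      rw [count_readWord hS hT.1, count_readWord hS hT.1, ← ircont_eq_sum_newCount hS hT,
        ← ircont_eq_sum_newCount hS hT] at hcount
      rw [surplus_of_le hS hT hr]
      omega
  · rcases isSuffix_readWord_cases hs with rfl | ⟨r, s', hs', rfl⟩
    · rfl
    · exact h.count_succ_le hS hT.1 ha hs'

end Lattice

/-! ### Alternants -/

section WeightInvolutions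

variable {n : ℕ} {ι A : Type*}

/-- For every two consecutive positions `i, j` there is an involution of `X` that preserves the
coefficients `c` and exchanges the entries `i` and `j` of the weight. -/
def IsSwapSymmetric (X : Finset ι) (wt : ι → Fin n → ℕ) (c : ι → A) : Prop :=
  ∀ i j : Fin n, (j : ℕ) = i + 1 → ∃ τ : ι → ι, ∀ T ∈ X,
    τ T ∈ X ∧ τ (τ T) = T ∧ c (τ T) = c T ∧ wt (τ T) = wt T ∘ Equiv.swap i j

/-- `ψ` is an involution of `X` that preserves the coefficients `c` and exchanges two entries of
the exponent vector `α`. -/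
def IsAlternating (X : Finset ι) (α : ι → Fin n → ℕ) (c : ι → A) (ψ : ι → ι) : Prop :=
  ∀ T ∈ X, ψ T ∈ X ∧ ψ (ψ T) = T ∧ c (ψ T) = c T ∧
    ∃ i j : Fin n, i ≠ j ∧ α (ψ T) = α T ∘ Equiv.swap i j

theorem IsSwapSymmetric.sum_mul_prod_perm [CommSemiring A] {X : Finset ι} {wt : ι → Fin n → ℕ}
    {c : ι → A} (h : IsSwapSymmetric X wt c) (σ : Equiv.Perm (Fin n)) (x : Fin n → A) :
    ∑ T ∈ X, c T * ∏ i, x (σ i) ^ wt T i = ∑ T ∈ X, c T * ∏ i, x i ^ wt T i := by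
  cases n with
  | zero => simp
  | succ m =>
    have hσ : σ ∈ Submonoid.closure (Set.range fun i : Fin m ↦ Equiv.swap i.castSucc i.succ) :=
      Equiv.Perm.mclosure_swap_castSucc_succ m ▸ Submonoid.mem_top σ
    induction hσ using Submonoid.closure_induction generalizing x with
    | one => rfl
    | mul σ₁ σ₂ _ _ ih₁ ih₂ => exact (ih₂ fun i ↦ x (σ₁ i)).trans (ih₁ x)
    | mem σ hσ =>
      obtain ⟨i, rfl⟩ := hσ
      obtain ⟨τ, hτ⟩ := h i.castSucc i.succ (by simp)
      refine Finset.sum_bij' (fun T _ ↦ τ T) (fun T _ ↦ τ T) (fun T hT ↦ (hτ T hT).1)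
        (fun T hT ↦ (hτ T hT).1) (fun T hT ↦ (hτ T hT).2.1) (fun T hT ↦ (hτ T hT).2.1) ?_
      intro T hT
      obtain ⟨-, -, hc, hwt⟩ := hτ T hT
      rw [hc, hwt, ← Equiv.prod_comp (Equiv.swap i.castSucc i.succ)]
      simp

end WeightInvolutions

section Alternant

variable {n : ℕ} {ι A : Type*} [CommRing A]

/-- The alternant `det (x_v ^ α_w)`. -/
def alternant (x : Fin n → A) (α : Fin n → ℕ) : A :=
  (Matrix.of fun v w ↦ x v ^ α w).det

/-- The exponent vector `(n - 1, …, 1, 0)`, whose alternant is the Vandermonde determinant. -/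
def staircase (n : ℕ) (v : Fin n) : ℕ := n - 1 - v

theorem alternant_comp_swap (x : Fin n → A) (α : Fin n → ℕ) {i j : Fin n} (hij : i ≠ j) :
    alternant x (α ∘ Equiv.swap i j) = -alternant x α := by
  have h := Matrix.det_permute' (Equiv.swap i j) (Matrix.of fun v w ↦ x v ^ α w)
  rw [Equiv.Perm.sign_swap hij] at h
  rw [Units.val_neg, Units.val_one, Int.cast_neg, Int.cast_one, neg_one_mul] at h
  exact h

theorem alternant_eq_zero_of_eq (x : Fin n → A) {α : Fin n → ℕ} {i j : Fin n} (hij : i ≠ j)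
    (h : α i = α j) : alternant x α = 0 :=
  Matrix.det_zero_of_column_eq hij fun v ↦ by simp [h]

theorem alternant_staircase_ne_zero [IsDomain A] {x : Fin n → A} (hx : Function.Injective x) :
    alternant x (staircase n) ≠ 0 := by
  have hperm := Matrix.det_permute' Fin.revPerm (Matrix.vandermonde x)
  have hsub : (Matrix.vandermonde x).submatrix id Fin.revPerm =
      Matrix.of fun v w ↦ x v ^ staircase n w := by
    ext v w
    simp [staircase, Fin.val_rev, Nat.sub_sub, add_comm]
  rw [hsub] at hperm
  rw [alternant, hperm]
  exact mul_ne_zero ((Units.isUnit _).map (Int.castRingHom A)).ne_zero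
    (Matrix.det_vandermonde_ne_zero_iff.2 hx)

theorem IsSwapSymmetric.alternant_mul_sum {X : Finset ι} {wt : ι → Fin n → ℕ} {c : ι → A}
    (h : IsSwapSymmetric X wt c) (x : Fin n → A) (β : Fin n → ℕ) :
    alternant x β * ∑ T ∈ X, c T * ∏ v, x v ^ wt T v =
      ∑ T ∈ X, c T * alternant x (wt T + β) := by
  simp only [alternant, Matrix.det_apply', Matrix.of_apply]
  rw [Finset.sum_mul]
  simp only [Finset.mul_sum]
  rw [Finset.sum_comm (s := X)]
  refine Finset.sum_congr rfl fun σ _ ↦ ?_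
  rw [← Finset.mul_sum, ← h.sum_mul_prod_perm σ, Finset.mul_sum]
  refine Finset.sum_congr rfl fun T _ ↦ ?_
  simp only [Pi.add_apply, pow_add, Finset.prod_mul_distrib]
  ring

theorem IsAlternating.sum_mul_alternant_eq_zero {X : Finset ι} {α : ι → Fin n → ℕ} {c : ι → A}
    {ψ : ι → ι} (h : IsAlternating X α c ψ) (x : Fin n → A) :
    ∑ T ∈ X, c T * alternant x (α T) = 0 := by
  refine Finset.sum_involution (fun T _ ↦ ψ T) (fun T hT ↦ ?_) (fun T hT hne hfix ↦ hne ?_)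
    (fun T hT ↦ (h T hT).1) (fun T hT ↦ (h T hT).2.1)
  · obtain ⟨-, -, hc, i, j, hij, hα⟩ := h T hT
    rw [hc, hα, alternant_comp_swap x _ hij, mul_neg, add_neg_cancel]
  · obtain ⟨-, -, -, i, j, hij, hα⟩ := h T hT
    have hα' : α T i = α T j := by simpa [hfix] using congrFun hα i
    rw [alternant_eq_zero_of_eq x hij hα', mul_zero]

end Alternant

section Tableaux

variable {lam mu : ℕ → ℕ} {R C : ℕ}

theorem finite_setOf_isSVRPPn (hS : IsSkewShape lam mu R C) (n : ℕ) :
    {T : ℕ → ℕ → Finset ℕ | IsSVRPPn lam mu n T}.Finite := by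
  let restrict (T : ℕ → ℕ → Finset ℕ) (r : Fin R) (j : Fin C) : Finset ℕ := T r j
  refine Set.Finite.of_finite_image (f := restrict) ?_ fun T hT T' hT' h ↦ ?_
  · refine (Set.Finite.pi' fun _ ↦ Set.Finite.pi' fun _ ↦
      (Finset.Icc 1 n).powerset.finite_toSet).subset ?_
    rintro _ ⟨T, hT, rfl⟩ r j
    exact Finset.mem_powerset.2 (hT.2 r j)
  · funext r j
    by_cases hrj : r < R ∧ j < C
    · exact congrFun (congrFun h ⟨r, hrj.1⟩) ⟨j, hrj.2⟩
    · have hempty {T : ℕ → ℕ → Finset ℕ} (hT : IsSVRPPn lam mu n T) : T r j = ∅ :=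
        Finset.eq_empty_of_forall_notMem fun x hx ↦
          hrj ⟨(mem_bounds hS hT hx).1, (mem_bounds hS hT hx).2.1⟩
      rw [hempty hT, hempty hT']

/-- The finite set of all set-valued reverse plane partitions of shape `lam/mu` with entries at
most `n`. -/
noncomputable def svrppFinset (hS : IsSkewShape lam mu R C) (n : ℕ) :
    Finset (ℕ → ℕ → Finset ℕ) :=
  (finite_setOf_isSVRPPn hS n).toFinset

theorem mem_svrppFinset {hS : IsSkewShape lam mu R C} {n : ℕ} {T : ℕ → ℕ → Finset ℕ} :
    T ∈ svrppFinset hS n ↔ IsSVRPPn lam mu n T :=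
  Set.Finite.mem_toFinset _

/-- The exponent vector of the `x`-monomial of `T`; it is `ircont T`, with letters shifted to start
at `0`. -/
noncomputable def weight (n : ℕ) (T : ℕ → ℕ → Finset ℕ) (v : Fin n) : ℕ :=
  ircont T (v + 1)

theorem eq_comp_swap {ι β : Type*} [DecidableEq ι] {f g : ι → β} {i j : ι} (hi : g i = f j)
    (hj : g j = f i) (h : ∀ k, k ≠ i → k ≠ j → g k = f k) : g = f ∘ Equiv.swap i j := by
  funext k
  rcases eq_or_ne k i with rfl | hki
  · simpa using hi
  rcases eq_or_ne k j with rfl | hkj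
  · simpa using hj
  simpa [Equiv.swap_apply_of_ne_of_ne hki hkj] using h k hki hkj

variable {n : ℕ} {T T' : ℕ → ℕ → Finset ℕ}

theorem IsToggle.weight_eq (hS : IsSkewShape lam mu R C) (hT : IsSVRPPn lam mu n T) {i j : Fin n}
    (hij : (j : ℕ) = i + 1) (h : IsToggle lam mu n R C (i + 1) 0 T T') :
    weight n T' = weight n T ∘ Equiv.swap i j := by
  obtain ⟨hi, hj⟩ := h.ircont_pair hS hT
  refine eq_comp_swap ?_ ?_ fun k hki hkj ↦ ?_
  · simp only [weight, hij]
    omega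
  · simp only [weight, hij]
    omega
  · have := Fin.val_ne_of_ne hki
    have := Fin.val_ne_of_ne hkj
    exact h.ircont_of_ne hS hT (by omega) (by omega)

theorem IsToggle.weight_add_staircase (hS : IsSkewShape lam mu R C) (hT : IsSVRPPn lam mu n T)
    {i j : Fin n} (hij : (j : ℕ) = i + 1) (h : IsToggle lam mu n R C (i + 1) 1 T T') :
    weight n T' + staircase n = (weight n T + staircase n) ∘ Equiv.swap i j := by
  obtain ⟨hi, hj⟩ := h.ircont_pair hS hT
  refine eq_comp_swap ?_ ?_ fun k hki hkj ↦ ?_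
  · simp only [Pi.add_apply, weight, staircase, hij]
    omega
  · simp only [Pi.add_apply, weight, staircase, hij]
    omega
  · have := Fin.val_ne_of_ne hki
    have := Fin.val_ne_of_ne hkj
    exact congrArg (· + staircase n k) (h.ircont_of_ne hS hT (by omega) (by omega))

variable {A : Type*} {c : (ℕ → ℕ → Finset ℕ) → A}

theorem isSwapSymmetric_weight (hS : IsSkewShape lam mu R C) (hc : ∀ T T',
    ceq lam mu T' = ceq lam mu T → exv lam mu T' = exv lam mu T → c T' = c T) :
    IsSwapSymmetric (svrppFinset hS n) (weight n) c := by
  intro i j hij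
  obtain ⟨τ, hτ⟩ := exists_toggle hS (Nat.le_add_left 1 i) (hij ▸ j.isLt) le_rfl
  refine ⟨τ, fun T hT ↦ ?_⟩
  rw [mem_svrppFinset] at hT
  obtain ⟨hinv, htog⟩ := hτ T hT (exists_nonneg_surplus hS hT.1 _)
  exact ⟨mem_svrppFinset.2 htog.isSVRPPn, hinv,
    hc _ _ (htog.ceq_eq hS hT (by omega) (by omega)) (htog.exv_eq hS hT (by omega) (by omega)),
    htog.weight_eq hS hT hij⟩

theorem exists_isAlternating_not_isBalanced (hS : IsSkewShape lam mu R C) (hc : ∀ T T',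
    ceq lam mu T' = ceq lam mu T → exv lam mu T' = exv lam mu T → c T' = c T) :
    ∃ ψ, IsAlternating {T ∈ svrppFinset hS n | ¬ IsBalanced C T}
      (fun T ↦ weight n T + staircase n) c ψ := by
  obtain ⟨ψ, letter, hψ⟩ := exists_cancellation hS n
  refine ⟨ψ, fun T hT ↦ ?_⟩
  rw [Finset.mem_filter, mem_svrppFinset] at hT
  obtain ⟨hbal, hinv, hone, hlt, htog⟩ := hψ T hT.1 hT.2
  refine ⟨Finset.mem_filter.2 ⟨mem_svrppFinset.2 htog.isSVRPPn, hbal⟩, hinv,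
    hc _ _ (htog.ceq_eq hS hT.1 hone hlt) (htog.exv_eq hS hT.1 hone hlt), ?_⟩
  obtain ⟨a, ha⟩ : ∃ a, letter T = a + 1 := ⟨letter T - 1, by omega⟩
  rw [ha] at hlt htog
  exact ⟨⟨a, by omega⟩, ⟨a + 1, hlt⟩, by simp, htog.weight_add_staircase hS hT.1 rfl⟩

theorem alternant_mul_sum_svrppFinset [CommRing A] (hS : IsSkewShape lam mu R C) (hc : ∀ T T',
    ceq lam mu T' = ceq lam mu T → exv lam mu T' = exv lam mu T → c T' = c T) (x : Fin n → A) :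
    alternant x (staircase n) * ∑ T ∈ svrppFinset hS n, c T * ∏ v, x v ^ weight n T v =
      ∑ T ∈ svrppFinset hS n with IsBalanced C T,
        c T * alternant x (weight n T + staircase n) := by
  obtain ⟨ψ, hψ⟩ := exists_isAlternating_not_isBalanced (n := n) hS hc
  rw [(isSwapSymmetric_weight hS hc).alternant_mul_sum,
    ← Finset.sum_filter_add_sum_filter_not _ (IsBalanced C), hψ.sum_mul_alternant_eq_zero,
    add_zero]

end Tableaux

/-! ### Schur polynomials -/

/-- `nu 1 ≥ nu 2 ≥ … ≥ nu n` are the parts of a partition with at most `n` parts; the value `nu 0`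
is irrelevant. -/
structure IsPartitionWeight (nu : ℕ → ℕ) (n : ℕ) : Prop where
  succ_le : ∀ v, 1 ≤ v → nu (v + 1) ≤ nu v
  eq_zero : ∀ v, n < v → nu v = 0

/-- The rows of the Young diagram of `nu`, whose parts are numbered from `1`. -/
def youngShape (nu : ℕ → ℕ) (r : ℕ) : ℕ := nu (r + 1)

/-- The set-valued filling with the entries of `U` as singletons. -/
def toSetValued (nu : ℕ → ℕ) (U : ℕ → ℕ → ℕ) (r j : ℕ) : Finset ℕ :=
  if j < nu (r + 1) then {U r j} else ∅

/-- The statistics `ceq` and `ex` of `T` vanish; these are the fillings that come from semistandard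
tableaux. -/
def IsPlain (nu : ℕ → ℕ) (T : ℕ → ℕ → Finset ℕ) : Prop :=
  ceq (youngShape nu) 0 T = 0 ∧ exv (youngShape nu) 0 T = 0

/-- The tableau of shape `nu` whose row `r` (numbered from `0`) is filled with `r + 1`; it is the
only semistandard tableau of shape `nu` whose reading word is a reverse lattice word. -/
def highestWeightTableau (nu : ℕ → ℕ) (r j : ℕ) : ℕ :=
  if j < nu (r + 1) then r + 1 else 0

section SetValued

variable {nu : ℕ → ℕ} {n : ℕ} {U : ℕ → ℕ → ℕ} {T : ℕ → ℕ → Finset ℕ} {r r' j x : ℕ}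

theorem IsPartitionWeight.le_one (h : IsPartitionWeight nu n) (r : ℕ) : nu (r + 1) ≤ nu 1 :=
  antitone_nat_of_succ_le (f := youngShape nu) (fun _ ↦ h.succ_le _ (by omega)) r.zero_le

theorem IsPartitionWeight.isSkewShape (h : IsPartitionWeight nu n) :
    IsSkewShape (youngShape nu) 0 n (nu 1) where
  lam_succ_le _ := h.succ_le _ (by omega)
  mu_succ_le _ := le_rfl
  mu_le_lam _ := Nat.zero_le _
  lam_eq_zero _ hr := h.eq_zero _ (by omega)
  lam_le r := h.le_one r

theorem inShape_youngShape : InShape (youngShape nu) 0 r j ↔ j < nu (r + 1) := by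
  simp [InShape, youngShape]

theorem mem_toSetValued : x ∈ toSetValued nu U r j ↔ j < nu (r + 1) ∧ x = U r j := by
  unfold toSetValued
  split_ifs with h <;> simp [h]

theorem isSVRPPn_toSetValued (hU : IsSSYT nu n U) :
    IsSVRPPn (youngShape nu) 0 n (toSetValued nu U) := by
  obtain ⟨-, hbounds, hrow, hcol⟩ := hU
  refine ⟨⟨fun i j h ↦ if_neg (mt inShape_youngShape.2 h),
    fun i j h ↦ ⟨U i j, mem_toSetValued.2 ⟨inShape_youngShape.1 h, rfl⟩⟩, fun i j x hx ↦ ?_,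
    fun i j _ _ a ha b hb ↦ ?_, fun i j _ _ a ha b hb ↦ ?_⟩, fun i j x hx ↦ ?_⟩
  · obtain ⟨hj, rfl⟩ := mem_toSetValued.1 hx
    exact (hbounds i j hj).1
  · obtain ⟨⟨-, rfl⟩, hj, rfl⟩ := And.intro (mem_toSetValued.1 ha) (mem_toSetValued.1 hb)
    exact hrow i j hj
  · obtain ⟨⟨-, rfl⟩, hj, rfl⟩ := And.intro (mem_toSetValued.1 ha) (mem_toSetValued.1 hb)
    exact (hcol i j hj).le
  · obtain ⟨hj, rfl⟩ := mem_toSetValued.1 hx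
    exact Finset.mem_Icc.2 (hbounds i j hj)

theorem isPlain_toSetValued (hU : IsSSYT nu n U) : IsPlain nu (toSetValued nu U) := by
  refine ⟨funext fun r ↦ ?_, funext fun r ↦ Finset.sum_eq_zero fun j _ ↦ ?_⟩
  · refine (congrArg Set.ncard (Set.eq_empty_of_forall_notMem ?_)).trans (Set.ncard_empty ℕ)
    rintro j ⟨-, -, m, hm, -, hm', -⟩
    obtain ⟨⟨-, rfl⟩, hj, heq⟩ := And.intro (mem_toSetValued.1 hm) (mem_toSetValued.1 hm')
    exact (hU.2.2.2 r j hj).ne heq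
  · unfold toSetValued
    split_ifs <;> simp

theorem injOn_toSetValued : Set.InjOn (toSetValued nu) {U | IsSSYT nu n U} := by
  intro U hU U' hU' h
  funext r j
  by_cases hj : j < nu (r + 1)
  · have hmem : U r j ∈ toSetValued nu U' r j := h ▸ mem_toSetValued.2 ⟨hj, rfl⟩
    exact (mem_toSetValued.1 hmem).2
  · rw [hU.1 r j hj, hU'.1 r j hj]

theorem IsPlain.exists_toSetValued_eq (hT : IsSVRPP (youngShape nu) 0 T) (h : IsPlain nu T) :
    ∃ U, (∀ r j, ¬ j < nu (r + 1) → U r j = 0) ∧ toSetValued nu U = T := by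
  have hentry (r j : ℕ) : ∃ u, (¬ j < nu (r + 1) → u = 0) ∧ if j < nu (r + 1) then T r j = {u}
      else T r j = ∅ := by
    by_cases hj : j < nu (r + 1)
    · have hexc := Finset.sum_eq_zero_iff.1 (congrFun h.2 r) j (by simpa [youngShape] using hj)
      have hpos := Finset.card_pos.2 (hT.2.1 r j (inShape_youngShape.2 hj))
      obtain ⟨u, hu⟩ := Finset.card_eq_one.1 (show (T r j).card = 1 by omega)
      exact ⟨u, absurd hj, by rwa [if_pos hj]⟩
    · exact ⟨0, fun _ ↦ rfl, by rw [if_neg hj]; exact hT.1 r j (mt inShape_youngShape.1 hj)⟩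
  choose U hzero hU using hentry
  refine ⟨U, hzero, funext₂ fun r j ↦ ?_⟩
  have hrj := hU r j
  unfold toSetValued
  split_ifs at hrj ⊢ <;> exact hrj.symm

theorem isSSYT_of_isPlain (hnu : IsPartitionWeight nu n)
    (hU : ∀ r j, ¬ j < nu (r + 1) → U r j = 0)
    (hT : IsSVRPPn (youngShape nu) 0 n (toSetValued nu U)) (h : IsPlain nu (toSetValued nu U)) :
    IsSSYT nu n U := by
  have hmem {r j : ℕ} (hj : j < nu (r + 1)) : U r j ∈ toSetValued nu U r j :=
    mem_toSetValued.2 ⟨hj, rfl⟩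
  refine ⟨hU, fun r j hj ↦ Finset.mem_Icc.1 (hT.2 r j (hmem hj)), fun r j hj ↦
    le_of_mem_row hT.1 j.lt_succ_self (hmem (by omega)) (hmem hj), fun r j hj ↦ ?_⟩
  have hj' : j < nu (r + 1) := hj.trans_le (hnu.succ_le _ (by omega))
  refine lt_of_le_of_ne
    (le_of_mem_col hnu.isSkewShape hT.1 r.lt_succ_self (hmem hj') (hmem hj)) fun heq ↦ ?_
  have hceq := congrFun h.1 r
  rw [ceq, Pi.zero_apply, Set.ncard_eq_zero
    ((Set.finite_Iio (nu (r + 1))).subset fun _ hk ↦ inShape_youngShape.1 hk.1)] at hceq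
  refine Set.eq_empty_iff_forall_notMem.1 hceq j ⟨inShape_youngShape.2 hj',
    inShape_youngShape.2 hj, U r j, hmem hj', fun x hx ↦ ?_, heq ▸ hmem hj, fun x hx ↦ ?_⟩
  · exact (mem_toSetValued.1 hx).2.le
  · rw [heq, (mem_toSetValued.1 hx).2]

theorem bijOn_toSetValued (hnu : IsPartitionWeight nu n) :
    Set.BijOn (toSetValued nu) {U | IsSSYT nu n U}
      {T | IsSVRPPn (youngShape nu) 0 n T ∧ IsPlain nu T} := by
  refine ⟨fun U hU ↦ ⟨isSVRPPn_toSetValued hU, isPlain_toSetValued hU⟩, injOn_toSetValued, ?_⟩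
  rintro T ⟨hT, hplain⟩
  obtain ⟨U, hzero, rfl⟩ := hplain.exists_toSetValued_eq hT.1
  exact ⟨U, isSSYT_of_isPlain hnu hzero hT hplain, rfl⟩

theorem col_strict_of_isSSYT (hnu : IsPartitionWeight nu n) (hU : IsSSYT nu n U) (hr : r < r')
    (hj : j < nu (r' + 1)) : U r j < U r' j := by
  induction r', hr using Nat.le_induction with
  | base => exact hU.2.2.2 r j hj
  | succ k _ ih =>
    exact (ih (hj.trans_le (hnu.succ_le _ (by omega)))).trans (hU.2.2.2 k j hj)

theorem contentOf_eq_ircont (hnu : IsPartitionWeight nu n) (hU : IsSSYT nu n U) (v : ℕ) :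
    contentOf nu U v = ircont (toSetValued nu U) v := by
  have himage : {j | ∃ i, v ∈ toSetValued nu U i j} =
      Prod.snd '' {p : ℕ × ℕ | p.2 < nu (p.1 + 1) ∧ U p.1 p.2 = v} := by
    ext j
    simp [mem_toSetValued, eq_comm]
  rw [contentOf, ircont, himage, Set.InjOn.ncard_image]
  rintro ⟨i, j⟩ ⟨hj, hv⟩ ⟨i', _⟩ ⟨hj', hv'⟩ rfl
  rcases lt_trichotomy i i' with h | rfl | h
  · exact ((col_strict_of_isSSYT hnu hU h hj').ne (hv.trans hv'.symm)).elim
  · rfl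
  · exact ((col_strict_of_isSSYT hnu hU h hj).ne (hv'.trans hv.symm)).elim

theorem pairCount_toSetValued (C a : ℕ) : pairCount C (toSetValued nu U) r a = 0 := by
  refine Finset.card_eq_zero.2 (Finset.filter_eq_empty_iff.2 fun j _ ⟨ha, hsucc⟩ ↦ ?_)
  rw [mem_toSetValued] at ha hsucc
  omega

theorem surplus_pos_of_mem {C a : ℕ} (habove : ∀ t < r, ∀ j, a ∉ T t j) (hj : j < C)
    (hmem : a + 1 ∈ T r j) (hnew : r = 0 ∨ a + 1 ∉ T (r - 1) j) (hpair : pairCount C T r a = 0) :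
    0 < surplus C T r a := by
  have hsum : 0 ≤ ∑ t ∈ Finset.range r, ((newCount C T t (a + 1) : ℤ) - newCount C T t a) := by
    refine Finset.sum_nonneg fun t ht ↦ ?_
    have hzero : newCount C T t a = 0 := Finset.card_eq_zero.2
      (Finset.filter_eq_empty_iff.2 fun j _ h ↦ habove t (Finset.mem_range.1 ht) j h.1)
    simp [hzero]
  have hpos : 0 < newCount C T r (a + 1) :=
    Finset.card_pos.2 ⟨j, Finset.mem_filter.2 ⟨Finset.mem_range.2 hj, hmem, hnew⟩⟩
  rw [surplus, hpair]
  omega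

end SetValued

section HighestWeight

variable {nu : ℕ → ℕ} {n : ℕ}

theorem mem_toSetValued_highestWeightTableau {r j x : ℕ} :
    x ∈ toSetValued nu (highestWeightTableau nu) r j ↔ j < nu (r + 1) ∧ x = r + 1 :=
  mem_toSetValued.trans (and_congr_right fun h ↦ by rw [highestWeightTableau, if_pos h])

theorem isSSYT_highestWeightTableau (hnu : IsPartitionWeight nu n) :
    IsSSYT nu n (highestWeightTableau nu) := by
  refine ⟨fun r j h ↦ if_neg h, fun r j h ↦ ?_, fun r j h ↦ ?_, fun r j h ↦ ?_⟩
  · have hr : r < n := not_le.1 fun hle ↦ by simp [hnu.eq_zero (r + 1) (by omega)] at h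
    rw [highestWeightTableau, if_pos h]
    omega
  · rw [highestWeightTableau, highestWeightTableau, if_pos h, if_pos (by omega)]
  · have h' : j < nu (r + 1) := h.trans_le (hnu.succ_le (r + 1) (by omega))
    rw [highestWeightTableau, highestWeightTableau, if_pos h, if_pos h']
    omega

theorem newCount_highestWeightTableau (hnu : IsPartitionWeight nu n) (t v : ℕ) :
    newCount (nu 1) (toSetValued nu (highestWeightTableau nu)) t v =
      if v = t + 1 then nu (t + 1) else 0 := by
  have := hnu.le_one t
  split_ifs with h
  · rw [newCount, ← Finset.card_range (nu (t + 1))]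
    congr 1
    ext j
    simp only [Finset.mem_filter, Finset.mem_range, mem_toSetValued_highestWeightTableau]
    omega
  · exact Finset.card_eq_zero.2 (Finset.filter_eq_empty_iff.2 fun j _ hj ↦
      h (mem_toSetValued_highestWeightTableau.1 hj.1).2)

theorem isBalanced_highestWeightTableau (hnu : IsPartitionWeight nu n) :
    IsBalanced (nu 1) (toSetValued nu (highestWeightTableau nu)) := by
  intro v r hv
  obtain ⟨v, rfl⟩ : ∃ i, v = i + 1 := ⟨v - 1, by omega⟩
  have hle := hnu.succ_le (v + 1) hv
  simp only [surplus, newCount_highestWeightTableau hnu, pairCount_toSetValued,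
    Finset.sum_sub_distrib, add_left_inj, Nat.cast_ite, Nat.cast_zero, Finset.sum_ite_eq,
    Finset.mem_range]
  split_ifs with h₁ h₂ h₃ h₄
  all_goals first | omega | (subst_vars; omega)

theorem ircont_highestWeightTableau (v : ℕ) :
    ircont (toSetValued nu (highestWeightTableau nu)) (v + 1) = nu (v + 1) := by
  have hset : {j | ∃ i, v + 1 ∈ toSetValued nu (highestWeightTableau nu) i j} =
      (Finset.range (nu (v + 1)) : Set ℕ) := by
    ext j
    simp [mem_toSetValued_highestWeightTableau]
  rw [ircont, hset, Set.ncard_coe_finset, Finset.card_range]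

theorem succ_le_of_isSSYT (hnu : IsPartitionWeight nu n) {U : ℕ → ℕ → ℕ} (hU : IsSSYT nu n U)
    {r j : ℕ} (hj : j < nu (r + 1)) : r + 1 ≤ U r j := by
  induction r with
  | zero => exact (hU.2.1 0 j hj).1
  | succ r ih =>
    exact Nat.succ_le_of_lt ((ih (hj.trans_le (hnu.succ_le _ (by omega)))).trans_lt
      (hU.2.2.2 r j hj))

theorem eq_highestWeightTableau (hnu : IsPartitionWeight nu n) {U : ℕ → ℕ → ℕ}
    (hU : IsSSYT nu n U) (hbal : IsBalanced (nu 1) (toSetValued nu U)) :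
    U = highestWeightTableau nu := by
  have hrow (r : ℕ) : ∀ j < nu (r + 1), U r j ≤ r + 1 := by
    induction r using Nat.strong_induction_on with
    | _ r ih =>
      intro j hj
      by_contra! hlt
      obtain ⟨a, ha⟩ : ∃ a, U r j = a + 1 := ⟨U r j - 1, by omega⟩
      have hbelow {t k x : ℕ} (ht : t < r) (hx : x ∈ toSetValued nu U t k) : x < r + 1 := by
        obtain ⟨hk, rfl⟩ := mem_toSetValued.1 hx
        exact (ih t ht k hk).trans_lt (by omega)
      refine (hbal a r (by omega)).not_gt (surplus_pos_of_mem (j := j) (fun t ht k hx ↦ ?_)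
        (hj.trans_le (hnu.le_one r)) (mem_toSetValued.2 ⟨hj, ha.symm⟩)
        (or_iff_not_imp_left.2 fun hr hx ↦ ?_) (pairCount_toSetValued _ a))
      · have := hbelow ht hx
        omega
      · have := hbelow (by omega) hx
        omega
  funext r j
  unfold highestWeightTableau
  split_ifs with hj
  · exact le_antisymm (hrow r j hj) (succ_le_of_isSSYT hnu hU hj)
  · exact hU.1 r j hj

/-- The variables `x_1, …, x_n`. -/
noncomputable abbrev xVar (n : ℕ) (v : Fin n) : MvPolynomial (Fin n ⊕ ℕ ⊕ ℕ) ℤ :=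
  MvPolynomial.X (Sum.inl v)

theorem schurPoly_eq_sum (hnu : IsPartitionWeight nu n) :
    schurPoly n nu = ∑ T ∈ svrppFinset hnu.isSkewShape n,
      (if IsPlain nu T then 1 else 0) * ∏ v, xVar n v ^ weight n T v := by
  simp only [ite_mul, one_mul, zero_mul]
  rw [← Finset.sum_filter, ← finsum_mem_coe_finset, schurPoly]
  refine finsum_mem_eq_of_bijOn (toSetValued nu) ?_ fun U hU ↦ ?_
  · simpa only [Finset.coe_filter, mem_svrppFinset] using bijOn_toSetValued hnu
  · exact Finset.prod_congr rfl fun v _ ↦ by rw [contentOf_eq_ircont hnu hU, weight]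

theorem alternant_mul_schurPoly (hnu : IsPartitionWeight nu n) :
    alternant (xVar n) (staircase n) * schurPoly n nu =
      alternant (xVar n) ((fun v : Fin n ↦ nu (v + 1)) + staircase n) := by
  have hU := isSSYT_highestWeightTableau hnu
  rw [schurPoly_eq_sum hnu, alternant_mul_sum_svrppFinset hnu.isSkewShape
      (fun T T' hceq hexv ↦ if_congr (by rw [IsPlain, IsPlain, hceq, hexv]) rfl rfl),
    Finset.sum_eq_single (toSetValued nu (highestWeightTableau nu))]
  · rw [if_pos (isPlain_toSetValued hU), one_mul]
    congr 2
    exact funext fun v ↦ ircont_highestWeightTableau v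
  · intro T hT hne
    rw [Finset.mem_filter, mem_svrppFinset] at hT
    refine mul_eq_zero_of_left (if_neg fun hplain ↦ ?_) _
    obtain ⟨U, hU, rfl⟩ := (bijOn_toSetValued hnu).surjOn ⟨hT.1, hplain⟩
    exact hne (congrArg _ (eq_highestWeightTableau hnu hU hT.2))
  · intro h
    exact (h (Finset.mem_filter.2 ⟨mem_svrppFinset.2 (isSVRPPn_toSetValued hU),
      isBalanced_highestWeightTableau hnu⟩)).elim

end HighestWeight

/-! ### The Schur expansion -/

section Finsum

variable {ι α β γ M : Type*}

theorem finsum_sum_ite_eq [AddCommMonoid M] (s : Finset ι) (k : ι → α) (f : ι → α → M) :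
    ∑ᶠ a, ∑ T ∈ s, (if k T = a then f T a else 0) = ∑ T ∈ s, f T (k T) := by
  have hne {T : ι} {a : α} (h : a ≠ k T) : (if k T = a then f T a else 0) = 0 := if_neg h.symm
  rw [finsum_sum_comm _ _ fun T _ ↦
    (Set.finite_singleton (k T)).subset fun a ha ↦ by_contra fun h ↦ ha (hne h)]
  refine Finset.sum_congr rfl fun T _ ↦ ?_
  rw [finsum_eq_single _ (k T) fun a ↦ hne, if_pos rfl]

theorem finsum_card_filter_mul [Semiring M] (s : Finset ι) (k₁ : ι → α) (k₂ : ι → β) (k₃ : ι → γ)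
    (f : α → β → γ → M) :
    ∑ᶠ (a) (b) (c), (({T ∈ s | k₁ T = a ∧ k₂ T = b ∧ k₃ T = c}.card : ℕ) : M) * f a b c =
      ∑ T ∈ s, f (k₁ T) (k₂ T) (k₃ T) := by
  rw [← finsum_sum_ite_eq s k₁ fun T a ↦ f a (k₂ T) (k₃ T)]
  refine finsum_congr fun a ↦ ?_
  rw [← finsum_sum_ite_eq s k₂ fun T b ↦ if k₁ T = a then f a b (k₃ T) else 0]
  refine finsum_congr fun b ↦ ?_
  rw [← finsum_sum_ite_eq s k₃ fun T c ↦ if k₂ T = b then if k₁ T = a then f a b c else 0 else 0]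
  refine finsum_congr fun c ↦ ?_
  rw [Finset.card_filter, Nat.cast_sum, Finset.sum_mul]
  refine Finset.sum_congr rfl fun T _ ↦ ?_
  split_ifs <;> simp_all

end Finsum

section Expansion

variable {lam mu : ℕ → ℕ} {R C n : ℕ}

/-- The monomial `t^ga w^th`. -/
noncomputable def twMonomial (n : ℕ) (ga th : ℕ → ℕ) : MvPolynomial (Fin n ⊕ ℕ ⊕ ℕ) ℤ :=
  (∏ᶠ r : ℕ, MvPolynomial.X (Sum.inr (Sum.inl r)) ^ ga r) *
    ∏ᶠ r : ℕ, MvPolynomial.X (Sum.inr (Sum.inr r)) ^ th r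

theorem hybridG_eq_sum (hS : IsSkewShape lam mu R C) :
    hybridG lam mu n = ∑ T ∈ svrppFinset hS n,
      twMonomial n (ceq lam mu T) (exv lam mu T) * ∏ v, xVar n v ^ weight n T v := by
  rw [hybridG, finsum_mem_eq_finite_toFinset_sum _ (finite_setOf_isSVRPPn hS n)]
  exact Finset.sum_congr rfl fun T _ ↦ by rw [mul_assoc, mul_comm]; rfl

theorem isPartitionWeight_ircont (hS : IsSkewShape lam mu R C) {T : ℕ → ℕ → Finset ℕ}
    (hT : IsSVRPPn lam mu n T) (hbal : IsBalanced C T) : IsPartitionWeight (ircont T) n := by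
  refine ⟨fun v hv ↦ ?_, fun v hv ↦ ?_⟩
  · have h := hbal v R hv
    rw [surplus_of_le hS hT le_rfl] at h
    omega
  · have hempty : {j | ∃ i, v ∈ T i j} = ∅ := Set.eq_empty_of_forall_notMem fun j ⟨i, hi⟩ ↦
      hv.not_ge (mem_bounds hS hT hi).2.2.2
    rw [ircont, hempty, Set.ncard_empty]

theorem hybridG_eq_sum_schurPoly (hS : IsSkewShape lam mu R C) :
    hybridG lam mu n = ∑ T ∈ svrppFinset hS n with IsBalanced C T,
      twMonomial n (ceq lam mu T) (exv lam mu T) * schurPoly n (ircont T) := by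
  have hx : Function.Injective (xVar n) := fun v w h ↦
    Sum.inl_injective (MvPolynomial.X_injective h)
  refine mul_left_cancel₀ (alternant_staircase_ne_zero hx) ?_
  rw [hybridG_eq_sum hS, alternant_mul_sum_svrppFinset hS
    (fun T T' hceq hexv ↦ by rw [hceq, hexv]), Finset.mul_sum]
  refine Finset.sum_congr rfl fun T hT ↦ ?_
  rw [Finset.mem_filter, mem_svrppFinset] at hT
  rw [mul_left_comm, alternant_mul_schurPoly (isPartitionWeight_ircont hS hT.1 hT.2)]
  rfl

theorem Hcoef_eq_card (hS : IsSkewShape lam mu R C) (nu ga th : ℕ → ℕ) :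
    Hcoef lam mu n R C nu ga th = {T ∈ {T ∈ svrppFinset hS n | IsBalanced C T} |
      ceq lam mu T = ga ∧ exv lam mu T = th ∧ ircont T = nu}.card := by
  rw [Hcoef, ← Set.ncard_coe_finset]
  congr 1
  ext T
  simp only [Set.mem_ofPred_eq, Finset.coe_filter, Finset.mem_filter, mem_svrppFinset, funext_iff]
  constructor
  · rintro ⟨hT, hnu, hga, hth, hlattice⟩
    exact ⟨⟨hT, (isReverseLatticeWord_readWord_iff hS hT).1 hlattice⟩, hga, hth, hnu⟩
  · rintro ⟨⟨hT, hbal⟩, hga, hth, hnu⟩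
    exact ⟨hT, hnu, hga, hth, (isReverseLatticeWord_readWord_iff hS hT).2 hbal⟩

end Expansion

end HybridGrothendieck

/-- **Schur expansion.** For any skew shape `lam/mu` and `n ≥ 1`,
`G_{lam/mu}(x_1,…,x_n; t; w) = Σ_γ Σ_θ t^γ w^θ Σ_ν H^{ν,γ,θ}_{lam/mu,n} s_ν(x_1,…,x_n)`,
where `H^{ν,γ,θ}_{lam/mu,n}` counts the `T ∈ SVRPP^n(lam/mu)` with `ircont(T) = ν`,
`ceq(T) = γ`, `ex(T) = θ` whose reading word is a reverse lattice word. In particular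
the hybrid Grothendieck polynomial is Schur positive. -/
theorem hybridG_schur_expansion (lam mu : ℕ → ℕ)
    (hlam : IsPartitionFun lam) (hmu : IsPartitionFun mu) (hsub : ∀ r, mu r ≤ lam r)
    (R C : ℕ) (hR : ∀ r, R ≤ r → lam r = 0) (hC : ∀ r, lam r ≤ C)
    (n : ℕ) (hn : 1 ≤ n) :
    hybridG lam mu n =
      ∑ᶠ ga : ℕ → ℕ, ∑ᶠ th : ℕ → ℕ, ∑ᶠ nu : ℕ → ℕ,
        (∏ᶠ r : ℕ, MvPolynomial.X (Sum.inr (Sum.inl r)) ^ ga r) *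
        (∏ᶠ r : ℕ, MvPolynomial.X (Sum.inr (Sum.inr r)) ^ th r) *
        (Hcoef lam mu n R C nu ga th : MvPolynomial (Fin n ⊕ ℕ ⊕ ℕ) ℤ) *
        schurPoly n nu := by
  have hS : HybridGrothendieck.IsSkewShape lam mu R C := ⟨hlam.1, hmu.1, hsub, hR, hC⟩
  rw [HybridGrothendieck.hybridG_eq_sum_schurPoly hS,
    ← HybridGrothendieck.finsum_card_filter_mul _ (ceq lam mu) (exv lam mu) ircont
      fun ga th nu ↦ HybridGrothendieck.twMonomial n ga th * schurPoly n nu]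
  refine finsum_congr fun ga ↦ finsum_congr fun th ↦ finsum_congr fun nu ↦ ?_
  rw [HybridGrothendieck.Hcoef_eq_card hS, HybridGrothendieck.twMonomial]
  ring
end

section
/- For any partition λ and any n ≥ 1, the polynomial G_λ(x_1,...,x_n; 1; 1) (the hybrid Grothendieck polynomial of straight shape λ with all t_i = w_i = 1) has saturated Newton polytope: every lattice point of its Newton polytope is the exponent vector of a monomial appearing with nonzero coefficient. -/
open scoped Classical

/-- The hybrid Grothendieck polynomial of straight shape `lam` with all `t_i = w_i = 1`:
`G_lam(x_1,…,x_n; 1; 1) = Σ_{T ∈ SVRPP^n(lam)} x^{ircont(T)}`, where `x_{v+1} = X v`. -/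
noncomputable def hybridG11 (lam : ℕ → ℕ) (n : ℕ) : MvPolynomial (Fin n) ℤ :=
  ∑ᶠ T ∈ {T : ℕ → ℕ → Finset ℕ | IsSVRPPn lam (fun _ => 0) n T},
    ∏ v : Fin n, MvPolynomial.X v ^ ircont T ((v : ℕ) + 1)

/-!
Put `μ i = min_{k ≤ i} (lam k + k)`. The exponent vectors of `hybridG11 lam n` are exactly the
natural vectors `r` with `∑ v ∈ I, r v ≤ μ 0 + ⋯ + μ (#I - 1)` for every set `I` of letters and
`lam 0 ≤ ∑ v, r v`. These inequalities cut out a convex set, so they hold on the Newton polytope,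
and every lattice point of the latter satisfies them.

The description is proved by induction on the number of letters. The boxes of a tableau containing
a letter other than the largest one form a partition `a` inside `lam`, and the columns containing
the largest letter can be any set between the columns of `lam / a` and the columns where that
letter fits. Given `r`, take the horizontal strip of size `m`, the last entry of `r`, off `μ` as low
as possible and shift the `i`-th remaining row left by `i`: this `a` leaves room for the largest
letter in `m` columns, and its own sequence of minima is large enough for the other entries of `r`.
Truncating `a` and `lam` at the sum of those entries takes care of the lower bound on the degree,
and a suitable partition is found between the two truncations.
-/

namespace IsPartitionFun

variable {lam a : ℕ → ℕ}

lemma antitone (hlam : IsPartitionFun lam) : Antitone lam :=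
  antitone_nat_of_succ_le hlam.1

lemma of_antitone_of_le (hlam : IsPartitionFun lam) (ha : Antitone a) (hle : a ≤ lam) :
    IsPartitionFun a := by
  obtain ⟨-, N, hN⟩ := hlam
  exact ⟨fun i => ha i.le_succ, N, fun i hi => Nat.eq_zero_of_le_zero (hN i hi ▸ hle i)⟩

end IsPartitionFun

namespace HybridGrothendieck

open Finset

variable {lam a b : ℕ → ℕ} {n m : ℕ}

/-! ### Tableaux and exponent vectors -/

/-- The SVRPPs of straight shape with entries in `{1, …, n}`, with the shape read off from the
nonempty boxes, so that the monotonicity conditions need no side conditions. -/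
structure IsTableau (lam : ℕ → ℕ) (n : ℕ) (T : ℕ → ℕ → Finset ℕ) : Prop where
  nonempty_iff : ∀ i j, (T i j).Nonempty ↔ j < lam i
  subset_Icc : ∀ i j, T i j ⊆ Icc 1 n
  row_le : ∀ i j, FinsetLE (T i j) (T i (j + 1))
  col_le : ∀ i j, FinsetLE (T i j) (T (i + 1) j)

lemma isSVRPPn_iff_isTableau {T : ℕ → ℕ → Finset ℕ} :
    IsSVRPPn lam (fun _ => 0) n T ↔ IsTableau lam n T := by
  have hshape (i j : ℕ) : InShape lam (fun _ => 0) i j ↔ j < lam i := by simp [InShape]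
  simp only [IsSVRPPn, IsSVRPP, hshape]
  constructor
  · rintro ⟨⟨hempty, hne, -, hrow, hcol⟩, hsub⟩
    have hlt {i j x : ℕ} (hx : x ∈ T i j) : j < lam i := by
      by_contra hj
      simp [hempty i j hj] at hx
    exact ⟨fun i j => ⟨fun ⟨_, hx⟩ => hlt hx, hne i j⟩, hsub,
      fun i j x hx y hy => hrow i j (hlt hx) (hlt hy) x hx y hy,
      fun i j x hx y hy => hcol i j (hlt hx) (hlt hy) x hx y hy⟩
  · intro hT
    exact ⟨⟨fun i j hj => not_nonempty_iff_eq_empty.1 fun hne => hj ((hT.nonempty_iff i j).1 hne),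
      fun i j => (hT.nonempty_iff i j).2, fun i j x hx => (mem_Icc.1 (hT.subset_Icc i j hx)).1,
      fun i j _ _ => hT.row_le i j, fun i j _ _ => hT.col_le i j⟩, hT.subset_Icc⟩

lemma IsTableau.lt_of_mem {T : ℕ → ℕ → Finset ℕ} (hT : IsTableau lam n T) {i j x : ℕ}
    (hx : x ∈ T i j) : j < lam i :=
  (hT.nonempty_iff i j).1 ⟨x, hx⟩

lemma finite_setOf_isTableau (hlam : IsPartitionFun lam) (n : ℕ) :
    {T | IsTableau lam n T}.Finite := by
  obtain ⟨N, hN⟩ := hlam.2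
  let entries (T : ℕ → ℕ → Finset ℕ) : Finset (ℕ × ℕ × ℕ) :=
    {e ∈ range N ×ˢ range (lam 0) ×ˢ Icc 1 n | e.2.2 ∈ T e.1 e.2.1}
  have mem_entries {T} (hT : IsTableau lam n T) {i j x : ℕ} :
      (i, j, x) ∈ entries T ↔ x ∈ T i j := by
    simp only [entries, mem_filter, mem_product, mem_range, and_iff_right_iff_imp]
    intro hx
    have hj := hT.lt_of_mem hx
    refine ⟨?_, hj.trans_le (hlam.antitone i.zero_le), hT.subset_Icc i j hx⟩
    by_contra hi
    have := hN i (not_lt.1 hi)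
    omega
  refine Set.Finite.of_injOn (f := entries)
    (t := ((range N ×ˢ range (lam 0) ×ˢ Icc 1 n).powerset : Set _))
    (fun T _ => mem_coe.2 (mem_powerset.2 (filter_subset _ _))) ?_ (finite_toSet _)
  intro T hT S hS hTS
  ext i j x
  rw [← mem_entries hT, ← mem_entries hS, hTS]

/-- `r` is the `ircont` of some tableau of shape `lam`, that is, an exponent vector of
`hybridG11 lam n`. The letter counted by `r v` is `v + 1`, because `X v` stands for `x_{v+1}`. -/
def IsExponent (lam : ℕ → ℕ) (n : ℕ) (r : Fin n → ℕ) : Prop :=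
  ∃ T, IsTableau lam n T ∧ ∀ v : Fin n, ircont T (v + 1) = r v

lemma mem_support_finsum_mem_monomial {ι σ R : Type*} [CommSemiring R] [CharZero R]
    {s : Set ι} (hs : s.Finite) (e : ι → σ →₀ ℕ) (d : σ →₀ ℕ) :
    d ∈ (∑ᶠ t ∈ s, MvPolynomial.monomial (e t) (1 : R)).support ↔ ∃ t ∈ s, e t = d := by
  rw [finsum_mem_eq_finite_toFinset_sum _ hs, MvPolynomial.mem_support_iff,
    MvPolynomial.coeff_sum]
  simp only [MvPolynomial.coeff_monomial, sum_boole]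
  simp [filter_eq_empty_iff]

lemma mem_support_hybridG11_iff (hlam : IsPartitionFun lam) (d : Fin n →₀ ℕ) :
    d ∈ (hybridG11 lam n).support ↔ IsExponent lam n d := by
  have hmonomial (T : ℕ → ℕ → Finset ℕ) :
      ∏ v : Fin n, (MvPolynomial.X v : MvPolynomial (Fin n) ℤ) ^ ircont T (v + 1) =
        MvPolynomial.monomial
          (Finsupp.equivFunOnFinite.symm fun v : Fin n => ircont T (v + 1)) 1 := by
    simp [MvPolynomial.monomial_eq, Finsupp.prod_fintype]
  simp only [hybridG11, isSVRPPn_iff_isTableau, hmonomial]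
  rw [mem_support_finsum_mem_monomial (finite_setOf_isTableau hlam n)]
  simp [IsExponent, Finsupp.ext_iff]

/-! ### Removing the largest letter -/

/-- The columns of the skew shape `lam / a`. -/
noncomputable def newColumns (lam a : ℕ → ℕ) : Finset ℕ :=
  {j ∈ range (lam 0) | ∃ i, a i ≤ j ∧ j < lam i}

/-- The columns of `lam` containing a box that lies in `lam / a` or is a corner of `a`. If the
letters at most `n` occupy `a`, these are the columns where the letter `n + 1` may occur. -/
noncomputable def openColumns (lam a : ℕ → ℕ) : Finset ℕ :=
  {j ∈ range (lam 0) | ∃ i, a i ≤ j + 1 ∧ a (i + 1) ≤ j ∧ j < lam i}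

lemma mem_newColumns (hlam : Antitone lam) {j : ℕ} :
    j ∈ newColumns lam a ↔ ∃ i, a i ≤ j ∧ j < lam i := by
  simp only [newColumns, mem_filter, mem_range, and_iff_right_iff_imp]
  rintro ⟨i, -, hj⟩
  exact hj.trans_le (hlam i.zero_le)

lemma mem_openColumns (hlam : Antitone lam) {j : ℕ} :
    j ∈ openColumns lam a ↔ ∃ i, a i ≤ j + 1 ∧ a (i + 1) ≤ j ∧ j < lam i := by
  simp only [openColumns, mem_filter, mem_range, and_iff_right_iff_imp]
  rintro ⟨i, -, -, hj⟩
  exact hj.trans_le (hlam i.zero_le)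

lemma newColumns_subset_openColumns (ha : Antitone a) : newColumns lam a ⊆ openColumns lam a := by
  refine monotone_filter_right _ fun j _ ⟨i, hij, hj⟩ => ⟨i, by omega, ?_, hj⟩
  exact (ha i.le_succ).trans hij

lemma openColumns_anti (hab : a ≤ b) : openColumns lam b ⊆ openColumns lam a :=
  monotone_filter_right _ fun _ _ ⟨i, hi, hi', hj⟩ =>
    ⟨i, (hab i).trans hi, (hab (i + 1)).trans hi', hj⟩

lemma le_add_card_newColumns (lam a : ℕ → ℕ) : lam 0 ≤ a 0 + #(newColumns lam a) := by
  have hsub : Ico (a 0) (lam 0) ⊆ newColumns lam a := fun j hj => by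
    obtain ⟨haj, hj⟩ := mem_Ico.1 hj
    exact mem_filter.2 ⟨mem_range.2 hj, 0, haj, hj⟩
  have := card_le_card hsub
  rw [Nat.card_Ico] at this
  omega

lemma card_newColumns_inf_const_le (hlam : Antitone lam) (q : ℕ) :
    #(newColumns lam (lam ⊓ fun _ => q)) ≤ lam 0 - q := by
  rw [← Nat.card_Ico]
  refine card_le_card fun j hj => ?_
  obtain ⟨i, hi, hj⟩ := (mem_newColumns hlam).1 hj
  have := hlam i.zero_le
  simp only [Pi.inf_apply] at hi
  rw [mem_Ico]
  omega

lemma exists_succ_le_lt_of_le_lt {f : ℕ → ℕ} {N j : ℕ} (hN : f N ≤ j) (h0 : j < f 0) :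
    ∃ i < N, f (i + 1) ≤ j ∧ j < f i := by
  induction N with
  | zero => omega
  | succ N ih =>
    by_cases hj : j < f N
    · exact ⟨N, N.lt_succ_self, hN, hj⟩
    · obtain ⟨i, hi, hij⟩ := ih (not_lt.1 hj)
      exact ⟨i, hi.trans N.lt_succ_self, hij⟩

lemma range_sdiff_openColumns (hlam : Antitone lam) (ha : Antitone a) (hle : a ≤ lam)
    {N : ℕ} (hN : lam N = 0) :
    range (lam 0) \ openColumns lam a =
      (range N).biUnion fun i => Ico (lam (i + 1)) (a i - 1) := by
  ext j
  simp only [mem_sdiff, mem_range, mem_openColumns hlam, mem_biUnion, mem_Ico]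
  constructor
  · rintro ⟨hj0, hclosed⟩
    obtain ⟨i, hiN, hij, hj⟩ := exists_succ_le_lt_of_le_lt (hN.trans_le j.zero_le) hj0
    have : j + 1 < a i := by
      by_contra hai
      exact hclosed ⟨i, not_lt.1 hai, (hle (i + 1)).trans hij, hj⟩
    exact ⟨i, hiN, hij, by omega⟩
  · rintro ⟨i, -, hij, hj⟩
    have hai : a i ≤ lam i := hle i
    have hi0 : lam i ≤ lam 0 := hlam i.zero_le
    refine ⟨by omega, ?_⟩
    rintro ⟨k, hk, -, hjk⟩
    have hki : k ≤ i := by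
      by_contra hik
      have : lam k ≤ lam (i + 1) := hlam (not_le.1 hik)
      omega
    have := ha hki
    omega

lemma card_openColumns_add_sum (hlam : Antitone lam) (ha : Antitone a) (hle : a ≤ lam)
    {N : ℕ} (hN : lam N = 0) :
    #(openColumns lam a) + ∑ i ∈ range N, (a i - 1 - lam (i + 1)) = lam 0 := by
  have hdisj : (range N : Set ℕ).PairwiseDisjoint fun i => Ico (lam (i + 1)) (a i - 1) := by
    refine (hlam.pairwise_disjoint_on_Ico_succ.set_pairwise _).mono' ?_
    intro i k hik
    simp only [Function.onFun, Nat.succ_eq_succ, ← coe_Ico, disjoint_coe] at hik ⊢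
    exact hik.mono (Ico_subset_Ico_right ((Nat.sub_le _ _).trans (hle i)))
      (Ico_subset_Ico_right ((Nat.sub_le _ _).trans (hle k)))
  have hcard := card_biUnion hdisj
  simp only [Nat.card_Ico] at hcard
  have hsub : openColumns lam a ⊆ range (lam 0) := filter_subset _ _
  rw [← hcard, ← range_sdiff_openColumns hlam ha hle hN, add_comm,
    card_sdiff_add_card_eq_card hsub, card_range]

lemma card_openColumns_add_sum_le (hlam : IsPartitionFun lam) (ha : Antitone a) (hle : a ≤ lam)
    (k : ℕ) : #(openColumns lam a) + ∑ i ∈ range k, (a i - 1 - lam (i + 1)) ≤ lam 0 := by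
  obtain ⟨N, hN⟩ := hlam.2
  rw [← card_openColumns_add_sum hlam.antitone ha hle (hN (max k N) (le_max_right _ _))]
  gcongr
  exact le_max_left _ _

/-- The condition for the tableaux of shape `a` to extend to tableaux of shape `lam` by a new
largest letter that occurs in exactly `m` columns. -/
structure IsBranch (lam a : ℕ → ℕ) (m : ℕ) : Prop where
  isPartitionFun : IsPartitionFun a
  le : a ≤ lam
  card_newColumns_le : #(newColumns lam a) ≤ m
  le_card_openColumns : m ≤ #(openColumns lam a)

lemma exists_isBranch_between (ha : Antitone a) (hb : IsPartitionFun b) (hab : a ≤ b)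
    (hle : b ≤ lam) (hnew : #(newColumns lam b) ≤ m) (hopen : m ≤ #(openColumns lam a)) :
    ∃ c, IsBranch lam c m ∧ a ≤ c ∧ c ≤ b := by
  let c (s : ℕ) : ℕ → ℕ := a ⊔ (b ⊓ fun _ => s)
  have hcb (s : ℕ) : c s ≤ b := sup_le hab inf_le_left
  have hc (s : ℕ) : IsPartitionFun (c s) := hb.of_antitone_of_le
    (ha.sup (hb.antitone.inf antitone_const)) (hcb s)
  have hc_top : c (b 0) = b := by
    simp [c, inf_eq_left.2 (show b ≤ fun _ => b 0 from fun i => hb.antitone i.zero_le), hab]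
  have hstep (s : ℕ) : #(newColumns lam (c s)) ≤ #(newColumns lam (c (s + 1))) + 1 := by
    refine (card_le_card fun j hj => ?_).trans (card_insert_le s _)
    simp only [newColumns, c, mem_insert, mem_filter, Pi.sup_apply, Pi.inf_apply] at hj ⊢
    obtain ⟨hj0, i, hij, hj⟩ := hj
    by_cases hjs : j = s
    · exact Or.inl hjs
    · exact Or.inr ⟨hj0, i, by omega, hj⟩
  suffices h : ∀ s, #(newColumns lam (c s)) ≤ m → ∃ t,
      #(newColumns lam (c t)) ≤ m ∧ m ≤ #(openColumns lam (c t)) by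
    obtain ⟨t, hnew, hopen⟩ := h (b 0) (by rwa [hc_top])
    exact ⟨c t, ⟨hc t, (hcb t).trans hle, hnew, hopen⟩, le_sup_left, hcb t⟩
  intro s
  induction s with
  | zero =>
    have hc_zero : c 0 = a := by
      ext i
      simp [c]
    exact fun hs => ⟨0, hs, hc_zero ▸ hopen⟩
  | succ s ih =>
    intro hs
    by_cases hs' : #(newColumns lam (c s)) ≤ m
    · exact ih hs'
    · have hopen := card_le_card (newColumns_subset_openColumns (lam := lam) (hc (s + 1)).antitone)
      have := hstep s
      exact ⟨s + 1, hs, by omega⟩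

lemma isExponent_zero_iff (hlam : Antitone lam) (r : Fin 0 → ℕ) :
    IsExponent lam 0 r ↔ lam 0 = 0 := by
  constructor
  · rintro ⟨T, hT, -⟩
    by_contra h0
    obtain ⟨x, hx⟩ := (hT.nonempty_iff 0 0).2 (Nat.pos_of_ne_zero h0)
    simpa using hT.subset_Icc 0 0 hx
  · intro h0
    have hlam0 (i : ℕ) : lam i = 0 := Nat.eq_zero_of_le_zero (h0 ▸ hlam i.zero_le)
    exact ⟨fun _ _ => ∅, ⟨by simp [hlam0], by simp, by simp [FinsetLE], by simp [FinsetLE]⟩,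
      fun v => v.elim0⟩

lemma exists_forall_lt_iff_of_succ {P : ℕ → Prop} (hP : ∀ j, P (j + 1) → P j) (hex : ∃ j, ¬ P j) :
    ∃ k, ∀ j, j < k ↔ P j := by
  refine ⟨Nat.find hex, fun j => ?_⟩
  simp only [Nat.lt_find_iff, not_not]
  exact ⟨fun h => h j le_rfl, fun hj i hij => antitone_nat_of_succ_le (f := P) hP hij hj⟩

lemma IsTableau.exists_isTableau_filter_le (hlam : IsPartitionFun lam) {T : ℕ → ℕ → Finset ℕ}
    (hT : IsTableau lam (n + 1) T) :
    ∃ a, IsPartitionFun a ∧ a ≤ lam ∧ IsTableau a n fun i j => {x ∈ T i j | x ≤ n} := by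
  have hleft (i j : ℕ) (hne : ({x ∈ T i (j + 1) | x ≤ n}).Nonempty) :
      ({x ∈ T i j | x ≤ n}).Nonempty := by
    obtain ⟨x, hx⟩ := hne
    obtain ⟨hx, hxn⟩ := mem_filter.1 hx
    obtain ⟨y, hy⟩ := (hT.nonempty_iff i j).2 (j.lt_succ_self.trans (hT.lt_of_mem hx))
    exact ⟨y, mem_filter.2 ⟨hy, (hT.row_le i j y hy x hx).trans hxn⟩⟩
  have hfinite (i : ℕ) : ∃ j, ¬ ({x ∈ T i j | x ≤ n}).Nonempty :=
    ⟨lam i, fun ⟨_, hx⟩ => (hT.lt_of_mem (mem_filter.1 hx).1).false⟩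
  choose a ha using fun i =>
    exists_forall_lt_iff_of_succ (P := fun j => ({x ∈ T i j | x ≤ n}).Nonempty)
      (hleft i) (hfinite i)
  have hle : a ≤ lam := fun i => by
    refine le_of_forall_lt fun j hj => ?_
    obtain ⟨x, hx⟩ := (ha i j).1 hj
    exact hT.lt_of_mem (mem_filter.1 hx).1
  have hanti : Antitone a := by
    refine antitone_nat_of_succ_le fun i => le_of_forall_lt fun j hj => (ha i j).2 ?_
    obtain ⟨x, hx⟩ := (ha (i + 1) j).1 hj
    obtain ⟨hx, hxn⟩ := mem_filter.1 hx
    obtain ⟨y, hy⟩ := (hT.nonempty_iff i j).2 ((hT.lt_of_mem hx).trans_le (hlam.1 i))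
    exact ⟨y, mem_filter.2 ⟨hy, (hT.col_le i j y hy x hx).trans hxn⟩⟩
  refine ⟨a, hlam.of_antitone_of_le hanti hle, hle, fun i j => (ha i j).symm, ?_, ?_, ?_⟩
  · intro i j x hx
    obtain ⟨hx, hxn⟩ := mem_filter.1 hx
    exact mem_Icc.2 ⟨(mem_Icc.1 (hT.subset_Icc i j hx)).1, hxn⟩
  · exact fun i j x hx y hy => hT.row_le i j x (mem_filter.1 hx).1 y (mem_filter.1 hy).1
  · exact fun i j x hx y hy => hT.col_le i j x (mem_filter.1 hx).1 y (mem_filter.1 hy).1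

lemma IsTableau.newColumns_subset (hlam : Antitone lam) {T : ℕ → ℕ → Finset ℕ}
    (hT : IsTableau lam (n + 1) T) (ha : IsTableau a n fun i j => {x ∈ T i j | x ≤ n}) :
    (newColumns lam a : Set ℕ) ⊆ {j | ∃ i, n + 1 ∈ T i j} := by
  intro j hj
  obtain ⟨i, hij, hj⟩ := (mem_newColumns hlam).1 (mem_coe.1 hj)
  obtain ⟨x, hx⟩ := (hT.nonempty_iff i j).2 hj
  have hxn : ¬ x ≤ n := fun hxn => hij.not_gt (ha.lt_of_mem (mem_filter.2 ⟨hx, hxn⟩))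
  obtain rfl : x = n + 1 := by
    have := mem_Icc.1 (hT.subset_Icc i j hx)
    omega
  exact ⟨i, hx⟩

lemma IsTableau.subset_openColumns (hlam : Antitone lam) {T : ℕ → ℕ → Finset ℕ}
    (hT : IsTableau lam (n + 1) T) (ha : IsTableau a n fun i j => {x ∈ T i j | x ≤ n}) :
    {j | ∃ i, n + 1 ∈ T i j} ⊆ (openColumns lam a : Set ℕ) := by
  rintro j ⟨i, hi⟩
  refine mem_coe.2 ((mem_openColumns hlam).2 ⟨i, ?_, ?_, hT.lt_of_mem hi⟩) <;> by_contra! hj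
  · obtain ⟨x, hx⟩ := (ha.nonempty_iff i (j + 1)).2 hj
    obtain ⟨hx, hxn⟩ := mem_filter.1 hx
    have := hT.row_le i j _ hi x hx
    omega
  · obtain ⟨x, hx⟩ := (ha.nonempty_iff (i + 1) j).2 hj
    obtain ⟨hx, hxn⟩ := mem_filter.1 hx
    have := hT.col_le i j _ hi x hx
    omega

/-- The filling obtained from `R`, a tableau of shape `a`, by adding the letter `n + 1` in the
columns of `C` to every box of `lam` with no box of `a` to its right or below it. -/
noncomputable def addLetter (lam a : ℕ → ℕ) (n : ℕ) (R : ℕ → ℕ → Finset ℕ) (C : Finset ℕ)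
    (i j : ℕ) : Finset ℕ :=
  if j ∈ C ∧ a i ≤ j + 1 ∧ a (i + 1) ≤ j ∧ j < lam i then insert (n + 1) (R i j) else R i j

lemma mem_addLetter {R : ℕ → ℕ → Finset ℕ} {C : Finset ℕ} {i j x : ℕ} :
    x ∈ addLetter lam a n R C i j ↔
      (x = n + 1 ∧ j ∈ C ∧ a i ≤ j + 1 ∧ a (i + 1) ≤ j ∧ j < lam i) ∨ x ∈ R i j := by
  unfold addLetter
  split_ifs with h <;> simp [h]

lemma IsTableau.addLetter (hlam : Antitone lam) (ha : Antitone a) (hle : a ≤ lam)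
    {R : ℕ → ℕ → Finset ℕ} (hR : IsTableau a n R) {C : Finset ℕ} (hC : newColumns lam a ⊆ C) :
    IsTableau lam (n + 1) (addLetter lam a n R C) := by
  have hbound {i j x : ℕ} (hx : x ∈ HybridGrothendieck.addLetter lam a n R C i j) :
      1 ≤ x ∧ x ≤ n + 1 := by
    rcases mem_addLetter.1 hx with ⟨rfl, -⟩ | hx
    · omega
    · have := mem_Icc.1 (hR.subset_Icc i j hx)
      omega
  refine ⟨fun i j => ⟨?_, fun hj => ?_⟩, fun i j x hx => mem_Icc.2 (hbound hx),
    fun i j x hx y hy => ?_, fun i j x hx y hy => ?_⟩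
  · rintro ⟨x, hx⟩
    rcases mem_addLetter.1 hx with ⟨-, -, -, -, hj⟩ | hx
    · exact hj
    · exact (hR.lt_of_mem hx).trans_le (hle i)
  · by_cases hja : j < a i
    · obtain ⟨x, hx⟩ := (hR.nonempty_iff i j).2 hja
      exact ⟨x, mem_addLetter.2 (Or.inr hx)⟩
    · have hjC := hC ((mem_newColumns hlam).2 ⟨i, not_lt.1 hja, hj⟩)
      have : a (i + 1) ≤ a i := ha i.le_succ
      exact ⟨n + 1, mem_addLetter.2 (Or.inl ⟨rfl, hjC, by omega, by omega, hj⟩)⟩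
  · rcases mem_addLetter.1 hy with ⟨rfl, -⟩ | hyR
    · exact (hbound hx).2
    · rcases mem_addLetter.1 hx with ⟨-, -, hij, -⟩ | hxR
      · exact absurd (hR.lt_of_mem hyR) hij.not_gt
      · exact hR.row_le i j x hxR y hyR
  · rcases mem_addLetter.1 hy with ⟨rfl, -⟩ | hyR
    · exact (hbound hx).2
    · rcases mem_addLetter.1 hx with ⟨-, -, -, hij, -⟩ | hxR
      · exact absurd (hR.lt_of_mem hyR) hij.not_gt
      · exact hR.col_le i j x hxR y hyR

lemma ircont_addLetter_succ (hlam : Antitone lam) {R : ℕ → ℕ → Finset ℕ}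
    (hR : IsTableau a n R) {C : Finset ℕ} (hC : C ⊆ openColumns lam a) :
    ircont (addLetter lam a n R C) (n + 1) = #C := by
  rw [ircont, ← Set.ncard_coe_finset]
  congr 1
  ext j
  constructor
  · rintro ⟨i, hi⟩
    rcases mem_addLetter.1 hi with ⟨-, hj, -⟩ | hi
    · exact hj
    · have := mem_Icc.1 (hR.subset_Icc i j hi)
      omega
  · intro hj
    obtain ⟨i, hi⟩ := (mem_openColumns hlam).1 (hC hj)
    exact ⟨i, mem_addLetter.2 (Or.inl ⟨rfl, hj, hi⟩)⟩

lemma ircont_addLetter_of_ne {R : ℕ → ℕ → Finset ℕ} {C : Finset ℕ} {v : ℕ} (hv : v ≠ n + 1) :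
    ircont (addLetter lam a n R C) v = ircont R v := by
  simp [ircont, mem_addLetter, hv]

lemma isExponent_succ_iff (hlam : IsPartitionFun lam) (r : Fin (n + 1) → ℕ) :
    IsExponent lam (n + 1) r ↔
      ∃ a, IsBranch lam a (r (Fin.last n)) ∧ IsExponent a n (Fin.init r) := by
  constructor
  · rintro ⟨T, hT, hr⟩
    obtain ⟨a, ha, hle, hTa⟩ := hT.exists_isTableau_filter_le hlam
    have hnew := hT.newColumns_subset hlam.antitone hTa
    have hopen := hT.subset_openColumns hlam.antitone hTa
    have hlast : ircont T (n + 1) = r (Fin.last n) := hr (Fin.last n)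
    refine ⟨a, ⟨ha, hle, ?_, ?_⟩, _, hTa, fun v => ?_⟩
    · rw [← hlast, ← Set.ncard_coe_finset]
      exact Set.ncard_le_ncard hnew ((finite_toSet _).subset hopen)
    · rw [← hlast, ← Set.ncard_coe_finset]
      exact Set.ncard_le_ncard hopen (finite_toSet _)
    · have hv : (v : ℕ) + 1 ≤ n := v.2
      rw [Fin.init, ← hr]
      simp [ircont, hv]
  · rintro ⟨a, ⟨ha, hle, hnew, hopen⟩, R, hR, hr⟩
    obtain ⟨C, hC, hC', hcard⟩ := exists_subsuperset_card_eq
      (newColumns_subset_openColumns (lam := lam) ha.antitone) hnew hopen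
    refine ⟨_, hR.addLetter hlam.antitone ha.antitone hle hC, Fin.lastCases ?_ fun v => ?_⟩
    · exact (ircont_addLetter_succ hlam.antitone hR hC').trans hcard
    · rw [Fin.val_castSucc, ircont_addLetter_of_ne (by omega), hr, Fin.init]

/-! ### The dominant exponent vector -/

/-- The sequence `μ i = min_{k ≤ i} (lam k + k)`. Its first `n` terms dominate the sorted exponent
vectors of `hybridG11 lam n`: the sum of any `k` exponents is at most `μ 0 + ⋯ + μ (k - 1)`. -/
def topExponent (lam : ℕ → ℕ) : ℕ → ℕ
  | 0 => lam 0
  | i + 1 => min (topExponent lam i) (lam (i + 1) + (i + 1))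

lemma topExponent_antitone (lam : ℕ → ℕ) : Antitone (topExponent lam) :=
  antitone_nat_of_succ_le fun _ => min_le_left _ _

lemma topExponent_le (lam : ℕ → ℕ) (i : ℕ) : topExponent lam i ≤ lam i + i := by
  cases i with
  | zero => exact le_rfl
  | succ i => exact min_le_right _ _

lemma le_topExponent {f : ℕ → ℕ} (hf : Antitone f) (hle : ∀ i, f i ≤ lam i + i) :
    f ≤ topExponent lam := by
  intro i
  induction i with
  | zero => exact hle 0
  | succ i ih => exact le_min ((hf i.le_succ).trans ih) (hle (i + 1))

lemma topExponent_mono (hab : a ≤ b) : topExponent a ≤ topExponent b :=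
  le_topExponent (topExponent_antitone a) fun i =>
    (topExponent_le a i).trans (Nat.add_le_add_right (hab i) i)

lemma sum_topExponent_add_card_openColumns_le (hlam : IsPartitionFun lam) (ha : Antitone a)
    (hle : a ≤ lam) (k : ℕ) :
    ∑ i ∈ range k, topExponent a i + #(openColumns lam a) ≤
      ∑ i ∈ range (k + 1), topExponent lam i := by
  have hterm (i : ℕ) :
      topExponent a i ≤ topExponent lam (i + 1) + (a i - 1 - lam (i + 1)) := by
    have hmono : topExponent a i ≤ topExponent lam i := topExponent_mono hle i
    have := topExponent_le a i
    rw [topExponent]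
    omega
  calc ∑ i ∈ range k, topExponent a i + #(openColumns lam a)
      ≤ ∑ i ∈ range k, (topExponent lam (i + 1) + (a i - 1 - lam (i + 1))) +
          #(openColumns lam a) := by
        gcongr with i
        exact hterm i
    _ = ∑ i ∈ range k, topExponent lam (i + 1) +
          (#(openColumns lam a) + ∑ i ∈ range k, (a i - 1 - lam (i + 1))) := by
        rw [sum_add_distrib]
        ring
    _ ≤ ∑ i ∈ range k, topExponent lam (i + 1) + topExponent lam 0 := by
        gcongr
        exact card_openColumns_add_sum_le hlam ha hle k
    _ = ∑ i ∈ range (k + 1), topExponent lam i := (sum_range_succ' _ _).symm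

/-- For antitone `μ` and `m ≤ μ 0`, the partition obtained from `μ` by shortening each of its first
`m` columns by one box and sorting the columns again; it is `μ` minus a horizontal strip of size
`m`, with the boxes removed from the lowest rows possible. -/
def peel (μ : ℕ → ℕ) (m : ℕ) (i : ℕ) : ℕ :=
  μ i - m + min (μ (i + 1)) m

section Peel

variable {μ : ℕ → ℕ}

lemma peel_antitone (hμ : Antitone μ) (m : ℕ) : Antitone (peel μ m) := by
  refine antitone_nat_of_succ_le fun i => ?_
  have h : μ (i + 1) ≤ μ i := hμ i.le_succ
  have h' : μ (i + 1 + 1) ≤ μ (i + 1) := hμ (i + 1).le_succ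
  simp only [peel]
  omega

lemma peel_le (hμ : Antitone μ) (m i : ℕ) : peel μ m i ≤ μ i := by
  have : μ (i + 1) ≤ μ i := hμ i.le_succ
  simp only [peel]
  omega

lemma succ_le_peel (hμ : Antitone μ) (m i : ℕ) : μ (i + 1) ≤ peel μ m i := by
  have : μ (i + 1) ≤ μ i := hμ i.le_succ
  simp only [peel]
  omega

lemma sum_peel_add (hm : m ≤ μ 0) (k : ℕ) :
    ∑ i ∈ range k, peel μ m i + m = ∑ i ∈ range k, μ i + min (μ k) m := by
  induction k with
  | zero => simp [hm]
  | succ k ih =>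
    rw [sum_range_succ, sum_range_succ, peel]
    omega

end Peel

lemma le_card_openColumns_of_le_peel (hlam : IsPartitionFun lam) (ha : Antitone a) (hle : a ≤ lam)
    (hm : m ≤ lam 0) (hpeel : ∀ i, a i ≤ peel (topExponent lam) m i - i) :
    m ≤ #(openColumns lam a) := by
  obtain ⟨N, hN⟩ := hlam.2
  have hterm (i : ℕ) :
      a i - 1 - lam (i + 1) + topExponent lam (i + 1) ≤ peel (topExponent lam) m i := by
    have := hpeel i
    have := topExponent_le lam (i + 1)
    have := succ_le_peel (topExponent_antitone lam) m i
    omega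
  have hsum := sum_le_sum fun i (_ : i ∈ range N) => hterm i
  rw [sum_add_distrib] at hsum
  have htelescope := sum_peel_add (μ := topExponent lam) hm N
  have hsplit : ∑ i ∈ range N, topExponent lam i + topExponent lam N =
      ∑ i ∈ range N, topExponent lam (i + 1) + lam 0 := by
    rw [← sum_range_succ, sum_range_succ', topExponent]
  have hcard := card_openColumns_add_sum hlam.antitone ha hle (hN N le_rfl)
  omega

lemma exists_le_card_openColumns_le_sum_topExponent (hlam : IsPartitionFun lam)
    (hm : m ≤ lam 0) :
    ∃ a, IsPartitionFun a ∧ a ≤ lam ∧ m ≤ #(openColumns lam a) ∧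
      ∀ k, ∑ i ∈ range k, topExponent lam i + min (topExponent lam k) m ≤
        ∑ i ∈ range k, topExponent a i + m := by
  let a (i : ℕ) : ℕ := peel (topExponent lam) m i - i
  have hpeel := peel_antitone (topExponent_antitone lam) m
  have ha : Antitone a := antitone_nat_of_succ_le fun i => by
    have : peel (topExponent lam) m (i + 1) ≤ peel (topExponent lam) m i := hpeel i.le_succ
    simp only [a]
    omega
  have hle : a ≤ lam := fun i => Nat.sub_le_of_le_add <|
    (peel_le (topExponent_antitone lam) m i).trans (topExponent_le lam i)
  refine ⟨a, hlam.of_antitone_of_le ha hle, hle,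
    le_card_openColumns_of_le_peel hlam ha hle hm fun _ => le_rfl, fun k => ?_⟩
  rw [← sum_peel_add (μ := topExponent lam) hm]
  gcongr with i
  exact le_topExponent hpeel (fun _ => le_tsub_add) i

/-! ### Inequalities for the exponent vectors -/

lemma sum_eq_sum_castSucc_add_ite {M : Type*} [AddCommMonoid M] (I : Finset (Fin (n + 1)))
    (f : Fin (n + 1) → M) :
    ∑ v ∈ I, f v = ∑ v : Fin n with v.castSucc ∈ I, f v.castSucc +
      if Fin.last n ∈ I then f (Fin.last n) else 0 := by
  rw [← filter_univ_mem I, sum_filter, Fin.sum_univ_castSucc, sum_filter]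
  simp

lemma IsExponent.sum_le (hlam : IsPartitionFun lam) {r : Fin n → ℕ} (hr : IsExponent lam n r)
    (I : Finset (Fin n)) : ∑ v ∈ I, r v ≤ ∑ i ∈ range #I, topExponent lam i := by
  induction n generalizing lam with
  | zero => simp [Subsingleton.elim I ∅]
  | succ n ih =>
    obtain ⟨a, ⟨ha, hle, -, hopen⟩, hinit⟩ := (isExponent_succ_iff hlam r).1 hr
    have hJ := ih ha hinit {v | v.castSucc ∈ I}
    have hcard := sum_eq_sum_castSucc_add_ite I fun _ => 1
    rw [← card_eq_sum_ones, ← card_eq_sum_ones] at hcard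
    rw [sum_eq_sum_castSucc_add_ite, hcard]
    split_ifs
    · exact (Nat.add_le_add hJ hopen).trans
        (sum_topExponent_add_card_openColumns_le hlam ha.antitone hle _)
    · exact hJ.trans (sum_le_sum fun i _ => topExponent_mono hle i)

lemma IsExponent.le_sum (hlam : IsPartitionFun lam) {r : Fin n → ℕ} (hr : IsExponent lam n r) :
    lam 0 ≤ ∑ v, r v := by
  induction n generalizing lam with
  | zero => simp [(isExponent_zero_iff hlam.antitone r).1 hr]
  | succ n ih =>
    obtain ⟨a, ⟨ha, -, hnew, -⟩, hinit⟩ := (isExponent_succ_iff hlam r).1 hr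
    rw [Fin.sum_univ_castSucc]
    exact (le_add_card_newColumns lam a).trans (Nat.add_le_add (ih ha hinit) hnew)

lemma exists_isBranch_apply_zero_le {q : ℕ} (hlam : IsPartitionFun lam) (ha : Antitone a)
    (hle : a ≤ lam) (hopen : m ≤ #(openColumns lam a)) (hq : lam 0 ≤ q + m) :
    ∃ c, IsBranch lam c m ∧ c 0 ≤ q ∧ (c 0 = q ∨ a ≤ c) := by
  obtain ⟨c, hc, hac, hcb⟩ := exists_isBranch_between (lam := lam) (m := m)
    (a := a ⊓ fun _ => q) (b := lam ⊓ fun _ => q)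
    (ha.inf antitone_const)
    (hlam.of_antitone_of_le (hlam.antitone.inf antitone_const) inf_le_left)
    (inf_le_inf_right _ hle) inf_le_left
    ((card_newColumns_inf_const_le hlam.antitone q).trans (by omega))
    (hopen.trans (card_le_card (openColumns_anti inf_le_left)))
  have hc0 : c 0 ≤ q := (hcb 0).trans inf_le_right
  refine ⟨c, hc, hc0, hc0.eq_or_lt.imp_right fun hcq i => ?_⟩
  have h0 : min (a 0) q ≤ c 0 := hac 0
  have hi : min (a i) q ≤ c i := hac i
  have ha0 : a i ≤ a 0 := ha i.zero_le
  have haq : a i ≤ q := by omega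
  exact (le_min le_rfl haq).trans hi

lemma exists_isBranch_of_sum_le (hlam : IsPartitionFun lam) {r : Fin (n + 1) → ℕ}
    (hupper : ∀ I : Finset (Fin (n + 1)), ∑ v ∈ I, r v ≤ ∑ i ∈ range #I, topExponent lam i)
    (hlower : lam 0 ≤ ∑ v, r v) :
    ∃ c, IsBranch lam c (r (Fin.last n)) ∧
      (∀ J : Finset (Fin n), ∑ v ∈ J, Fin.init r v ≤ ∑ i ∈ range #J, topExponent c i) ∧
      c 0 ≤ ∑ v, Fin.init r v := by
  have hlast : r (Fin.last n) ≤ lam 0 := by simpa [topExponent] using hupper {Fin.last n}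
  obtain ⟨a, ha, hle, hopen, hsum⟩ := exists_le_card_openColumns_le_sum_topExponent hlam hlast
  rw [Fin.sum_univ_castSucc] at hlower
  obtain ⟨c, hc, hc0, hc0_eq_or⟩ :=
    exists_isBranch_apply_zero_le hlam ha.antitone hle hopen hlower
  refine ⟨c, hc, fun J => ?_, hc0⟩
  rcases hc0_eq_or with hc0_eq | hac
  · rcases J.eq_empty_or_nonempty with rfl | hJ
    · simp
    · calc ∑ v ∈ J, Fin.init r v ≤ ∑ v, Fin.init r v :=
            sum_le_univ_sum_of_nonneg fun _ => Nat.zero_le _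
        _ = topExponent c 0 := hc0_eq.symm
        _ ≤ ∑ i ∈ range #J, topExponent c i :=
            single_le_sum (fun _ _ => Nat.zero_le _) (mem_range.2 hJ.card_pos)
  · have hmono : ∑ i ∈ range #J, topExponent a i ≤ ∑ i ∈ range #J, topExponent c i :=
      sum_le_sum fun i _ => topExponent_mono hac i
    have hJ := hupper (J.map Fin.castSuccEmb)
    have hJlast := hupper (cons (Fin.last n) (J.map Fin.castSuccEmb) (by simp))
    simp only [sum_cons, card_cons, sum_map, card_map, Fin.coe_castSuccEmb, sum_range_succ]
      at hJ hJlast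
    have := hsum #J
    simp only [Fin.init]
    omega

theorem isExponent_iff (hlam : IsPartitionFun lam) (r : Fin n → ℕ) :
    IsExponent lam n r ↔
      (∀ I : Finset (Fin n), ∑ v ∈ I, r v ≤ ∑ i ∈ range #I, topExponent lam i) ∧
        lam 0 ≤ ∑ v, r v := by
  refine ⟨fun hr => ⟨hr.sum_le hlam, hr.le_sum hlam⟩, fun hr => ?_⟩
  induction n generalizing lam with
  | zero =>
    have h0 : lam 0 ≤ 0 := by simpa using hr.2
    exact (isExponent_zero_iff hlam.antitone r).2 (Nat.eq_zero_of_le_zero h0)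
  | succ n ih =>
    obtain ⟨c, hc, hupper, hlower⟩ := exists_isBranch_of_sum_le hlam hr.1 hr.2
    exact (isExponent_succ_iff hlam r).2 ⟨c, hc, ih hc.isPartitionFun _ ⟨hupper, hlower⟩⟩

lemma convex_setOf_sum_le {ι : Type*} [Fintype ι] (g : Finset ι → ℝ) (c : ℝ) :
    Convex ℝ {d : ι → ℝ | (∀ v, 0 ≤ d v) ∧ (∀ I, ∑ v ∈ I, d v ≤ g I) ∧ c ≤ ∑ v, d v} := by
  have hsum (I : Finset ι) : IsLinearMap ℝ fun d : ι → ℝ => ∑ v ∈ I, d v :=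
    ⟨fun d e => sum_add_distrib, fun t d => (mul_sum _ _ _).symm⟩
  simp only [Set.ofPred_and, Set.ofPred_forall]
  refine (convex_iInter fun v => ?_).inter ((convex_iInter fun I => ?_).inter ?_)
  · exact convex_halfSpace_ge (LinearMap.proj v : (ι → ℝ) →ₗ[ℝ] ℝ).isLinear 0
  · exact convex_halfSpace_le (hsum I) (g I)
  · exact convex_halfSpace_ge (hsum univ) c

end HybridGrothendieck

open HybridGrothendieck

/-- **saturated Newton polytope.** For any partition `lam` and any `n ≥ 1`,
`G_lam(x_1,…,x_n; 1; 1)` has saturated Newton polytope: every lattice point of the convex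
hull of its exponent vectors is itself an exponent vector. -/
theorem hybridG11_SNP (lam : ℕ → ℕ) (hlam : IsPartitionFun lam) (n : ℕ) (hn : 1 ≤ n)
    (p : Fin n → ℤ)
    (hp : (fun v => (p v : ℝ)) ∈ convexHull ℝ
      {d : Fin n → ℝ | ∃ m ∈ (hybridG11 lam n).support, ∀ v, d v = (m v : ℝ)}) :
    ∃ m ∈ (hybridG11 lam n).support, ∀ v, ((m v : ℤ) = p v) := by
  have hsub : {d : Fin n → ℝ | ∃ m ∈ (hybridG11 lam n).support, ∀ v, d v = (m v : ℝ)} ⊆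
      {d | (∀ v, 0 ≤ d v) ∧
        (∀ I, ∑ v ∈ I, d v ≤ (∑ i ∈ Finset.range I.card, topExponent lam i : ℕ)) ∧
        lam 0 ≤ ∑ v, d v} := by
    rintro d ⟨m, hm, hd⟩
    have hexp := (mem_support_hybridG11_iff hlam m).1 hm
    obtain ⟨hupper, hlower⟩ := (isExponent_iff hlam _).1 hexp
    simp only [Set.mem_ofPred_eq, hd]
    exact ⟨fun v => Nat.cast_nonneg _, fun I => mod_cast hupper I, mod_cast hlower⟩
  obtain ⟨hnonneg, hupper, hlower⟩ := convexHull_min hsub (convex_setOf_sum_le _ _) hp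
  lift p to Fin n → ℕ using fun v => Int.cast_nonneg_iff.1 (hnonneg v)
  simp only [Int.cast_natCast] at hupper hlower
  have hexp : IsExponent lam n p :=
    (isExponent_iff hlam p).2 ⟨fun I => mod_cast hupper I, mod_cast hlower⟩
  exact ⟨Finsupp.equivFunOnFinite.symm p, (mem_support_hybridG11_iff hlam _).2 hexp,
    fun v => rfl⟩
end
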